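/- Let $f_1,\dots,f_n$ be real analytic and not identically zero on a neighborhood of the origin in $\mathbb{R}^2$, let $\gamma_1,\dots,\gamma_n\in\mathbb{R}$, and let $E\subseteq\mathbb{R}^2$ be of one of the following two forms, for some $r_0>0$: (i) $E$ is the disk $\{(x,y): x^2+y^2<r_0^2\}$; or (ii) $E=E_1\cup\dots\cup E_m$ with $m\ge 1$, where the $E_i$ are pairwise disjoint connected open subsets of the disk $\{x^2+y^2<r_0^2\}$, and the boundary of each $E_i$ consists of two curves joining the origin to the circle $x^2+y^2=r_0^2$ together with an arc of that circle. Each such curve is the part, from the origin up to its first point on the circle, of one half of a graph $y=h(|x|^{1/N})$ or $x=h(|y|^{1/N})$ (one half meaning $x\ge0$ or $x\le 0$, respectively $y\ge0$ or $y\le0$), for some positive integer $N$ and some real analytic $h$ with $h(0)=0$; $N$ and $h$ may depend on the curve. All $2m$ of these curves are pairwise disjoint away from the origin. Suppose that $g(x,y)=\chi_E(x,y)\prod_{i=1}^n|f_i(x,y)|^{\gamma_i}$ is integrable on a neighborhood of the origin. Let $v=(v_1,v_2)$ be a unit vector in $\mathbb{R}^2$ and let $v^\perp=(v_2,-v_1)$.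 Then there exist $\delta_v>0$, $c_v>0$ and $e_v\in\{0,1\}$ such that for every $0<c<c_v$ there exist $a_{v,c},b_{v,c}>0$ with $$a_{v,c}\,r^{\delta_v}|\ln r|^{e_v}\le\int_{\{(x,y):\,|(x,y)\cdot v|<r,\ |(x,y)\cdot v^\perp|<c\}}g(x,y)\,dx\,dy\le b_{v,c}\,r^{\delta_v}|\ln r|^{e_v}\qquad\text{for all }0<r<c.$$ -/

import Mathlib

open MeasureTheory Set
open scoped Topology

noncomputable section

/-- The open Euclidean disk `{(x,y) : x² + y² < r²}`. -/
def disk2 (r : ℝ) : Set (ℝ × ℝ) := {p | p.1 ^ 2 + p.2 ^ 2 < r ^ 2}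

/-- The circle `{(x,y) : x² + y² = r²}`. -/
def circle2 (r : ℝ) : Set (ℝ × ℝ) := {p | p.1 ^ 2 + p.2 ^ 2 = r ^ 2}

/-- Dot product on `ℝ²`. -/
def dot2 (p q : ℝ × ℝ) : ℝ := p.1 * q.1 + p.2 * q.2

/-- The perpendicular vector `v^⊥ = (v₂, −v₁)`. -/
def perp2 (v : ℝ × ℝ) : ℝ × ℝ := (v.2, -v.1)

/-- The strip `{(x,y) : |(x,y)·v| < r, |(x,y)·v^⊥| < c}`. -/
def strip2 (v : ℝ × ℝ) (r c : ℝ) : Set (ℝ × ℝ) :=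
  {p | |dot2 p v| < r ∧ |dot2 p (perp2 v)| < c}

/-- The function `g = χ_E · ∏ᵢ |fᵢ|^(γᵢ)`. -/
def stdFun (n : ℕ) (f : Fin n → ℝ × ℝ → ℝ) (γ : Fin n → ℝ) (E : Set (ℝ × ℝ)) :
    ℝ × ℝ → ℝ :=
  E.indicator fun p => ∏ i, |f i p| ^ (γ i)

/-- `C` is a curve joining the origin to the circle of radius `r₀`, running along one half of a
graph `y = h(|x|^{1/N})` or `x = h(|y|^{1/N})` with `h` real analytic and `h 0 = 0`. The sign `σ`
selects the half of the graph; the parameter `t` is `|x|` (resp. `|y|`), and `t = T` is where the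
curve reaches the circle. -/
def IsBoundaryCurve (r₀ : ℝ) (C : Set (ℝ × ℝ)) : Prop :=
  ∃ (N : ℕ) (h : ℝ → ℝ) (σ T : ℝ),
    0 < N ∧ (σ = 1 ∨ σ = -1) ∧ 0 < T ∧
    AnalyticOnNhd ℝ h (Icc 0 (T ^ (1 / (N : ℝ)))) ∧ h 0 = 0 ∧
    (∀ t, 0 ≤ t → t < T → t ^ 2 + h (t ^ (1 / (N : ℝ))) ^ 2 < r₀ ^ 2) ∧
    T ^ 2 + h (T ^ (1 / (N : ℝ))) ^ 2 = r₀ ^ 2 ∧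
    (C = (fun t : ℝ => (σ * t, h (t ^ (1 / (N : ℝ))))) '' Icc 0 T ∨
     C = (fun t : ℝ => (h (t ^ (1 / (N : ℝ))), σ * t)) '' Icc 0 T)

/-- `W` is a region (connected open set) inside the disk of radius `r₀` whose boundary consists of
the curves `C₁`, `C₂` and an arc of the circle of radius `r₀`. -/
def IsRegionBoundedBy (r₀ : ℝ) (C₁ C₂ W : Set (ℝ × ℝ)) : Prop :=
  IsOpen W ∧ IsConnected W ∧ W ⊆ disk2 r₀ ∧
    ∃ A ⊆ circle2 r₀, IsConnected A ∧ frontier W = C₁ ∪ C₂ ∪ A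

/-- The admissible sets `E`: a disk centered at the origin, or a nonempty finite disjoint union of
regions, each bounded by two boundary curves and an arc of the circle of radius `r₀`, all these
curves being pairwise disjoint away from the origin. -/
def IsStdDomain (E : Set (ℝ × ℝ)) : Prop :=
  ∃ r₀ > (0 : ℝ), E = disk2 r₀ ∨
    ∃ (m : ℕ) (Es : Fin m → Set (ℝ × ℝ)) (Cs : Fin m → Fin 2 → Set (ℝ × ℝ)),
      0 < m ∧ E = (⋃ i, Es i) ∧
      (Pairwise fun i j => Disjoint (Es i) (Es j)) ∧
      (∀ i j, IsBoundaryCurve r₀ (Cs i j)) ∧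
      (∀ i, IsRegionBoundedBy r₀ (Cs i 0) (Cs i 1) (Es i)) ∧
      (Pairwise fun q q' : Fin m × Fin 2 =>
        Disjoint (Cs q.1 q.2 \ {0}) (Cs q'.1 q'.2 \ {0}))

/-- The standard form: the `fᵢ` are real analytic and not identically zero near the origin,
`g = χ_E ∏ |fᵢ|^(γᵢ)` is integrable near the origin, and `E` is an admissible set. -/
structure StandardForm (n : ℕ) (f : Fin n → ℝ × ℝ → ℝ) (γ : Fin n → ℝ)
    (E : Set (ℝ × ℝ)) : Prop where
  analytic : ∃ U ∈ 𝓝 (0 : ℝ × ℝ), ∀ i, AnalyticOnNhd ℝ (f i) U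
  nontriv : ∀ i, ¬ (∀ᶠ p in 𝓝 (0 : ℝ × ℝ), f i p = 0)
  integ : ∃ U ∈ 𝓝 (0 : ℝ × ℝ), IntegrableOn (stdFun n f γ E) U
  domain : IsStdDomain E

end

noncomputable section

/-- Averaging an analytic function over a continuous family of contractions of the variable
gives an analytic function. -/
theorem analyticAt_integral_comp_contraction {H : ℝ × ℝ → ℝ} (hH : AnalyticAt ℝ H 0)
    {L : ℝ → (ℝ × ℝ) →L[ℝ] (ℝ × ℝ)} (hL : Continuous L)
    (hL1 : ∀ t ∈ Icc (0 : ℝ) 1, ‖L t‖ ≤ 1) :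
    AnalyticAt ℝ (fun z => ∫ t in (0 : ℝ)..1, H (L t z)) 0 := by
  obtain ⟨q, R, hq⟩ := hH
  obtain ⟨ρ, hρ0, hρR⟩ := ENNReal.lt_iff_exists_nnreal_btwn.1 hq.r_pos
  have hρq : (ρ : ENNReal) < q.radius := hρR.trans_le hq.r_le
  let Q : ∀ n : ℕ, ℝ → ContinuousMultilinearMap ℝ (fun _ : Fin n => ℝ × ℝ) ℝ :=
    fun n t => (q n).compContinuousLinearMap (fun _ => L t)
  have hQc : ∀ n, Continuous (Q n) := by
    intro n
    have h1 : Continuous fun t =>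
        ContinuousMultilinearMap.compContinuousLinearMapContinuousMultilinear ℝ
          (fun _ : Fin n => ℝ × ℝ) (fun _ => ℝ × ℝ) ℝ (fun _ => L t) :=
      (ContinuousMultilinearMap.cont _).comp (continuous_pi fun _ => hL)
    exact h1.clm_apply continuous_const
  have hQn : ∀ n, ∀ t ∈ Icc (0 : ℝ) 1, ‖Q n t‖ ≤ ‖q n‖ := by
    intro n t ht
    refine (ContinuousMultilinearMap.norm_compContinuousLinearMap_le _ _).trans ?_
    refine mul_le_of_le_one_right (norm_nonneg _) ?_
    exact Finset.prod_le_one (fun _ _ => norm_nonneg _) fun _ _ => hL1 t ht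
  let G : FormalMultilinearSeries ℝ (ℝ × ℝ) ℝ := fun n => ∫ t in (0 : ℝ)..1, Q n t
  have hGn : ∀ n, ‖G n‖ ≤ ‖q n‖ := by
    intro n
    have := intervalIntegral.norm_integral_le_of_norm_le_const (a := 0) (b := 1) (f := Q n)
      (C := ‖q n‖) (fun t ht => hQn n t (by
        rw [uIoc_of_le zero_le_one] at ht
        exact Ioc_subset_Icc_self ht))
    simpa [G] using this
  have hsum := q.summable_norm_mul_pow hρq
  refine ⟨G, ρ, ?_, ?_, ?_⟩
  · obtain ⟨C, -, hC⟩ := q.norm_mul_pow_le_of_lt_radius hρq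
    exact G.le_radius_of_bound C fun n =>
      (mul_le_mul_of_nonneg_right (hGn n) (by positivity)).trans (hC n)
  · exact hρ0
  · intro z hz
    have hz' : ‖z‖ ≤ ρ := by
      rw [Metric.mem_eball, edist_zero_right] at hz
      have h2 : ‖z‖ₑ ≤ (ρ : ENNReal) := hz.le
      rwa [enorm_le_coe] at h2
    have key := intervalIntegral.hasSum_integral_of_dominated_convergence (μ := volume)
      (a := 0) (b := 1) (F := fun n t => Q n t (fun _ => z)) (f := fun t => H (L t z))
      (fun n _ => ‖q n‖ * (ρ : ℝ) ^ n)
      (fun n => by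
        have : Continuous fun t => Q n t (fun _ => z) :=
          (ContinuousMultilinearMap.apply ℝ (fun _ : Fin n => ℝ × ℝ) ℝ
            (fun _ => z)).continuous.comp (hQc n)
        exact this.aestronglyMeasurable)
      (fun n => Filter.Eventually.of_forall fun t ht => by
        rw [uIoc_of_le zero_le_one] at ht
        have h3 := hQn n t (Ioc_subset_Icc_self ht)
        refine ((Q n t).le_opNorm _).trans ?_
        simp only [Finset.prod_const, Finset.card_univ, Fintype.card_fin]
        exact mul_le_mul h3 (pow_le_pow_left₀ (norm_nonneg _) hz' n) (by positivity)
          (norm_nonneg _))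
      (Filter.Eventually.of_forall fun t _ => hsum)
      (by simp)
      (Filter.Eventually.of_forall fun t ht => by
        rw [uIoc_of_le zero_le_one] at ht
        have h4 : L t z ∈ Metric.eball (0 : ℝ × ℝ) R := by
          rw [Metric.mem_eball, edist_zero_right]
          refine lt_of_le_of_lt ?_ hρR
          rw [enorm_le_coe]
          have : ‖L t z‖ ≤ ‖z‖ :=
            ((L t).le_of_opNorm_le (hL1 t (Ioc_subset_Icc_self ht)) z).trans (by simp)
          exact this.trans hz'
        have := hq.hasSum h4
        simpa [Q] using this)
    rw [zero_add]
    refine key.congr_fun ?_ |> id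
    intro n
    exact (ContinuousLinearMap.intervalIntegral_comp_comm (ContinuousMultilinearMap.apply ℝ
      (fun _ : Fin n => ℝ × ℝ) ℝ (fun _ => z)) ((hQc n).intervalIntegrable 0 1)).symm

/-- The partial derivative in the second variable. -/
def partialSnd (F : ℝ × ℝ → ℝ) (p : ℝ × ℝ) : ℝ := fderiv ℝ F p (0, 1)

theorem AnalyticAt.partialSnd {F : ℝ × ℝ → ℝ} {z : ℝ × ℝ} (hF : AnalyticAt ℝ F z) :
    AnalyticAt ℝ (partialSnd F) z :=
  ((ContinuousLinearMap.apply ℝ ℝ ((0 : ℝ), (1 : ℝ))).analyticAt _).comp hF.fderiv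

/-- Hadamard's lemma in the second variable, in the analytic category. -/
theorem AnalyticAt.exists_eq_add_snd_mul {F : ℝ × ℝ → ℝ} (hF : AnalyticAt ℝ F 0) :
    ∃ G, AnalyticAt ℝ G 0 ∧ ∀ᶠ p in 𝓝 (0 : ℝ × ℝ), F p = F (p.1, 0) + p.2 * G p := by
  let L : ℝ → (ℝ × ℝ) →L[ℝ] (ℝ × ℝ) := fun t =>
    (ContinuousLinearMap.inl ℝ ℝ ℝ).comp (ContinuousLinearMap.fst ℝ ℝ ℝ) +
      t • (ContinuousLinearMap.inr ℝ ℝ ℝ).comp (ContinuousLinearMap.snd ℝ ℝ ℝ)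
  have hLa : ∀ t z, L t z = (z.1, t * z.2) := by intro t z; simp [L]
  have hLc : Continuous L := by fun_prop
  have hL1 : ∀ t ∈ Icc (0 : ℝ) 1, ‖L t‖ ≤ 1 := by
    intro t ht
    refine ContinuousLinearMap.opNorm_le_bound _ zero_le_one fun z => ?_
    rw [hLa, one_mul, Prod.norm_def, Prod.norm_def]
    refine max_le_max le_rfl ?_
    simp only [norm_mul, Real.norm_eq_abs, abs_of_nonneg ht.1]
    exact mul_le_of_le_one_left (abs_nonneg _) ht.2
  let H : ℝ × ℝ → ℝ := _root_.partialSnd F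
  have hH : AnalyticAt ℝ H 0 := hF.partialSnd
  refine ⟨_, analyticAt_integral_comp_contraction hH hLc hL1, ?_⟩
  obtain ⟨ε, hε, hball⟩ := Metric.eventually_nhds_iff_ball.1 hF.eventually_analyticAt
  filter_upwards [Metric.ball_mem_nhds 0 hε] with p hp
  have hmem : ∀ t ∈ Icc (0 : ℝ) 1, L t p ∈ Metric.ball (0 : ℝ × ℝ) ε := by
    intro t ht
    rw [mem_ball_zero_iff] at hp ⊢
    exact (((L t).le_of_opNorm_le (hL1 t ht) p).trans (by simp)).trans_lt hp
  have hder : ∀ t ∈ uIcc (0 : ℝ) 1,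
      HasDerivAt (fun t => F (p.1, t * p.2)) (p.2 * H (L t p)) t := by
    intro t ht
    rw [uIcc_of_le zero_le_one] at ht
    have h1 := (hball _ (hmem t ht)).differentiableAt.hasFDerivAt
    rw [hLa] at h1
    have h2 : HasDerivAt (fun t : ℝ => (p.1, t * p.2)) (0, p.2) t := by
      have := (hasDerivAt_const t p.1).prodMk ((hasDerivAt_id t).mul_const p.2)
      simpa using this
    have h3 := h1.comp_hasDerivAt t h2
    have h4 : ((0 : ℝ), p.2) = p.2 • ((0 : ℝ), (1 : ℝ)) := by simp
    rw [h4, map_smul] at h3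
    rw [hLa]
    exact h3
  have hcont : ContinuousOn (fun t => p.2 * H (L t p)) (uIcc 0 1) := by
    rw [uIcc_of_le zero_le_one]
    intro t ht
    have h1 : ContinuousAt H (L t p) :=
      (hball _ (hmem t ht)).partialSnd.continuousAt
    have h2 : ContinuousAt (fun t => L t p) t := by fun_prop
    exact (continuousAt_const.mul
      (ContinuousAt.comp (f := fun t => L t p) (g := H) h1 h2)).continuousWithinAt
  have := intervalIntegral.integral_eq_sub_of_hasDerivAt hder hcont.intervalIntegrable
  rw [intervalIntegral.integral_const_mul] at this
  simp only [one_mul, zero_mul] at this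
  linarith

/-- Hadamard's lemma in the first variable, in the analytic category. -/
theorem AnalyticAt.exists_eq_add_fst_mul {F : ℝ × ℝ → ℝ} (hF : AnalyticAt ℝ F 0) :
    ∃ G, AnalyticAt ℝ G 0 ∧ ∀ᶠ p in 𝓝 (0 : ℝ × ℝ), F p = F (0, p.2) + p.1 * G p := by
  have hs : AnalyticAt ℝ (Prod.swap : ℝ × ℝ → ℝ × ℝ) 0 := analyticAt_snd.prod analyticAt_fst
  obtain ⟨G, hG, h⟩ := (AnalyticAt.fun_comp (f := Prod.swap) (g := F) (x := 0)
    (by simpa using hF) hs).exists_eq_add_snd_mul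
  refine ⟨fun p => G p.swap, AnalyticAt.fun_comp (f := Prod.swap) (by simpa using hG) hs, ?_⟩
  have ht : Filter.Tendsto (Prod.swap : ℝ × ℝ → ℝ × ℝ) (𝓝 0) (𝓝 0) := by
    simpa using hs.continuousAt.tendsto
  filter_upwards [ht.eventually h] with p hp
  simpa using hp

/-- `F` is, near the origin, a polynomial of degree less than `d` in the second variable with
coefficients `c` analytic in the first one, plus a multiple `U` of the `d`-th power. -/
structure TaylorForm (F : ℝ × ℝ → ℝ) (d : ℕ) (c : ℕ → ℝ → ℝ) (U : ℝ × ℝ → ℝ) : Prop where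
  coeff : ∀ j, AnalyticAt ℝ (c j) 0
  rem : AnalyticAt ℝ U 0
  eq : ∀ᶠ p in 𝓝 (0 : ℝ × ℝ),
    F p = ∑ j ∈ Finset.range d, c j p.1 * p.2 ^ j + p.2 ^ d * U p

theorem AnalyticAt.exists_taylorForm {F : ℝ × ℝ → ℝ} (hF : AnalyticAt ℝ F 0) (d : ℕ) :
    ∃ c U, TaylorForm F d c U := by
  induction d with
  | zero => exact ⟨fun _ _ => 0, F, fun _ => analyticAt_const, hF, by simp⟩
  | succ d ih =>
    obtain ⟨c, U, hc, hU, h⟩ := ih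
    obtain ⟨G, hG, hUG⟩ := hU.exists_eq_add_snd_mul
    refine ⟨fun j => if j = d then fun s => U (s, 0) else c j, G, fun j => ?_, hG, ?_⟩
    · by_cases hj : j = d
      · simp only [hj, if_true]
        exact AnalyticAt.fun_comp (f := fun s : ℝ => (s, (0 : ℝ))) (g := U) hU
          (analyticAt_id.prod analyticAt_const)
      · simpa only [hj, if_false] using hc j
    · filter_upwards [h, hUG] with p hp hq
      rw [Finset.sum_range_succ, hp, hq]
      have : ∑ j ∈ Finset.range d, (if j = d then fun s => U (s, 0) else c j) p.1 * p.2 ^ j =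
          ∑ j ∈ Finset.range d, c j p.1 * p.2 ^ j := by
        refine Finset.sum_congr rfl fun j hj => ?_
        rw [if_neg (Finset.mem_range.1 hj).ne]
      rw [this]
      simp only [if_true]
      ring

/-- `F` is analytic at the origin and regular of order `d` in the second variable. -/
structure RegularOrder (F : ℝ × ℝ → ℝ) (d : ℕ) : Prop where
  analytic : AnalyticAt ℝ F 0
  order : ∃ q : ℝ → ℝ, ContinuousAt q 0 ∧ q 0 ≠ 0 ∧ ∀ᶠ y in 𝓝 (0 : ℝ), F (0, y) = y ^ d * q y

theorem coeff_eq_zero_of_eventually_eq_pow_mul {d : ℕ} {a : ℕ → ℝ} {u q : ℝ → ℝ}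
    (hu : ContinuousAt u 0) (hq : ContinuousAt q 0)
    (h : ∀ᶠ y in 𝓝[≠] (0 : ℝ), ∑ j ∈ Finset.range d, a j * y ^ j + y ^ d * u y = y ^ d * q y) :
    (∀ j < d, a j = 0) ∧ u 0 = q 0 := by
  induction d generalizing a with
  | zero =>
    refine ⟨fun j hj => absurd hj (by simp), ?_⟩
    have h1 : u =ᶠ[𝓝[≠] 0] q := by
      filter_upwards [h] with y hy
      simpa using hy
    exact tendsto_nhds_unique (hu.tendsto.mono_left nhdsWithin_le_nhds)
      ((hq.tendsto.mono_left nhdsWithin_le_nhds).congr' h1.symm)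
  | succ d ih =>
    have ha : a 0 = 0 := by
      have hc1 : ContinuousAt (fun y => ∑ j ∈ Finset.range (d + 1), a j * y ^ j +
          y ^ (d + 1) * u y) 0 := by fun_prop
      have hc2 : ContinuousAt (fun y => y ^ (d + 1) * q y) 0 := by fun_prop
      have := tendsto_nhds_unique (hc1.tendsto.mono_left nhdsWithin_le_nhds)
        ((hc2.tendsto.mono_left nhdsWithin_le_nhds).congr' (Filter.EventuallyEq.symm h))
      simpa [Finset.sum_range_succ'] using this
    have h2 := ih (a := fun j => a (j + 1)) (by
      filter_upwards [h, self_mem_nhdsWithin] with y hy hy0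
      rw [Finset.sum_range_succ', ha] at hy
      have : y * (∑ j ∈ Finset.range d, a (j + 1) * y ^ j + y ^ d * u y) =
          y * (y ^ d * q y) := by
        rw [mul_add, Finset.mul_sum]
        calc _ = ∑ k ∈ Finset.range d, a (k + 1) * y ^ (k + 1) + 0 * y ^ 0 +
              y ^ (d + 1) * u y := by
              congr 1
              · rw [zero_mul, add_zero]
                exact Finset.sum_congr rfl fun j _ => by ring
              · ring
          _ = _ := by rw [hy]; ring
      exact mul_left_cancel₀ hy0 this)
    refine ⟨fun j hj => ?_, h2.2⟩
    cases j with
    | zero => exact ha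
    | succ j => exact h2.1 j (by omega)

theorem tendsto_zero_prodMk {X : Type*} {l : Filter X} {a b : X → ℝ}
    (ha : Filter.Tendsto a l (𝓝 0)) (hb : Filter.Tendsto b l (𝓝 0)) :
    Filter.Tendsto (fun x => (a x, b x)) l (𝓝 (0 : ℝ × ℝ)) :=
  ha.prodMk_nhds hb

theorem TaylorForm.regular {F : ℝ × ℝ → ℝ} {d : ℕ} {c : ℕ → ℝ → ℝ} {U : ℝ × ℝ → ℝ}
    (h : TaylorForm F d c U) (hF : RegularOrder F d) : (∀ j < d, c j 0 = 0) ∧ U 0 ≠ 0 := by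
  obtain ⟨q, hq, hq0, hFq⟩ := hF.order
  have hU : ContinuousAt (fun y : ℝ => U (0, y)) 0 :=
    ContinuousAt.comp (f := fun y : ℝ => ((0 : ℝ), y)) (g := U) h.rem.continuousAt (by fun_prop)
  have := coeff_eq_zero_of_eventually_eq_pow_mul (d := d) (a := fun j => c j 0) hU hq (by
    have h1 : ∀ᶠ y in 𝓝 (0 : ℝ), F (0, y) =
        ∑ j ∈ Finset.range d, c j 0 * y ^ j + y ^ d * U (0, y) :=
      (tendsto_zero_prodMk tendsto_const_nhds Filter.tendsto_id).eventually h.eq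
    filter_upwards [nhdsWithin_le_nhds h1, nhdsWithin_le_nhds hFq] with y h2 h3
    rw [← h2, h3])
  refine ⟨this.1, ?_⟩
  have h2 : U (0, 0) = q 0 := this.2
  rw [← Prod.zero_eq_mk] at h2
  rwa [h2]

theorem partialSnd_congr {F G : ℝ × ℝ → ℝ} {z : ℝ × ℝ} (h : F =ᶠ[𝓝 z] G) :
    partialSnd F =ᶠ[𝓝 z] partialSnd G := by
  filter_upwards [h.fderiv (𝕜 := ℝ)] with p hp
  simp only [partialSnd, hp]

theorem hasDerivAt_partialSnd {F : ℝ × ℝ → ℝ} {p : ℝ × ℝ} (h : DifferentiableAt ℝ F p) :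
    HasDerivAt (fun y => F (p.1, y)) (partialSnd F p) p.2 := by
  have h2 : HasDerivAt (fun t : ℝ => (p.1, t)) (0, 1) p.2 :=
    (hasDerivAt_const p.2 p.1).prodMk (hasDerivAt_id p.2)
  exact HasFDerivAt.comp_hasDerivAt (f := fun t : ℝ => (p.1, t)) p.2 h.hasFDerivAt h2

theorem TaylorForm.analyticAt {F : ℝ × ℝ → ℝ} {d : ℕ} {c : ℕ → ℝ → ℝ} {U : ℝ × ℝ → ℝ}
    (h : TaylorForm F d c U) : AnalyticAt ℝ F 0 := by
  have h1 : ∀ j, AnalyticAt ℝ (fun p : ℝ × ℝ => c j p.1) 0 := fun j =>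
    AnalyticAt.fun_comp (f := Prod.fst) (g := c j) (h.coeff j) analyticAt_fst
  have h3 : AnalyticAt ℝ (fun p : ℝ × ℝ => ∑ j ∈ Finset.range d, c j p.1 * p.2 ^ j) 0 :=
    Finset.analyticAt_fun_sum _ fun j _ => (h1 j).fun_mul (analyticAt_snd.fun_pow j)
  have h2 : AnalyticAt ℝ (fun p : ℝ × ℝ => ∑ j ∈ Finset.range d, c j p.1 * p.2 ^ j +
      p.2 ^ d * U p) 0 :=
    h3.fun_add ((analyticAt_snd.fun_pow d).fun_mul h.rem)
  exact h2.congr (Filter.EventuallyEq.symm h.eq)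

theorem TaylorForm.partialSnd {F : ℝ × ℝ → ℝ} {d : ℕ} {c : ℕ → ℝ → ℝ} {U : ℝ × ℝ → ℝ}
    (h : TaylorForm F (d + 1) c U) :
    TaylorForm (partialSnd F) d (fun j s => (j + 1) * c (j + 1) s)
      (fun p => (d + 1) * U p + p.2 * _root_.partialSnd U p) := by
  refine ⟨fun j => analyticAt_const.fun_mul (h.coeff _),
    (analyticAt_const.fun_mul h.rem).fun_add (analyticAt_snd.fun_mul h.rem.partialSnd), ?_⟩
  filter_upwards [h.eq.eventually_nhds, h.analyticAt.eventually_analyticAt,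
    h.rem.eventually_analyticAt] with p hp hF hU
  have h1 := hasDerivAt_partialSnd hF.differentiableAt
  have h2 : HasDerivAt (fun y => ∑ j ∈ Finset.range (d + 1), c j p.1 * y ^ j +
      y ^ (d + 1) * U (p.1, y)) (∑ j ∈ Finset.range (d + 1), c j p.1 * (j * p.2 ^ (j - 1)) +
      (((d + 1 : ℕ) * p.2 ^ (d + 1 - 1)) * U p + p.2 ^ (d + 1) * _root_.partialSnd U p)) p.2 := by
    refine (HasDerivAt.fun_sum fun j _ => ?_).add ?_
    · exact (hasDerivAt_pow j p.2).const_mul _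
    · exact (hasDerivAt_pow (d + 1) p.2).mul (hasDerivAt_partialSnd hU.differentiableAt)
  have ht : Filter.Tendsto (fun y : ℝ => (p.1, y)) (𝓝 p.2) (𝓝 p) :=
    (Continuous.prodMk_right p.1).tendsto p.2
  have h3 := h1.unique (h2.congr_of_eventuallyEq (ht.eventually hp))
  rw [h3, Finset.sum_range_succ']
  simp only [Nat.cast_zero, zero_mul, mul_zero, add_zero, Nat.add_sub_cancel]
  push_cast
  have : ∀ j ∈ Finset.range d, c (j + 1) p.1 * (((j : ℝ) + 1) * p.2 ^ j) =
      ((j : ℝ) + 1) * c (j + 1) p.1 * p.2 ^ j := fun j _ => by ring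
  rw [Finset.sum_congr rfl this]
  ring

theorem TaylorForm.iterate_partialSnd {d : ℕ} {F : ℝ × ℝ → ℝ} {c : ℕ → ℝ → ℝ}
    {U : ℝ × ℝ → ℝ} (h : TaylorForm F (d + 1) c U) :
    ∃ V, V 0 = (d + 1).factorial * U 0 ∧
      TaylorForm (_root_.partialSnd^[d] F) 1 (fun _ s => d.factorial * c d s) V := by
  induction d generalizing F c U with
  | zero =>
    refine ⟨U, by simp, fun j => analyticAt_const.fun_mul (h.coeff _), h.rem, ?_⟩
    simpa using h.eq
  | succ d ih =>
    obtain ⟨V, hV0, hV⟩ := ih h.partialSnd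
    refine ⟨V, ?_, ?_⟩
    · rw [hV0, Nat.factorial_succ (d + 1)]
      push_cast
      simp
      ring
    · rw [Function.iterate_succ_apply]
      convert hV using 3 with _ s
      rw [Nat.factorial_succ]
      push_cast
      ring

theorem analyticAt_shear {φ : ℝ → ℝ} {s y : ℝ} (hφ : AnalyticAt ℝ φ s) :
    AnalyticAt ℝ (fun p : ℝ × ℝ => (p.1, p.2 + φ p.1)) (s, y) :=
  analyticAt_fst.prod (analyticAt_snd.fun_add
    (AnalyticAt.fun_comp (f := Prod.fst) (g := φ) hφ analyticAt_fst))

theorem AnalyticAt.comp_shear {F : ℝ × ℝ → ℝ} {φ : ℝ → ℝ} (hF : AnalyticAt ℝ F 0)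
    (hφ : AnalyticAt ℝ φ 0) (hφ0 : φ 0 = 0) :
    AnalyticAt ℝ (fun p : ℝ × ℝ => F (p.1, p.2 + φ p.1)) 0 :=
  AnalyticAt.fun_comp (f := fun p : ℝ × ℝ => (p.1, p.2 + φ p.1)) (g := F)
    (by simpa [hφ0, ← Prod.zero_eq_mk] using hF) (analyticAt_shear hφ)

theorem tendsto_shear {φ : ℝ → ℝ} (hφ : AnalyticAt ℝ φ 0) (hφ0 : φ 0 = 0) :
    Filter.Tendsto (fun p : ℝ × ℝ => (p.1, p.2 + φ p.1)) (𝓝 0) (𝓝 0) := by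
  have := (analyticAt_shear (y := 0) hφ).continuousAt.tendsto
  simpa [hφ0, ← Prod.zero_eq_mk] using this

theorem partialSnd_comp_shear {F : ℝ × ℝ → ℝ} {φ : ℝ → ℝ} (hF : AnalyticAt ℝ F 0)
    (hφ : AnalyticAt ℝ φ 0) (hφ0 : φ 0 = 0) :
    partialSnd (fun p : ℝ × ℝ => F (p.1, p.2 + φ p.1)) =ᶠ[𝓝 0]
      fun p => partialSnd F (p.1, p.2 + φ p.1) := by
  filter_upwards [(hF.comp_shear hφ hφ0).eventually_analyticAt,
    (tendsto_shear hφ hφ0).eventually hF.eventually_analyticAt] with p h1 h2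
  have h3 := hasDerivAt_partialSnd h1.differentiableAt
  have h4 := hasDerivAt_partialSnd h2.differentiableAt
  have h5 := HasDerivAt.comp_add_const p.2 (φ p.1) h4
  exact h3.unique h5

theorem AnalyticAt.iterate_partialSnd {F : ℝ × ℝ → ℝ} {z : ℝ × ℝ} (hF : AnalyticAt ℝ F z)
    (k : ℕ) : AnalyticAt ℝ (_root_.partialSnd^[k] F) z := by
  induction k with
  | zero => exact hF
  | succ k ih => rw [Function.iterate_succ_apply']; exact ih.partialSnd

theorem iterate_partialSnd_comp_shear {F : ℝ × ℝ → ℝ} {φ : ℝ → ℝ} (hF : AnalyticAt ℝ F 0)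
    (hφ : AnalyticAt ℝ φ 0) (hφ0 : φ 0 = 0) (k : ℕ) :
    partialSnd^[k] (fun p : ℝ × ℝ => F (p.1, p.2 + φ p.1)) =ᶠ[𝓝 0]
      fun p => partialSnd^[k] F (p.1, p.2 + φ p.1) := by
  induction k with
  | zero => rfl
  | succ k ih =>
    simp only [Function.iterate_succ_apply']
    exact (partialSnd_congr ih).trans
      (partialSnd_comp_shear (hF.iterate_partialSnd k) hφ hφ0)

theorem RegularOrder.comp_shear {F : ℝ × ℝ → ℝ} {d : ℕ} (hF : RegularOrder F d) {φ : ℝ → ℝ}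
    (hφ : AnalyticAt ℝ φ 0) (hφ0 : φ 0 = 0) :
    RegularOrder (fun p : ℝ × ℝ => F (p.1, p.2 + φ p.1)) d :=
  ⟨hF.analytic.comp_shear hφ hφ0, by simpa [hφ0] using hF.order⟩

/-- The implicit function theorem for analytic functions of two real variables. -/
theorem AnalyticAt.exists_implicit {D : ℝ × ℝ → ℝ} (hD : AnalyticAt ℝ D 0) (h0 : D 0 = 0)
    (h1 : _root_.partialSnd D 0 ≠ 0) :
    ∃ φ : ℝ → ℝ, AnalyticAt ℝ φ 0 ∧ φ 0 = 0 ∧ ∀ᶠ s in 𝓝 (0 : ℝ), D (s, φ s) = 0 := by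
  have hcd : ContDiffAt ℝ (⊤ : WithTop ℕ∞) D 0 := hD.contDiffAt
  have hinv : (fderiv ℝ D 0 ∘L ContinuousLinearMap.inr ℝ ℝ ℝ).IsInvertible :=
    ⟨ContinuousLinearEquiv.unitsEquivAut ℝ (Units.mk0 _ h1), by
      ext; simp [_root_.partialSnd]⟩
  refine ⟨hcd.implicitFunction (by simp) hinv, ?_, ?_, ?_⟩
  · exact ContDiffAt.analyticAt (hcd.contDiffAt_implicitFunction (by simp) hinv)
  · exact hcd.implicitFunction_apply_self (by simp) hinv
  · simpa [h0] using hcd.eventually_apply_implicitFunction (by simp) hinv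

/-- A shear of the second variable kills the subleading Taylor coefficient. -/
theorem RegularOrder.exists_shear {F : ℝ × ℝ → ℝ} {d : ℕ} (hF : RegularOrder F (d + 1)) :
    ∃ φ : ℝ → ℝ, AnalyticAt ℝ φ 0 ∧ φ 0 = 0 ∧
      ∀ c U, TaylorForm (fun p : ℝ × ℝ => F (p.1, p.2 + φ p.1)) (d + 1) c U →
        ∀ᶠ s in 𝓝 (0 : ℝ), c d s = 0 := by
  obtain ⟨c, U, hT⟩ := hF.analytic.exists_taylorForm (d + 1)
  obtain ⟨hc, hU⟩ := hT.regular hF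
  obtain ⟨V, hV0, hV⟩ := hT.iterate_partialSnd
  have hD := hV.analyticAt
  have hD0 : partialSnd^[d] F 0 = 0 := by
    have := hV.eq.self_of_nhds
    simpa [hc d (by omega)] using this
  have hD1 : partialSnd (partialSnd^[d] F) 0 ≠ 0 := by
    have := hV.partialSnd.eq.self_of_nhds
    simp only [Finset.range_zero, Finset.sum_empty, pow_zero] at this
    rw [this]
    simp [hV0, hU, Nat.factorial_ne_zero]
  obtain ⟨φ, hφ, hφ0, hφD⟩ := hD.exists_implicit hD0 hD1
  refine ⟨φ, hφ, hφ0, fun c' U' hT' => ?_⟩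
  obtain ⟨V', -, hV'⟩ := hT'.iterate_partialSnd
  have ht : Filter.Tendsto (fun s : ℝ => (s, (0 : ℝ))) (𝓝 0) (𝓝 0) :=
    tendsto_zero_prodMk Filter.tendsto_id tendsto_const_nhds
  filter_upwards [hφD, ht.eventually hV'.eq,
    ht.eventually (iterate_partialSnd_comp_shear hF.analytic hφ hφ0 d)] with s h1 h2 h3
  rw [h3] at h2
  simp [h1, Nat.factorial_ne_zero] at h2
  exact h2

/-- A nonzero analytic germ is a power of the first variable times a germ that is regular in the
second variable. -/
theorem AnalyticAt.exists_eq_fst_pow_mul {F : ℝ × ℝ → ℝ} (hF : AnalyticAt ℝ F 0)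
    (hne : ¬ ∀ᶠ p in 𝓝 (0 : ℝ × ℝ), F p = 0) :
    ∃ (a d : ℕ) (G : ℝ × ℝ → ℝ), RegularOrder G d ∧
      ∀ᶠ p in 𝓝 (0 : ℝ × ℝ), F p = p.1 ^ a * G p := by
  have hline : ∀ G : ℝ × ℝ → ℝ, AnalyticAt ℝ G 0 → AnalyticAt ℝ (fun y : ℝ => G (0, y)) 0 :=
    fun G hG => AnalyticAt.fun_comp (f := fun y : ℝ => ((0 : ℝ), y)) (g := G) hG
      (analyticAt_const.prod analyticAt_id)
  by_contra hcon
  have hall : ∀ a : ℕ, ∃ G, AnalyticAt ℝ G 0 ∧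
      ∀ᶠ p in 𝓝 (0 : ℝ × ℝ), F p = p.1 ^ a * G p := by
    intro a
    induction a with
    | zero => exact ⟨F, hF, by simp⟩
    | succ a ih =>
      obtain ⟨G, hG, hFG⟩ := ih
      have hG0 : ∀ᶠ y in 𝓝 (0 : ℝ), G (0, y) = 0 := by
        by_contra hy
        obtain ⟨d, q, hq, hq0, hGq⟩ :=
          (hline G hG).exists_eventuallyEq_pow_smul_nonzero_iff.2 hy
        exact hcon ⟨a, d, G, ⟨hG, q, hq.continuousAt, hq0, by simpa using hGq⟩, hFG⟩
      obtain ⟨G', hG', hGG'⟩ := hG.exists_eq_add_fst_mul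
      refine ⟨G', hG', ?_⟩
      have ht : Filter.Tendsto (fun p : ℝ × ℝ => p.2) (𝓝 0) (𝓝 0) :=
        continuous_snd.tendsto' _ _ rfl
      filter_upwards [hFG, hGG', ht.eventually hG0] with p h1 h2 h3
      rw [h1, h2, h3]
      ring
  obtain ⟨ε, hε, hball⟩ := Metric.eventually_nhds_iff_ball.1 hF.eventually_analyticAt
  refine hne ?_
  filter_upwards [Metric.ball_mem_nhds 0 hε] with z hz
  have hlin : AnalyticOnNhd ℝ (fun t : ℝ => F (t • z)) (Icc 0 1) := by
    intro t ht
    refine AnalyticAt.fun_comp (f := fun t : ℝ => t • z) (g := F) (hball _ ?_)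
      (analyticAt_id.fun_smul analyticAt_const)
    rw [mem_ball_zero_iff] at hz ⊢
    rw [norm_smul, Real.norm_eq_abs, abs_of_nonneg ht.1]
    exact (mul_le_of_le_one_left (norm_nonneg _) ht.2).trans_lt hz
  have h0 : (0 : ℝ) ∈ Icc (0 : ℝ) 1 := by simp
  have htop : analyticOrderAt (fun t : ℝ => F (t • z)) 0 = ⊤ := by
    rw [ENat.eq_top_iff_forall_ge]
    intro a
    rw [natCast_le_analyticOrderAt (hlin 0 h0)]
    obtain ⟨G, hG, hFG⟩ := hall a
    have ha : AnalyticAt ℝ (fun t : ℝ => t • z) 0 := analyticAt_id.fun_smul analyticAt_const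
    refine ⟨fun t => z.1 ^ a * G (t • z), analyticAt_const.fun_mul
      (AnalyticAt.fun_comp (f := fun t : ℝ => t • z) (g := G) (by simpa using hG) ha), ?_⟩
    have ht : Filter.Tendsto (fun t : ℝ => t • z) (𝓝 0) (𝓝 0) := by
      simpa using ha.continuousAt.tendsto
    filter_upwards [ht.eventually hFG] with t h1
    rw [h1]
    simp only [Prod.smul_fst, smul_eq_mul, sub_zero, mul_pow]
    ring
  have := hlin.eqOn_zero_of_preconnected_of_eventuallyEq_zero isPreconnected_Icc h0
    (analyticOrderAt_eq_top.1 htop)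
  simpa using this (x := 1) (by simp)

/-- `J` is bounded by a constant multiple of `φ` for small positive arguments. -/
def Dominated (J φ : ℝ → ENNReal) : Prop :=
  ∃ C : NNReal, ∀ᶠ r in 𝓝[>] (0 : ℝ), J r ≤ C * φ r

/-- `J` and `φ` have the same order of magnitude for small positive arguments. -/
def Comparable (J φ : ℝ → ENNReal) : Prop := Dominated J φ ∧ Dominated φ J

/-- The possible orders of magnitude: `0`, `∞` and `r ^ δ |log r| ^ e` with `e ∈ {0, 1}`. -/
def IsGauge (φ : ℝ → ENNReal) : Prop :=
  φ = 0 ∨ φ = ⊤ ∨ ∃ (δ : ℝ) (e : ℕ), 0 < δ ∧ (e = 0 ∨ e = 1) ∧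
    φ = fun r => ENNReal.ofReal (r ^ δ * |Real.log r| ^ e)

theorem Dominated.of_eventually_le {J φ : ℝ → ENNReal}
    (h : ∀ᶠ r in 𝓝[>] (0 : ℝ), J r ≤ φ r) : Dominated J φ :=
  ⟨1, by simpa using h⟩

theorem Dominated.refl (φ : ℝ → ENNReal) : Dominated φ φ :=
  .of_eventually_le (Filter.Eventually.of_forall fun _ => le_rfl)

theorem Dominated.trans {J φ ψ : ℝ → ENNReal} (h : Dominated J φ) (h' : Dominated φ ψ) :
    Dominated J ψ := by
  obtain ⟨C, hC⟩ := h
  obtain ⟨D, hD⟩ := h'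
  refine ⟨C * D, ?_⟩
  filter_upwards [hC, hD] with r h1 h2
  calc J r ≤ C * φ r := h1
    _ ≤ C * (D * ψ r) := by gcongr
    _ = _ := by push_cast; ring

theorem Dominated.add {J J' φ : ℝ → ENNReal} (h : Dominated J φ) (h' : Dominated J' φ) :
    Dominated (fun r => J r + J' r) φ := by
  obtain ⟨C, hC⟩ := h
  obtain ⟨D, hD⟩ := h'
  refine ⟨C + D, ?_⟩
  filter_upwards [hC, hD] with r h1 h2
  push_cast
  rw [add_mul]
  exact add_le_add h1 h2

theorem Dominated.sum {κ : Type*} {s : Finset κ} {J : κ → ℝ → ENNReal} {φ : ℝ → ENNReal}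
    (h : ∀ k ∈ s, Dominated (J k) φ) : Dominated (fun r => ∑ k ∈ s, J k r) φ := by
  classical
  induction s using Finset.induction_on with
  | empty => exact .of_eventually_le (by simp)
  | insert k s hk ih =>
    simp only [Finset.sum_insert hk]
    exact (h k (Finset.mem_insert_self _ _)).add
      (ih fun j hj => h j (Finset.mem_insert_of_mem hj))

theorem Dominated.le_sum {κ : Type*} {s : Finset κ} (J : κ → ℝ → ENNReal) {k : κ}
    (hk : k ∈ s) : Dominated (J k) fun r => ∑ k ∈ s, J k r :=
  .of_eventually_le (Filter.Eventually.of_forall fun r =>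
    Finset.single_le_sum (f := fun k => J k r) (fun _ _ => zero_le) hk)

theorem Dominated.sum_congr {κ : Type*} {s : Finset κ} {J φ : κ → ℝ → ENNReal}
    (h : ∀ k ∈ s, Dominated (J k) (φ k)) :
    Dominated (fun r => ∑ k ∈ s, J k r) fun r => ∑ k ∈ s, φ k r :=
  .sum fun k hk => (h k hk).trans (.le_sum φ hk)

theorem Dominated.comp {J φ : ℝ → ENNReal} (h : Dominated J φ) {k : ℝ → ℝ}
    (hk : Filter.Tendsto k (𝓝[>] 0) (𝓝[>] 0)) :
    Dominated (fun r => J (k r)) fun r => φ (k r) := by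
  obtain ⟨C, hC⟩ := h
  exact ⟨C, hk.eventually hC⟩

theorem Comparable.trans {J φ ψ : ℝ → ENNReal} (h : Comparable J φ) (h' : Comparable φ ψ) :
    Comparable J ψ := ⟨h.1.trans h'.1, h'.2.trans h.2⟩

theorem Comparable.of_eventuallyEq {J φ : ℝ → ENNReal} (h : J =ᶠ[𝓝[>] 0] φ) : Comparable J φ :=
  ⟨.of_eventually_le h.le, .of_eventually_le h.symm.le⟩

theorem Comparable.comp {J φ : ℝ → ENNReal} (h : Comparable J φ) {k : ℝ → ℝ}
    (hk : Filter.Tendsto k (𝓝[>] 0) (𝓝[>] 0)) :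
    Comparable (fun r => J (k r)) fun r => φ (k r) := ⟨h.1.comp hk, h.2.comp hk⟩

theorem Comparable.sum_congr {κ : Type*} {s : Finset κ} {J φ : κ → ℝ → ENNReal}
    (h : ∀ k ∈ s, Comparable (J k) (φ k)) :
    Comparable (fun r => ∑ k ∈ s, J k r) fun r => ∑ k ∈ s, φ k r :=
  ⟨.sum_congr fun k hk => (h k hk).1, .sum_congr fun k hk => (h k hk).2⟩

theorem eventually_lt_nhdsGT_zero {ε : ℝ} (hε : 0 < ε) : ∀ᶠ r in 𝓝[>] (0 : ℝ), r < ε :=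
  nhdsWithin_le_nhds (Iio_mem_nhds hε)

theorem eventually_le_abs_log (C : ℝ) : ∀ᶠ r in 𝓝[>] (0 : ℝ), C ≤ |Real.log r| :=
  (Filter.tendsto_abs_atBot_atTop.comp Real.tendsto_log_nhdsGT_zero).eventually_ge_atTop C

/-- Real-valued criterion for domination. -/
theorem Dominated.ofReal {f g : ℝ → ℝ} {C : ℝ} (hC : 0 ≤ C)
    (h : ∀ᶠ r in 𝓝[>] (0 : ℝ), f r ≤ C * g r) :
    Dominated (fun r => ENNReal.ofReal (f r)) fun r => ENNReal.ofReal (g r) := by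
  refine ⟨C.toNNReal, ?_⟩
  filter_upwards [h] with r hr
  refine (ENNReal.ofReal_le_ofReal hr).trans ?_
  rw [ENNReal.ofReal_mul hC]
  rfl

theorem dominated_rpow_log_of_lt {δ δ' : ℝ} (h : δ < δ') (e : ℕ) {e' : ℕ}
    (he' : e' = 0 ∨ e' = 1) :
    Dominated (fun r => ENNReal.ofReal (r ^ δ' * |Real.log r| ^ e'))
      fun r => ENNReal.ofReal (r ^ δ * |Real.log r| ^ e) := by
  refine .ofReal zero_le_one ?_
  have h1 : ∀ᶠ r in 𝓝[>] (0 : ℝ), |Real.log r * r ^ (δ' - δ)| < 1 := by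
    have := (tendsto_log_mul_rpow_nhdsGT_zero (sub_pos.2 h)).abs
    rw [abs_zero] at this
    exact this.eventually_lt_const one_pos
  filter_upwards [self_mem_nhdsWithin, h1, eventually_le_abs_log 1] with r hr h2 h3
  have hr : 0 < r := hr
  have h4 : r ^ (δ' - δ) * |Real.log r| < 1 := by
    rw [abs_mul, abs_of_pos (Real.rpow_pos_of_pos hr _), mul_comm] at h2
    exact h2
  have h5 : r ^ (δ' - δ) * |Real.log r| ^ e' ≤ 1 := by
    refine le_trans ?_ h4.le
    have := Real.rpow_pos_of_pos hr (δ' - δ)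
    gcongr
    rcases he' with rfl | rfl <;> simp [h3]
  have h6 : 1 ≤ |Real.log r| ^ e := one_le_pow₀ h3
  have h7 : r ^ δ' = r ^ δ * r ^ (δ' - δ) := by rw [← Real.rpow_add hr]; ring_nf
  rw [one_mul, h7, mul_assoc]
  have := Real.rpow_pos_of_pos hr δ
  gcongr
  exact h5.trans h6

theorem dominated_rpow_log_of_le (δ : ℝ) {e e' : ℕ} (h : e' ≤ e) :
    Dominated (fun r => ENNReal.ofReal (r ^ δ * |Real.log r| ^ e'))
      fun r => ENNReal.ofReal (r ^ δ * |Real.log r| ^ e) := by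
  refine .ofReal zero_le_one ?_
  filter_upwards [self_mem_nhdsWithin, eventually_le_abs_log 1] with r hr h3
  have := Real.rpow_pos_of_pos hr δ
  rw [one_mul]
  gcongr

theorem IsGauge.total {φ ψ : ℝ → ENNReal} (hφ : IsGauge φ) (hψ : IsGauge ψ) :
    Dominated φ ψ ∨ Dominated ψ φ := by
  rcases hφ with rfl | rfl | ⟨δ, e, hδ, he, rfl⟩
  · exact .inl (.of_eventually_le (by simp))
  · exact .inr (.of_eventually_le (by simp))
  rcases hψ with rfl | rfl | ⟨δ', e', hδ', he', rfl⟩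
  · exact .inr (.of_eventually_le (by simp))
  · exact .inl (.of_eventually_le (by simp))
  rcases lt_trichotomy δ δ' with h | rfl | h
  · exact .inr (dominated_rpow_log_of_lt h e he')
  · rcases le_total e e' with h | h
    · exact .inl (dominated_rpow_log_of_le δ h)
    · exact .inr (dominated_rpow_log_of_le δ h)
  · exact .inl (dominated_rpow_log_of_lt h e' he)

theorem IsGauge.exists_comparable_add {φ ψ : ℝ → ENNReal} (hφ : IsGauge φ) (hψ : IsGauge ψ) :
    ∃ χ, IsGauge χ ∧ Comparable (fun r => φ r + ψ r) χ := by
  rcases hφ.total hψ with h | h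
  · exact ⟨ψ, hψ, h.add (.refl ψ), .of_eventually_le (by simp)⟩
  · exact ⟨φ, hφ, (Dominated.refl φ).add h, .of_eventually_le (by simp)⟩

theorem exists_gauge_sum {κ : Type*} (s : Finset κ) {φ : κ → ℝ → ENNReal}
    (h : ∀ k ∈ s, IsGauge (φ k)) :
    ∃ χ, IsGauge χ ∧ Comparable (fun r => ∑ k ∈ s, φ k r) χ := by
  classical
  induction s using Finset.induction_on with
  | empty => exact ⟨0, .inl rfl, .of_eventuallyEq (by simp; rfl)⟩
  | insert k s hk ih =>
    obtain ⟨χ, hχ, hc⟩ := ih fun j hj => h j (Finset.mem_insert_of_mem hj)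
    obtain ⟨χ', hχ', hc'⟩ := (h k (Finset.mem_insert_self _ _)).exists_comparable_add hχ
    refine ⟨χ', hχ', Comparable.trans ?_ hc'⟩
    simp only [Finset.sum_insert hk]
    constructor
    · exact .add (.of_eventually_le (by simp)) (hc.1.trans (.of_eventually_le (by simp)))
    · exact .add (.of_eventually_le (by simp)) (hc.2.trans (.of_eventually_le (by simp)))

theorem tendsto_rpow_nhdsGT_zero {κ : ℝ} (hκ : 0 < κ) :
    Filter.Tendsto (fun r : ℝ => r ^ κ) (𝓝[>] 0) (𝓝[>] 0) := by
  refine tendsto_nhdsWithin_of_tendsto_nhds_of_eventually_within _ ?_ ?_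
  · have := (Real.continuousAt_rpow_const 0 κ (.inr hκ.le)).tendsto
    rw [Real.zero_rpow hκ.ne'] at this
    exact this.mono_left nhdsWithin_le_nhds
  · filter_upwards [self_mem_nhdsWithin] with r hr using Real.rpow_pos_of_pos hr _

theorem IsGauge.comp_rpow {φ : ℝ → ENNReal} (hφ : IsGauge φ) {κ : ℝ} (hκ : 0 < κ) :
    ∃ ψ, IsGauge ψ ∧ Comparable (fun r => φ (r ^ κ)) ψ := by
  rcases hφ with rfl | rfl | ⟨δ, e, hδ, he, rfl⟩
  · exact ⟨0, .inl rfl, .of_eventuallyEq .rfl⟩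
  · exact ⟨⊤, .inr (.inl rfl), .of_eventuallyEq .rfl⟩
  refine ⟨_, .inr (.inr ⟨κ * δ, e, by positivity, he, rfl⟩), ?_, ?_⟩
  · refine .ofReal (C := κ ^ e) (by positivity) ?_
    filter_upwards [self_mem_nhdsWithin] with r hr
    have hr : 0 < r := hr
    rw [← Real.rpow_mul hr.le, Real.log_rpow hr, abs_mul, abs_of_pos hκ, mul_pow]
    apply le_of_eq
    ring
  · refine .ofReal (C := (κ ^ e)⁻¹) (by positivity) ?_
    filter_upwards [self_mem_nhdsWithin] with r hr
    have hr : 0 < r := hr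
    rw [← Real.rpow_mul hr.le, Real.log_rpow hr, abs_mul, abs_of_pos hκ, mul_pow]
    apply le_of_eq
    field_simp

/-- The integral of `w` over the half-open box `(0, r) × (-c, c)`. -/
def boxIntegral (w : ℝ × ℝ → ENNReal) (c r : ℝ) : ENNReal :=
  ∫⁻ p in Ioo 0 r ×ˢ Ioo (-c) c, w p

/-- The integrals of `w` over the boxes `(0, r) × (-c, c)` are of the order of a gauge as `r → 0`
which does not depend on the small number `c`. -/
def HasGauge (w : ℝ × ℝ → ENNReal) : Prop :=
  ∃ φ, IsGauge φ ∧ ∃ c₀ > (0 : ℝ), ∀ c, 0 < c → c < c₀ → Comparable (boxIntegral w c) φ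

theorem lintegral_biUnion_finset_le {κ : Type*} (s : Finset κ) (w : ℝ × ℝ → ENNReal)
    (A : κ → Set (ℝ × ℝ)) :
    ∫⁻ p in ⋃ k ∈ s, A k, w p ≤ ∑ k ∈ s, ∫⁻ p in A k, w p := by
  classical
  induction s using Finset.induction_on with
  | empty => simp
  | insert k s hk ih =>
    rw [Finset.set_biUnion_insert, Finset.sum_insert hk]
    exact (lintegral_union_le _ _ _).trans (add_le_add le_rfl ih)

/-- Integrals over regions that cover each other are comparable. -/
theorem comparable_sum_setLIntegral {κ : Type*} {s : Finset κ} {w : ℝ × ℝ → ENNReal}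
    {A : κ → ℝ → Set (ℝ × ℝ)} {B : ℝ → Set (ℝ × ℝ)}
    (hAB : ∀ k ∈ s, ∀ᶠ r in 𝓝[>] (0 : ℝ), A k r ⊆ B r)
    (hBA : ∀ᶠ r in 𝓝[>] (0 : ℝ), volume (B r \ ⋃ k ∈ s, A k r) = 0) :
    Comparable (fun r => ∫⁻ p in B r, w p) fun r => ∑ k ∈ s, ∫⁻ p in A k r, w p := by
  constructor
  · refine .of_eventually_le ?_
    filter_upwards [hBA] with r hr
    calc ∫⁻ p in B r, w p ≤ ∫⁻ p in ⋃ k ∈ s, A k r, w p :=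
          lintegral_mono' (Measure.restrict_mono_ae (ae_le_set.2 hr)) le_rfl
      _ ≤ _ := lintegral_biUnion_finset_le _ _ _
  · refine .sum fun k hk => .of_eventually_le ?_
    filter_upwards [hAB k hk] with r hr using lintegral_mono_set hr

theorem HasGauge.congr {w w' : ℝ × ℝ → ENNReal} (h : HasGauge w)
    (hw : ∀ᶠ p in 𝓝 (0 : ℝ × ℝ), 0 < p.1 → w p = w' p) : HasGauge w' := by
  obtain ⟨φ, hφ, c₀, hc₀, hc⟩ := h
  obtain ⟨ε, hε, hball⟩ := Metric.eventually_nhds_iff_ball.1 hw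
  refine ⟨φ, hφ, min c₀ ε, lt_min hc₀ hε, fun c h0 h1 => ?_⟩
  refine Comparable.trans (.of_eventuallyEq ?_) (hc c h0 (h1.trans_le (min_le_left _ _)))
  filter_upwards [eventually_lt_nhdsGT_zero hε] with r hr
  refine setLIntegral_congr_fun (measurableSet_Ioo.prod measurableSet_Ioo) fun p hp => ?_
  refine (hball p ?_ hp.1.1).symm
  rw [mem_ball_zero_iff, Prod.norm_def, max_lt_iff, Real.norm_eq_abs, Real.norm_eq_abs]
  have h2 : c < ε := h1.trans_le (min_le_right _ _)
  have h3 := hp.1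
  have h4 := hp.2
  rw [mem_Ioo] at h3 h4
  exact ⟨abs_lt.2 ⟨by linarith, by linarith⟩, abs_lt.2 ⟨by linarith, by linarith⟩⟩

/-- Change of variables for fibered affine maps of the plane. -/
theorem lintegral_image_fibered {a b k a' b' k' : ℝ → ℝ} {r c : ℝ}
    (ha : ∀ s ∈ Ioo 0 r, HasDerivAt a (a' s) s) (hb : ∀ s ∈ Ioo 0 r, HasDerivAt b (b' s) s)
    (hk : ∀ s ∈ Ioo 0 r, HasDerivAt k (k' s) s) (hinj : InjOn a (Ioo 0 r))
    (hb0 : ∀ s ∈ Ioo 0 r, b s ≠ 0) (w : ℝ × ℝ → ENNReal) :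
    ∫⁻ p in (fun p : ℝ × ℝ => (a p.1, b p.1 * p.2 + k p.1)) '' (Ioo 0 r ×ˢ Ioo (-c) c), w p =
      ∫⁻ p in Ioo 0 r ×ˢ Ioo (-c) c, ENNReal.ofReal |a' p.1 * b p.1| *
        w (a p.1, b p.1 * p.2 + k p.1) := by
  let D : ℝ × ℝ → (ℝ × ℝ →L[ℝ] ℝ × ℝ) := fun p =>
    (Matrix.toLin (Module.Basis.finTwoProd ℝ) (Module.Basis.finTwoProd ℝ)
      !![a' p.1, 0; b' p.1 * p.2 + k' p.1, b p.1]).toContinuousLinearMap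
  have hD : ∀ p, (D p).det = a' p.1 * b p.1 := by
    intro p
    simp only [D, ContinuousLinearMap.det, LinearMap.coe_toContinuousLinearMap,
      LinearMap.det_toLin, Matrix.det_fin_two_of]
    ring
  have hder : ∀ p ∈ Ioo 0 r ×ˢ Ioo (-c) c,
      HasFDerivWithinAt (fun p : ℝ × ℝ => (a p.1, b p.1 * p.2 + k p.1)) (D p)
        (Ioo 0 r ×ˢ Ioo (-c) c) p := by
    intro p hp
    apply HasFDerivAt.hasFDerivWithinAt
    have h1 := (ha p.1 hp.1).comp_hasFDerivAt p (hasFDerivAt_fst (𝕜 := ℝ))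
    have h2 := (hb p.1 hp.1).comp_hasFDerivAt p (hasFDerivAt_fst (𝕜 := ℝ))
    have h3 := (hk p.1 hp.1).comp_hasFDerivAt p (hasFDerivAt_fst (𝕜 := ℝ))
    have h4 := h1.prodMk ((h2.mul (hasFDerivAt_snd (𝕜 := ℝ))).add h3)
    refine h4.congr_fderiv ?_
    apply ContinuousLinearMap.ext
    rintro ⟨x, y⟩
    simp only [D, Matrix.toLin_finTwoProd_toContinuousLinearMap]
    simp
    ring
  have hi : InjOn (fun p : ℝ × ℝ => (a p.1, b p.1 * p.2 + k p.1))
      (Ioo 0 r ×ˢ Ioo (-c) c) := by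
    intro p hp q hq h
    simp only [Prod.mk.injEq] at h
    have h1 := hinj hp.1 hq.1 h.1
    rw [h1] at h
    have h2 := mul_left_cancel₀ (hb0 _ hq.1) (add_right_cancel h.2)
    exact Prod.ext h1 h2
  rw [lintegral_image_eq_lintegral_abs_det_fderiv_mul volume
    (measurableSet_Ioo.prod measurableSet_Ioo) hder hi]
  simp only [hD]

theorem HasGauge.of_shear {w : ℝ × ℝ → ENNReal} {φ : ℝ → ℝ} (hφ : AnalyticAt ℝ φ 0)
    (hφ0 : φ 0 = 0) (h : HasGauge fun p => w (p.1, p.2 + φ p.1)) : HasGauge w := by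
  obtain ⟨ψ, hψ, c₀, hc₀, hc⟩ := h
  refine ⟨ψ, hψ, c₀ / 2, by positivity, fun c h0 h1 => ?_⟩
  have hsmall : ∀ᶠ r in 𝓝[>] (0 : ℝ), ∀ s ∈ Ioo 0 r,
      |φ s| < c / 2 ∧ HasDerivAt φ (deriv φ s) s := by
    have h2 : ∀ᶠ s in 𝓝 (0 : ℝ), |φ s| < c / 2 := by
      have := hφ.continuousAt.tendsto.abs
      rw [hφ0, abs_zero] at this
      exact this.eventually_lt_const (by positivity)
    obtain ⟨ε, hε, hball⟩ := Metric.eventually_nhds_iff_ball.1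
      (h2.and hφ.eventually_analyticAt)
    filter_upwards [eventually_lt_nhdsGT_zero hε] with r hr s hs
    have := hball s (by
      rw [mem_ball_zero_iff, Real.norm_eq_abs, abs_lt]
      constructor <;> linarith [hs.1, hs.2])
    exact ⟨this.1, this.2.differentiableAt.hasDerivAt⟩
  have hcv : ∀ r, (∀ s ∈ Ioo 0 r, |φ s| < c / 2 ∧ HasDerivAt φ (deriv φ s) s) → ∀ c',
      ∫⁻ p in (fun p : ℝ × ℝ => (p.1, 1 * p.2 + φ p.1)) '' (Ioo 0 r ×ˢ Ioo (-c') c'), w p =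
        boxIntegral (fun p => w (p.1, p.2 + φ p.1)) c' r := by
    intro r hr c'
    have := lintegral_image_fibered (a := fun s => s) (b := fun _ => 1) (k := φ)
      (a' := fun _ => 1) (b' := fun _ => 0) (k' := deriv φ) (r := r) (c := c')
      (fun s _ => hasDerivAt_id s) (fun s _ => hasDerivAt_const s 1) (fun s hs => (hr s hs).2)
      (injOn_id _) (fun _ _ => one_ne_zero) w
    simpa [boxIntegral] using this
  constructor
  · refine Dominated.trans ?_ (hc (2 * c) (by positivity) (by linarith)).1
    refine .of_eventually_le ?_
    filter_upwards [hsmall] with r hr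
    rw [← hcv r hr]
    refine lintegral_mono_set fun p hp => ⟨(p.1, p.2 - φ p.1), ⟨hp.1, ?_⟩, by simp⟩
    have h3 := abs_lt.1 (hr p.1 hp.1).1
    have h4 := hp.2
    rw [mem_Ioo] at h4 ⊢
    constructor <;> simp <;> linarith
  · refine Dominated.trans (hc (c / 2) (by positivity) (by linarith)).2 ?_
    refine .of_eventually_le ?_
    filter_upwards [hsmall] with r hr
    rw [← hcv r hr]
    refine lintegral_mono_set ?_
    rintro _ ⟨p, hp, rfl⟩
    refine ⟨hp.1, ?_⟩
    have h3 := abs_lt.1 (hr p.1 hp.1).1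
    have h4 := hp.2
    rw [mem_Ioo] at h4 ⊢
    constructor <;> simp <;> linarith

/-- The region `{0 < s < r, |y - u₀ s ^ θ| < c s ^ θ}`. -/
def blowRegion (θ u₀ c r : ℝ) : Set (ℝ × ℝ) :=
  {q | q.1 ∈ Ioo 0 r ∧ |q.2 - u₀ * q.1 ^ θ| < c * q.1 ^ θ}

/-- The pullback of `w` under the weighted blow-up `(σ, u) ↦ (σ ^ Q, σ ^ p (u₀ + u))`, including
the Jacobian. -/
def blowWeight (w : ℝ × ℝ → ENNReal) (Q p : ℕ) (u₀ : ℝ) (z : ℝ × ℝ) : ENNReal :=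
  ENNReal.ofReal (Q * z.1 ^ (Q - 1) * z.1 ^ p) * w (z.1 ^ Q, z.1 ^ p * (u₀ + z.2))

theorem setLIntegral_blowRegion (w : ℝ × ℝ → ENNReal) {Q : ℕ} (hQ : 0 < Q) (p : ℕ)
    (u₀ c : ℝ) {r : ℝ} (hr : 0 < r) :
    ∫⁻ q in blowRegion (p / Q) u₀ c r, w q =
      boxIntegral (blowWeight w Q p u₀) c (r ^ (1 / (Q : ℝ))) := by
  have hQ' : (0 : ℝ) < Q := by exact_mod_cast hQ
  set ρ := r ^ (1 / (Q : ℝ)) with hρ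
  have hρ0 : 0 < ρ := Real.rpow_pos_of_pos hr _
  have hroot : ∀ x : ℝ, 0 ≤ x → (x ^ (1 / (Q : ℝ))) ^ Q = x := by
    intro x hx
    rw [← Real.rpow_natCast, ← Real.rpow_mul hx, one_div_mul_cancel hQ'.ne', Real.rpow_one]
  have hpow : ∀ x : ℝ, 0 ≤ x → (x ^ (1 / (Q : ℝ))) ^ p = x ^ ((p : ℝ) / Q) := by
    intro x hx
    rw [← Real.rpow_natCast, ← Real.rpow_mul hx, one_div_mul_eq_div]
  have hpow' : ∀ x : ℝ, 0 < x → (x ^ Q) ^ ((p : ℝ) / Q) = x ^ p := by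
    intro x hx
    rw [← Real.rpow_natCast, ← Real.rpow_mul hx.le, mul_div_cancel₀ _ hQ'.ne', Real.rpow_natCast]
  have hcv := lintegral_image_fibered (a := fun s => s ^ Q) (b := fun s => s ^ p)
    (k := fun s => u₀ * s ^ p) (r := ρ) (c := c)
    (fun s _ => hasDerivAt_pow Q s) (fun s _ => hasDerivAt_pow p s)
    (fun s _ => (hasDerivAt_pow p s).const_mul u₀)
    (fun x hx y hy h => (pow_left_inj₀ hx.1.le hy.1.le hQ.ne').1 h)
    (fun s hs => (pow_pos hs.1 p).ne') w
  have himg : (fun q : ℝ × ℝ => (q.1 ^ Q, q.1 ^ p * q.2 + u₀ * q.1 ^ p)) ''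
      (Ioo 0 ρ ×ˢ Ioo (-c) c) = blowRegion (p / Q) u₀ c r := by
    ext q
    constructor
    · rintro ⟨z, ⟨hz1, hz2⟩, rfl⟩
      have h1 : 0 < z.1 ^ p := pow_pos hz1.1 p
      refine ⟨⟨pow_pos hz1.1 Q, ?_⟩, ?_⟩
      · calc z.1 ^ Q < ρ ^ Q := pow_lt_pow_left₀ hz1.2 hz1.1.le hQ.ne'
          _ = r := hroot r hr.le
      · simp only [hpow' _ hz1.1, add_sub_cancel_right, abs_mul, abs_of_pos h1]
        rw [mul_comm]
        exact mul_lt_mul_of_pos_right (abs_lt.2 hz2) h1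
    · rintro ⟨hq1, hq2⟩
      have h0 : 0 < q.1 ^ (1 / (Q : ℝ)) := Real.rpow_pos_of_pos hq1.1 _
      have h1 : 0 < q.1 ^ ((p : ℝ) / Q) := Real.rpow_pos_of_pos hq1.1 _
      refine ⟨(q.1 ^ (1 / (Q : ℝ)), q.2 / q.1 ^ ((p : ℝ) / Q) - u₀), ⟨⟨h0, ?_⟩, ?_⟩, ?_⟩
      · exact Real.rpow_lt_rpow hq1.1.le hq1.2 (by positivity)
      · refine abs_lt.1 ?_
        have : q.2 / q.1 ^ ((p : ℝ) / Q) - u₀ =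
            (q.2 - u₀ * q.1 ^ ((p : ℝ) / Q)) / q.1 ^ ((p : ℝ) / Q) := by field_simp
        simp only [this, abs_div, abs_of_pos h1]
        rwa [div_lt_iff₀ h1]
      · apply Prod.ext
        · exact hroot _ hq1.1.le
        · simp only [hpow _ hq1.1.le]
          field_simp
          ring
  rw [himg] at hcv
  rw [hcv, boxIntegral]
  refine setLIntegral_congr_fun (measurableSet_Ioo.prod measurableSet_Ioo) fun z hz => ?_
  have h1 : 0 < z.1 := hz.1.1
  have h2 : z.1 ^ p * z.2 + u₀ * z.1 ^ p = z.1 ^ p * (u₀ + z.2) := by ring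
  simp only [blowWeight, h2]
  rw [abs_of_nonneg (by positivity)]

theorem comparable_blowRegion {w : ℝ × ℝ → ENNReal} {Q : ℕ} (hQ : 0 < Q) {p : ℕ} {u₀ : ℝ}
    (h : HasGauge (blowWeight w Q p u₀)) :
    ∃ φ, IsGauge φ ∧ ∃ c₀ > (0 : ℝ), ∀ c, 0 < c → c < c₀ →
      Comparable (fun r => ∫⁻ q in blowRegion (p / Q) u₀ c r, w q) φ := by
  obtain ⟨φ, hφ, c₀, hc₀, hc⟩ := h
  have hκ : 0 < 1 / (Q : ℝ) := by positivity
  obtain ⟨ψ, hψ, hcomp⟩ := hφ.comp_rpow hκ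
  refine ⟨ψ, hψ, c₀, hc₀, fun c h0 h1 => Comparable.trans ?_ hcomp⟩
  refine Comparable.trans (.of_eventuallyEq ?_) ((hc c h0 h1).comp (tendsto_rpow_nhdsGT_zero hκ))
  filter_upwards [self_mem_nhdsWithin] with r hr
  exact setLIntegral_blowRegion w hQ p u₀ c hr

theorem HasGauge.of_pow {w : ℝ × ℝ → ENNReal} {Q : ℕ} (hQ : 0 < Q)
    (h : HasGauge (blowWeight w Q 0 0)) : HasGauge w := by
  obtain ⟨φ, hφ, c₀, hc₀, hc⟩ := comparable_blowRegion hQ h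
  refine ⟨φ, hφ, c₀, hc₀, fun c h0 h1 => ?_⟩
  convert hc c h0 h1 using 1
  funext r
  have : blowRegion ((0 : ℕ) / (Q : ℝ)) 0 c r = Ioo 0 r ×ˢ Ioo (-c) c := by
    ext q
    simp [blowRegion, abs_lt]
  rw [this, boxIntegral]

theorem Dominated.setLIntegral {J φ : ℝ → ENNReal} (h : Dominated J φ) :
    Dominated (fun r => ∫⁻ s in Ioo 0 r, J s) fun r => ∫⁻ s in Ioo 0 r, φ s := by
  obtain ⟨C, hC⟩ := h
  refine ⟨C, ?_⟩
  obtain ⟨ε, hε, hlt⟩ := mem_nhdsGT_iff_exists_Ioo_subset.1 hC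
  filter_upwards [eventually_lt_nhdsGT_zero hε] with r hr
  rw [← lintegral_const_mul' _ _ ENNReal.coe_ne_top]
  refine setLIntegral_mono' measurableSet_Ioo fun s hs => ?_
  exact hlt ⟨hs.1, hs.2.trans hr⟩

theorem Comparable.setLIntegral {J φ : ℝ → ENNReal} (h : Comparable J φ) :
    Comparable (fun r => ∫⁻ s in Ioo 0 r, J s) fun r => ∫⁻ s in Ioo 0 r, φ s :=
  ⟨h.1.setLIntegral, h.2.setLIntegral⟩

theorem Dominated.mul_left {J φ : ℝ → ENNReal} (h : Dominated J φ) (u : ℝ → ENNReal) :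
    Dominated (fun r => u r * J r) fun r => u r * φ r := by
  obtain ⟨C, hC⟩ := h
  refine ⟨C, ?_⟩
  filter_upwards [hC] with r hr
  calc u r * J r ≤ u r * (C * φ r) := by gcongr
    _ = _ := by ring

theorem Comparable.mul_left {J φ : ℝ → ENNReal} (h : Comparable J φ) (u : ℝ → ENNReal) :
    Comparable (fun r => u r * J r) fun r => u r * φ r := ⟨h.1.mul_left u, h.2.mul_left u⟩

theorem lintegral_Ioo_ofReal_of_nonneg {f : ℝ → ℝ} {a b : ℝ} (hab : a ≤ b)
    (hf : IntervalIntegrable f volume a b) (h0 : ∀ x ∈ Ioo a b, 0 ≤ f x) :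
    ∫⁻ x in Ioo a b, ENNReal.ofReal (f x) = ENNReal.ofReal (∫ x in a..b, f x) := by
  rw [intervalIntegral.integral_of_le hab, integral_Ioc_eq_integral_Ioo,
    ofReal_integral_eq_lintegral_ofReal]
  · exact ((intervalIntegrable_iff_integrableOn_Ioo_of_le hab).1 hf)
  · exact (ae_restrict_iff' measurableSet_Ioo).2 (Filter.Eventually.of_forall h0)

theorem lintegral_rpow_Ioo_zero {γ r : ℝ} (hγ : -1 < γ) (hr : 0 ≤ r) :
    ∫⁻ s in Ioo 0 r, ENNReal.ofReal (s ^ γ) = ENNReal.ofReal (r ^ (γ + 1) / (γ + 1)) := by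
  rw [lintegral_Ioo_ofReal_of_nonneg hr (intervalIntegral.intervalIntegrable_rpow' hγ)
    fun x hx => Real.rpow_nonneg hx.1.le _, integral_rpow (.inl hγ),
    Real.zero_rpow (by linarith), sub_zero]

theorem lintegral_rpow_Ioo_zero_eq_top {γ r : ℝ} (hγ : γ ≤ -1) (hr : 0 < r) :
    ∫⁻ s in Ioo 0 r, ENNReal.ofReal (s ^ γ) = ⊤ := by
  by_contra h
  rw [← ne_eq, lintegral_ofReal_ne_top_iff_integrable (by fun_prop)
    ((ae_restrict_iff' measurableSet_Ioo).2 (Filter.Eventually.of_forall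
      fun x hx => Real.rpow_nonneg hx.1.le _))] at h
  have := (intervalIntegral.integrableOn_Ioo_rpow_iff hr).1 h
  linarith

theorem exists_gauge_lintegral_rpow_log (γ : ℝ) {e : ℕ} (he : e = 0 ∨ e = 1) :
    ∃ φ, IsGauge φ ∧
      Comparable (fun r => ∫⁻ s in Ioo 0 r, ENNReal.ofReal (s ^ γ * |Real.log s| ^ e)) φ := by
  rcases le_or_gt γ (-1) with hγ | hγ
  · refine ⟨⊤, .inr (.inl rfl), ?_⟩
    have h1 : Dominated (fun r => ENNReal.ofReal (r ^ γ))
        fun r => ENNReal.ofReal (r ^ γ * |Real.log r| ^ e) := by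
      have := dominated_rpow_log_of_le γ (e := e) (e' := 0) (by omega)
      simpa using this
    refine ⟨.of_eventually_le (by simp), Dominated.trans (.of_eventually_le ?_) h1.setLIntegral⟩
    filter_upwards [self_mem_nhdsWithin] with r hr
    rw [lintegral_rpow_Ioo_zero_eq_top hγ hr]
    simp
  refine ⟨_, .inr (.inr ⟨γ + 1, e, by linarith, he, rfl⟩), ?_, ?_⟩
  · set η := (γ + 1) / 2 with hη
    have hη0 : 0 < η := by rw [hη]; linarith
    refine ⟨(1 / η).toNNReal, ?_⟩
    have hcoe : (((1 / η).toNNReal : NNReal) : ENNReal) = ENNReal.ofReal (1 / η) := rfl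
    filter_upwards [self_mem_nhdsWithin,
      eventually_lt_nhdsGT_zero (inv_pos.2 (Real.exp_pos η⁻¹)), eventually_lt_nhdsGT_zero one_pos]
      with r hr hr1 hr2
    have hr : 0 < r := hr
    have hmono : ∀ s ∈ Ioo 0 r, s ^ η * |Real.log s| ^ e ≤ r ^ η * |Real.log r| ^ e := by
      intro s hs
      have hs0 : 0 < s := hs.1
      rcases he with rfl | rfl
      · simpa using Real.rpow_le_rpow hs0.le hs.2.le hη0.le
      · have key : ∀ x : ℝ, 0 < x → x < 1 →
            Real.log x⁻¹ / x⁻¹ ^ η = x ^ η * |Real.log x| ^ 1 := by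
          intro x hx hx1
          rw [Real.log_inv, Real.inv_rpow hx.le, div_inv_eq_mul, pow_one,
            abs_of_neg (Real.log_neg hx hx1), mul_comm]
        have h3 := @Real.log_div_self_rpow_antitoneOn η hη0 r⁻¹
          (by rw [mem_Ici]; exact (lt_inv_comm₀ (Real.exp_pos _) hr).2 hr1 |>.le)
          s⁻¹ (by rw [mem_Ici]; exact ((lt_inv_comm₀ (Real.exp_pos _) hs0).2
                (hs.2.trans hr1)).le)
          (inv_anti₀ hs0 hs.2.le)
        simp only at h3
        rwa [key s hs0 (hs.2.trans hr2), key r hr hr2] at h3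
    calc ∫⁻ s in Ioo 0 r, ENNReal.ofReal (s ^ γ * |Real.log s| ^ e)
        ≤ ∫⁻ s in Ioo 0 r, ENNReal.ofReal (r ^ η * |Real.log r| ^ e) *
            ENNReal.ofReal (s ^ (γ - η)) := by
          refine setLIntegral_mono' measurableSet_Ioo fun s hs => ?_
          have hs0 : 0 < s := hs.1
          rw [← ENNReal.ofReal_mul (by positivity)]
          refine ENNReal.ofReal_le_ofReal ?_
          have : s ^ γ = s ^ (γ - η) * s ^ η := by rw [← Real.rpow_add hs0]; ring_nf
          rw [this, mul_assoc, mul_comm]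
          exact mul_le_mul_of_nonneg_right (hmono s hs) (by positivity)
      _ = ENNReal.ofReal (r ^ η * |Real.log r| ^ e) *
            ENNReal.ofReal (r ^ (γ - η + 1) / (γ - η + 1)) := by
          rw [lintegral_const_mul' _ _ ENNReal.ofReal_ne_top,
            lintegral_rpow_Ioo_zero (by rw [hη]; linarith) hr.le]
      _ = _ := by
          rw [hcoe, ← ENNReal.ofReal_mul (by positivity), ← ENNReal.ofReal_mul (by positivity)]
          congr 1
          have h1 : γ - η + 1 = η := by rw [hη]; ring
          have h2 : r ^ (γ + 1) = r ^ η * r ^ η := by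
            rw [← Real.rpow_add hr]; congr 1; rw [hη]; ring
          rw [h1, h2]
          field_simp
  · refine ⟨(γ + 1).toNNReal, ?_⟩
    have hcoe : (((γ + 1).toNNReal : NNReal) : ENNReal) = ENNReal.ofReal (γ + 1) := rfl
    filter_upwards [self_mem_nhdsWithin, eventually_lt_nhdsGT_zero one_pos] with r hr hr1
    have hr : 0 < r := hr
    have hγ' : 0 < γ + 1 := by linarith
    calc ENNReal.ofReal (r ^ (γ + 1) * |Real.log r| ^ e)
        = ENNReal.ofReal (γ + 1) * (ENNReal.ofReal (|Real.log r| ^ e) *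
            ENNReal.ofReal (r ^ (γ + 1) / (γ + 1))) := by
          rw [← ENNReal.ofReal_mul (by positivity), ← ENNReal.ofReal_mul (by positivity)]
          congr 1
          field_simp
      _ = ENNReal.ofReal (γ + 1) * ∫⁻ s in Ioo 0 r, ENNReal.ofReal (|Real.log r| ^ e) *
            ENNReal.ofReal (s ^ γ) := by
          rw [lintegral_const_mul' _ _ ENNReal.ofReal_ne_top, lintegral_rpow_Ioo_zero hγ hr.le]
      _ ≤ _ := by
          rw [hcoe]
          refine mul_le_mul_right ?_ _
          refine setLIntegral_mono' measurableSet_Ioo fun s hs => ?_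
          have hs0 : 0 < s := hs.1
          rw [← ENNReal.ofReal_mul (by positivity)]
          refine ENNReal.ofReal_le_ofReal ?_
          rw [mul_comm]
          have : |Real.log r| ≤ |Real.log s| := by
            rw [abs_of_neg (Real.log_neg hr hr1), abs_of_neg (Real.log_neg hs0 (hs.2.trans hr1))]
            exact neg_le_neg (Real.log_le_log hs0 hs.2.le)
          gcongr

theorem lintegral_rpow_Ioo {β l c : ℝ} (hβ : β ≠ -1) (hl : 0 < l) (hlc : l ≤ c) :
    ∫⁻ y in Ioo l c, ENNReal.ofReal (y ^ β) =
      ENNReal.ofReal ((c ^ (β + 1) - l ^ (β + 1)) / (β + 1)) := by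
  have h0 : (0 : ℝ) ∉ uIcc l c := by
    rw [uIcc_of_le hlc]; exact fun h => absurd h.1 (not_le.2 hl)
  rw [lintegral_Ioo_ofReal_of_nonneg hlc (intervalIntegral.intervalIntegrable_rpow (.inr h0))
    fun x hx => Real.rpow_nonneg (hl.trans hx.1).le _, integral_rpow (.inr ⟨hβ, h0⟩)]

theorem lintegral_inv_Ioo {l c : ℝ} (hl : 0 < l) (hlc : l ≤ c) :
    ∫⁻ y in Ioo l c, ENNReal.ofReal (y ^ (-1 : ℝ)) = ENNReal.ofReal (Real.log (c / l)) := by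
  have h0 : (0 : ℝ) ∉ uIcc l c := by
    rw [uIcc_of_le hlc]; exact fun h => absurd h.1 (not_le.2 hl)
  rw [lintegral_Ioo_ofReal_of_nonneg hlc (intervalIntegral.intervalIntegrable_rpow (.inr h0))
    fun x hx => Real.rpow_nonneg (hl.trans hx.1).le _]
  simp only [Real.rpow_neg_one]
  rw [integral_inv_of_pos hl (hl.trans_le hlc)]

theorem tendsto_rpow_nhdsGT_zero_real {κ : ℝ} (hκ : 0 < κ) :
    Filter.Tendsto (fun r : ℝ => r ^ κ) (𝓝[>] 0) (𝓝 0) :=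
  (tendsto_rpow_nhdsGT_zero hκ).mono_right nhdsWithin_le_nhds

theorem exists_comparable_lintegral_Ioo (β : ℝ) :
    ∃ (κ : ℝ) (e : ℕ), (e = 0 ∨ e = 1) ∧ ∀ c, 0 < c →
      Comparable (fun l => ∫⁻ y in Ioo l c, ENNReal.ofReal (y ^ β))
        fun l => ENNReal.ofReal (l ^ κ * |Real.log l| ^ e) := by
  rcases lt_trichotomy β (-1) with hβ | rfl | hβ
  · refine ⟨β + 1, 0, .inl rfl, fun c hc => ?_⟩
    have hβ1 : 0 < -(β + 1) := by linarith
    have hcp : 0 < c ^ (β + 1) := Real.rpow_pos_of_pos hc _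
    have heq : (fun l => ∫⁻ y in Ioo l c, ENNReal.ofReal (y ^ β)) =ᶠ[𝓝[>] 0]
        fun l => ENNReal.ofReal ((c ^ (β + 1) - l ^ (β + 1)) / (β + 1)) := by
      filter_upwards [self_mem_nhdsWithin, eventually_lt_nhdsGT_zero hc] with l hl hlc
      exact lintegral_rpow_Ioo hβ.ne hl hlc.le
    refine (Comparable.of_eventuallyEq heq).trans ⟨?_, ?_⟩
    · refine .ofReal (C := 1 / (-(β + 1))) (by positivity) ?_
      filter_upwards with l
      rw [pow_zero, mul_one, one_div_mul_eq_div, ← neg_div_neg_eq]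
      gcongr
      linarith
    · refine .ofReal (C := 2 * (-(β + 1))) (by positivity) ?_
      have h1 := (tendsto_rpow_nhdsGT_zero_real hβ1).eventually_lt_const
        (show 0 < (2 * c ^ (β + 1))⁻¹ by positivity)
      filter_upwards [self_mem_nhdsWithin, h1] with l hl h2
      have hl : 0 < l := hl
      rw [Real.rpow_neg hl.le, inv_lt_inv₀ (Real.rpow_pos_of_pos hl _) (by positivity)] at h2
      rw [pow_zero, mul_one]
      have h3 : β + 1 ≠ 0 := by linarith
      field_simp
      linarith
  · refine ⟨0, 1, .inr rfl, fun c hc => ?_⟩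
    have heq : (fun l => ∫⁻ y in Ioo l c, ENNReal.ofReal (y ^ (-1 : ℝ))) =ᶠ[𝓝[>] 0]
        fun l => ENNReal.ofReal (Real.log (c / l)) := by
      filter_upwards [self_mem_nhdsWithin, eventually_lt_nhdsGT_zero hc] with l hl hlc
      exact lintegral_inv_Ioo hl hlc.le
    refine (Comparable.of_eventuallyEq heq).trans ⟨?_, ?_⟩
    · refine .ofReal (C := 2) (by positivity) ?_
      filter_upwards [self_mem_nhdsWithin, eventually_lt_nhdsGT_zero one_pos,
        eventually_le_abs_log |Real.log c|] with l hl hl1 h2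
      have hl : 0 < l := hl
      rw [Real.log_div hc.ne' hl.ne', Real.rpow_zero, pow_one, one_mul]
      rw [abs_of_neg (Real.log_neg hl hl1)] at h2 ⊢
      linarith [le_abs_self (Real.log c)]
    · refine .ofReal (C := 2) (by positivity) ?_
      filter_upwards [self_mem_nhdsWithin, eventually_lt_nhdsGT_zero one_pos,
        eventually_le_abs_log (2 * |Real.log c|)] with l hl hl1 h2
      have hl : 0 < l := hl
      rw [Real.log_div hc.ne' hl.ne', Real.rpow_zero, pow_one, one_mul]
      rw [abs_of_neg (Real.log_neg hl hl1)] at h2 ⊢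
      linarith [neg_abs_le (Real.log c)]
  · refine ⟨0, 0, .inl rfl, fun c hc => ?_⟩
    have hβ1 : 0 < β + 1 := by linarith
    have hcp : 0 < c ^ (β + 1) := Real.rpow_pos_of_pos hc _
    have heq : (fun l => ∫⁻ y in Ioo l c, ENNReal.ofReal (y ^ β)) =ᶠ[𝓝[>] 0]
        fun l => ENNReal.ofReal ((c ^ (β + 1) - l ^ (β + 1)) / (β + 1)) := by
      filter_upwards [self_mem_nhdsWithin, eventually_lt_nhdsGT_zero hc] with l hl hlc
      exact lintegral_rpow_Ioo hβ.ne' hl hlc.le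
    refine (Comparable.of_eventuallyEq heq).trans ⟨?_, ?_⟩
    · refine .ofReal (C := c ^ (β + 1) / (β + 1)) (by positivity) ?_
      filter_upwards [self_mem_nhdsWithin] with l hl
      have := Real.rpow_pos_of_pos hl (β + 1)
      rw [pow_zero, mul_one, Real.rpow_zero, mul_one]
      gcongr
      linarith
    · refine .ofReal (C := 2 * (β + 1) / c ^ (β + 1)) (by positivity) ?_
      have h1 := (tendsto_rpow_nhdsGT_zero_real hβ1).eventually_lt_const
        (show 0 < c ^ (β + 1) / 2 by positivity)
      filter_upwards [self_mem_nhdsWithin, h1] with l hl h2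
      rw [pow_zero, mul_one, Real.rpow_zero]
      field_simp
      linarith

theorem comparable_rpow_log_comp {κ M θ : ℝ} (hM : 0 < M) (hθ : 0 < θ) (e : ℕ) :
    Comparable (fun s => ENNReal.ofReal ((M * s ^ θ) ^ κ * |Real.log (M * s ^ θ)| ^ e))
      fun s => ENNReal.ofReal (s ^ (θ * κ) * |Real.log s| ^ e) := by
  have key : ∀ s : ℝ, 0 < s → (M * s ^ θ) ^ κ = M ^ κ * s ^ (θ * κ) ∧
      Real.log (M * s ^ θ) = Real.log M + θ * Real.log s := by
    intro s hs
    have := Real.rpow_pos_of_pos hs θ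
    rw [Real.mul_rpow hM.le this.le, ← Real.rpow_mul hs.le, Real.log_mul hM.ne' this.ne',
      Real.log_rpow hs]
    exact ⟨rfl, rfl⟩
  have hMκ : 0 < M ^ κ := Real.rpow_pos_of_pos hM _
  have hlog : ∀ᶠ s in 𝓝[>] (0 : ℝ), |Real.log M + θ * Real.log s| ≤ 2 * θ * |Real.log s| ∧
      |Real.log s| ≤ 2 / θ * |Real.log M + θ * Real.log s| := by
    filter_upwards [eventually_le_abs_log (2 * |Real.log M| / θ)] with s hs
    rw [div_le_iff₀ hθ] at hs
    have h1 : |θ * Real.log s| = θ * |Real.log s| := by rw [abs_mul, abs_of_pos hθ]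
    have h2 := abs_add_le (Real.log M) (θ * Real.log s)
    have h3 := abs_add_le (-Real.log M) (Real.log M + θ * Real.log s)
    rw [abs_neg, neg_add_cancel_left, h1] at h3
    rw [h1] at h2
    have h4 := abs_nonneg (Real.log M)
    constructor
    · nlinarith
    · rw [div_mul_eq_mul_div, le_div_iff₀ hθ]
      nlinarith
  constructor
  · refine .ofReal (C := M ^ κ * (2 * θ) ^ e) (by positivity) ?_
    filter_upwards [self_mem_nhdsWithin, hlog] with s hs h1
    rw [(key s hs).1, (key s hs).2]
    have := Real.rpow_pos_of_pos hs (θ * κ)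
    have h2 : |Real.log M + θ * Real.log s| ^ e ≤ (2 * θ) ^ e * |Real.log s| ^ e := by
      rw [← mul_pow]
      exact pow_le_pow_left₀ (abs_nonneg _) h1.1 e
    calc _ ≤ M ^ κ * s ^ (θ * κ) * ((2 * θ) ^ e * |Real.log s| ^ e) := by gcongr
      _ = _ := by ring
  · refine .ofReal (C := (M ^ κ)⁻¹ * (2 / θ) ^ e) (by positivity) ?_
    filter_upwards [self_mem_nhdsWithin, hlog] with s hs h1
    rw [(key s hs).1, (key s hs).2]
    have := Real.rpow_pos_of_pos hs (θ * κ)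
    have h2 : |Real.log s| ^ e ≤ (2 / θ) ^ e * |Real.log M + θ * Real.log s| ^ e := by
      rw [← mul_pow]
      exact pow_le_pow_left₀ (abs_nonneg _) h1.2 e
    calc _ ≤ s ^ (θ * κ) * ((2 / θ) ^ e * |Real.log M + θ * Real.log s| ^ e) := by gcongr
      _ = _ := by field_simp

/-- The region `{0 < s < r, k(s) < ε y < c}`. -/
def wedge (k : ℝ → ℝ) (ε c r : ℝ) : Set (ℝ × ℝ) :=
  {p | p.1 ∈ Ioo 0 r ∧ ε * p.2 ∈ Ioo (k p.1) c}

theorem measurableSet_wedge {k : ℝ → ℝ} (hk : Measurable k) (ε c r : ℝ) :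
    MeasurableSet (wedge k ε c r) := by
  refine MeasurableSet.inter (measurable_fst measurableSet_Ioo) ?_
  have h1 : MeasurableSet {p : ℝ × ℝ | k p.1 < ε * p.2} :=
    measurableSet_lt (by fun_prop) (by fun_prop)
  have h2 : MeasurableSet {p : ℝ × ℝ | ε * p.2 < c} :=
    measurableSet_lt (by fun_prop) (by fun_prop)
  exact h1.inter h2

theorem lintegral_sign_mul_Ioo {ε : ℝ} (hε : ε = 1 ∨ ε = -1) {l c : ℝ} (hl : 0 ≤ l) (β : ℝ) :
    ∫⁻ y in {y | ε * y ∈ Ioo l c}, ENNReal.ofReal (|y| ^ β) =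
      ∫⁻ y in Ioo l c, ENNReal.ofReal (y ^ β) := by
  have h1 : ∫⁻ y in Ioo l c, ENNReal.ofReal (y ^ β) =
      ∫⁻ y in Ioo l c, ENNReal.ofReal (|y| ^ β) := by
    refine setLIntegral_congr_fun measurableSet_Ioo fun y hy => ?_
    rw [abs_of_pos (hl.trans_lt hy.1)]
  rw [h1]
  rcases hε with rfl | rfl
  · simp only [one_mul]
    rfl
  · have h2 : MeasurableSet {y : ℝ | -1 * y ∈ Ioo l c} := by
      have : Measurable fun y : ℝ => -1 * y := by fun_prop
      exact this measurableSet_Ioo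
    rw [← lintegral_indicator h2, ← lintegral_indicator measurableSet_Ioo,
      ← lintegral_neg_eq_self]
    congr 1
    funext y
    simp [indicator]

theorem lintegral_wedge {k : ℝ → ℝ} (hk : Measurable k) (hk0 : ∀ s, 0 < s → 0 ≤ k s) {ε : ℝ}
    (hε : ε = 1 ∨ ε = -1) (α β c r : ℝ) :
    ∫⁻ p in wedge k ε c r, ENNReal.ofReal (p.1 ^ α * |p.2| ^ β) =
      ∫⁻ s in Ioo 0 r, ENNReal.ofReal (s ^ α) *
        ∫⁻ y in Ioo (k s) c, ENNReal.ofReal (y ^ β) := by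
  rw [← lintegral_indicator (measurableSet_wedge hk _ _ _), Measure.volume_eq_prod,
    lintegral_prod]
  · rw [← lintegral_indicator measurableSet_Ioo]
    congr 1
    funext s
    by_cases hs : s ∈ Ioo 0 r
    · rw [indicator_of_mem hs, ← lintegral_sign_mul_Ioo hε (hk0 s hs.1),
        ← lintegral_const_mul' _ _ ENNReal.ofReal_ne_top, ← lintegral_indicator]
      · congr 1
        funext y
        have h1 : ((s, y) ∈ wedge k ε c r) ↔ y ∈ {y | ε * y ∈ Ioo (k s) c} :=
          ⟨fun h => h.2, fun h => ⟨hs, h⟩⟩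
        by_cases hy : y ∈ {y | ε * y ∈ Ioo (k s) c}
        · rw [indicator_of_mem hy, indicator_of_mem (h1.2 hy),
            ENNReal.ofReal_mul (Real.rpow_nonneg hs.1.le _)]
        · rw [indicator_of_notMem hy, indicator_of_notMem fun h => hy (h1.1 h)]
      · have : Measurable fun y : ℝ => ε * y := by fun_prop
        exact this measurableSet_Ioo
    · rw [indicator_of_notMem hs]
      have : ∀ y, (s, y) ∉ wedge k ε c r := fun y h => hs h.1
      simp [indicator_of_notMem (this _)]
  · refine (Measurable.indicator ?_ (measurableSet_wedge hk _ _ _)).aemeasurable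
    fun_prop

theorem exists_gauge_wedge_rpow {M θ : ℝ} (hM : 0 < M) (hθ : 0 < θ) (α β : ℝ) {ε : ℝ}
    (hε : ε = 1 ∨ ε = -1) :
    ∃ φ, IsGauge φ ∧ ∀ c, 0 < c → Comparable (fun r => ∫⁻ p in wedge (fun s => M * s ^ θ) ε c r,
      ENNReal.ofReal (p.1 ^ α * |p.2| ^ β)) φ := by
  obtain ⟨κ, e, he, h⟩ := exists_comparable_lintegral_Ioo β
  obtain ⟨φ, hφ, hφc⟩ := exists_gauge_lintegral_rpow_log (α + θ * κ) he
  refine ⟨φ, hφ, fun c hc => Comparable.trans ?_ hφc⟩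
  have ht : Filter.Tendsto (fun s : ℝ => M * s ^ θ) (𝓝[>] 0) (𝓝[>] 0) := by
    refine tendsto_nhdsWithin_of_tendsto_nhds_of_eventually_within _ ?_ ?_
    · simpa using (tendsto_rpow_nhdsGT_zero_real hθ).const_mul M
    · filter_upwards [self_mem_nhdsWithin] with s hs
      exact mul_pos hM (Real.rpow_pos_of_pos hs _)
  have h1 := (((h c hc).comp ht).trans (comparable_rpow_log_comp hM hθ e)).mul_left
    fun s => ENNReal.ofReal (s ^ α)
  have h2 : (fun s => ENNReal.ofReal (s ^ α) * ENNReal.ofReal (s ^ (θ * κ) * |Real.log s| ^ e))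
      =ᶠ[𝓝[>] 0] fun s => ENNReal.ofReal (s ^ (α + θ * κ) * |Real.log s| ^ e) := by
    filter_upwards [self_mem_nhdsWithin] with s hs
    rw [← ENNReal.ofReal_mul (Real.rpow_nonneg (le_of_lt hs) _), Real.rpow_add hs, mul_assoc]
  have h3 := (h1.trans (.of_eventuallyEq h2)).setLIntegral
  convert h3 using 2 with r
  exact lintegral_wedge (by fun_prop)
    (fun s hs => (mul_pos hM (Real.rpow_pos_of_pos hs _)).le) hε α β c r

theorem exists_gauge_wedge_zero (α β : ℝ) {ε : ℝ} (hε : ε = 1 ∨ ε = -1) :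
    ∃ φ, IsGauge φ ∧ ∀ c, 0 < c → Comparable (fun r => ∫⁻ p in wedge (fun _ => 0) ε c r,
      ENNReal.ofReal (p.1 ^ α * |p.2| ^ β)) φ := by
  simp only [lintegral_wedge measurable_const (fun _ _ => le_rfl) hε]
  rcases le_or_gt β (-1) with hβ | hβ
  · refine ⟨⊤, .inr (.inl rfl), fun c hc => .of_eventuallyEq ?_⟩
    filter_upwards [self_mem_nhdsWithin] with r hr
    have hr : 0 < r := hr
    rw [lintegral_rpow_Ioo_zero_eq_top hβ hc]
    have : ∫⁻ s in Ioo 0 r, ENNReal.ofReal (s ^ α) * ⊤ = ∫⁻ s in Ioo 0 r, (⊤ : ENNReal) := by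
      refine setLIntegral_congr_fun measurableSet_Ioo fun s hs => ?_
      exact ENNReal.mul_top (by simpa using Real.rpow_pos_of_pos hs.1 _)
    rw [this, setLIntegral_const, Real.volume_Ioo, ENNReal.top_mul (by simpa using hr)]
    rfl
  · obtain ⟨φ, hφ, hφc⟩ := exists_gauge_lintegral_rpow_log α (e := 0) (.inl rfl)
    refine ⟨φ, hφ, fun c hc => Comparable.trans ?_ hφc⟩
    simp only [pow_zero, mul_one, lintegral_rpow_Ioo_zero hβ hc.le]
    have hβ1 : 0 < β + 1 := by linarith
    set K := c ^ (β + 1) / (β + 1) with hK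
    have hK0 : 0 < K := div_pos (Real.rpow_pos_of_pos hc _) hβ1
    simp only [lintegral_mul_const' _ _ ENNReal.ofReal_ne_top]
    constructor
    · exact ⟨K.toNNReal, Filter.Eventually.of_forall fun r => (mul_comm _ _).le⟩
    · refine ⟨K⁻¹.toNNReal, Filter.Eventually.of_forall fun r => ?_⟩
      have hcoe : ((K⁻¹.toNNReal : NNReal) : ENNReal) = ENNReal.ofReal K⁻¹ := rfl
      simp only
      rw [hcoe, mul_comm _ (ENNReal.ofReal K), ← mul_assoc, ← ENNReal.ofReal_mul (by positivity),
        inv_mul_cancel₀ hK0.ne', ENNReal.ofReal_one, one_mul]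

/-- Simultaneous Newton slope of finitely many families of analytic coefficients. -/
theorem exists_newton_slope {ι : Type*} [Fintype ι] {d : ι → ℕ} {c : ι → ℕ → ℝ → ℝ}
    (hc : ∀ i j, AnalyticAt ℝ (c i j) 0) (h0 : ∀ i, ∀ j < d i, c i j 0 = 0)
    (hne : ∃ i, ∃ j < d i, ¬ ∀ᶠ s in 𝓝 (0 : ℝ), c i j s = 0) :
    ∃ (p Q : ℕ) (b : ι → ℕ → ℝ → ℝ), 0 < p ∧ 0 < Q ∧ (∀ i j, AnalyticAt ℝ (b i j) 0) ∧
      (∀ i, ∀ j < d i, ∀ᶠ σ in 𝓝 (0 : ℝ), c i j (σ ^ Q) = σ ^ (p * (d i - j)) * b i j σ) ∧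
      (∀ i j, (∀ᶠ s in 𝓝 (0 : ℝ), c i j s = 0) → b i j 0 = 0) ∧
      ∃ i, ∃ j < d i, b i j 0 ≠ 0 := by
  classical
  have hord : ∀ i j, ∃ (o : ℕ) (e : ℝ → ℝ), (¬ ∀ᶠ s in 𝓝 (0 : ℝ), c i j s = 0) →
      AnalyticAt ℝ e 0 ∧ e 0 ≠ 0 ∧ ∀ᶠ s in 𝓝 (0 : ℝ), c i j s = s ^ o * e s := by
    intro i j
    by_cases h : ∀ᶠ s in 𝓝 (0 : ℝ), c i j s = 0
    · exact ⟨0, 0, fun h' => absurd h h'⟩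
    · obtain ⟨o, e, he, he0, heq⟩ := (hc i j).exists_eventuallyEq_pow_smul_nonzero_iff.2 h
      exact ⟨o, e, fun _ => ⟨he, he0, by simpa using heq⟩⟩
  choose o e hoe using hord
  let T : Finset (Σ _ : ι, ℕ) := (Finset.univ.sigma fun i => Finset.range (d i)).filter
    fun x => ¬ ∀ᶠ s in 𝓝 (0 : ℝ), c x.1 x.2 s = 0
  have hT : ∀ i j, (⟨i, j⟩ : Σ _ : ι, ℕ) ∈ T ↔ j < d i ∧ ¬ ∀ᶠ s in 𝓝 (0 : ℝ), c i j s = 0 := by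
    intro i j
    simp [T]
  have hTne : T.Nonempty := by
    obtain ⟨i, j, hj, h⟩ := hne
    exact ⟨⟨i, j⟩, (hT i j).2 ⟨hj, h⟩⟩
  obtain ⟨⟨i₀, j₀⟩, hmem, hmin⟩ := T.exists_min_image
    (fun x => (o x.1 x.2 : ℚ) / ((d x.1 - x.2 : ℕ) : ℚ)) hTne
  obtain ⟨hj₀, hne₀⟩ := (hT i₀ j₀).1 hmem
  have hQ : 0 < d i₀ - j₀ := by omega
  have hle : ∀ i, ∀ j < d i, (¬ ∀ᶠ s in 𝓝 (0 : ℝ), c i j s = 0) →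
      o i₀ j₀ * (d i - j) ≤ (d i₀ - j₀) * o i j := by
    intro i j hj h
    have h1 := hmin ⟨i, j⟩ ((hT i j).2 ⟨hj, h⟩)
    simp only at h1
    have h2 : 0 < d i - j := by omega
    rw [div_le_div_iff₀ (by exact_mod_cast hQ) (by exact_mod_cast h2)] at h1
    have h3 : o i₀ j₀ * (d i - j) ≤ o i j * (d i₀ - j₀) := by exact_mod_cast h1
    linarith
  have hp : 0 < o i₀ j₀ := by
    obtain ⟨-, he0, heq⟩ := hoe i₀ j₀ hne₀
    by_contra hcon
    have h1 := heq.self_of_nhds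
    rw [h0 i₀ j₀ hj₀, Nat.eq_zero_of_not_pos hcon, pow_zero, one_mul] at h1
    exact he0 h1.symm
  have hpow : Filter.Tendsto (fun σ : ℝ => σ ^ (d i₀ - j₀)) (𝓝 0) (𝓝 0) := by
    have := (continuous_pow (M := ℝ) (d i₀ - j₀)).tendsto 0
    rwa [zero_pow hQ.ne'] at this
  refine ⟨o i₀ j₀, d i₀ - j₀, fun i j => if ∀ᶠ s in 𝓝 (0 : ℝ), c i j s = 0 then 0 else
    fun σ => σ ^ ((d i₀ - j₀) * o i j - o i₀ j₀ * (d i - j)) * e i j (σ ^ (d i₀ - j₀)),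
    hp, hQ, fun i j => ?_, fun i j hj => ?_, fun i j h => ?_, i₀, j₀, hj₀, ?_⟩
  · dsimp only
    split_ifs with h
    · exact analyticAt_const
    · refine (analyticAt_id.fun_pow _).fun_mul (AnalyticAt.fun_comp (f := fun σ : ℝ =>
        σ ^ (d i₀ - j₀)) ?_ (analyticAt_id.fun_pow _))
      simpa [zero_pow hQ.ne'] using (hoe i j h).1
  · dsimp only
    split_ifs with h
    · filter_upwards [hpow.eventually h] with σ hσ
      simp [hσ]
    · filter_upwards [hpow.eventually (hoe i j h).2.2] with σ hσ
      rw [hσ, ← mul_assoc, ← pow_mul, ← pow_add, Nat.add_sub_cancel' (hle i j hj h)]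
  · simp [h]
  · dsimp only
    rw [if_neg hne₀]
    have h1 := (hoe i₀ j₀ hne₀).2.1
    simp only [mul_comm (o i₀ j₀), Nat.sub_self, pow_zero, one_mul, zero_pow hQ.ne']
    exact h1

open Polynomial in
/-- The polynomial with coefficients `a j` for `j < d` and leading coefficient `l`. -/
def topPoly (d : ℕ) (a : ℕ → ℝ) (l : ℝ) : ℝ[X] :=
  ∑ j ∈ Finset.range d, C (a j) * X ^ j + C l * X ^ d

theorem eval_topPoly (d : ℕ) (a : ℕ → ℝ) (l u : ℝ) :
    (topPoly d a l).eval u = ∑ j ∈ Finset.range d, a j * u ^ j + l * u ^ d := by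
  simp [topPoly, Polynomial.eval_finsetSum]

theorem coeff_topPoly_of_lt {d j : ℕ} (hj : j < d) (a : ℕ → ℝ) (l : ℝ) :
    (topPoly d a l).coeff j = a j := by
  simp [topPoly, Polynomial.finsetSum_coeff, Polynomial.coeff_X_pow, hj, hj.ne]

theorem coeff_topPoly_self (d : ℕ) (a : ℕ → ℝ) (l : ℝ) : (topPoly d a l).coeff d = l := by
  simp [topPoly, Polynomial.finsetSum_coeff, Polynomial.coeff_X_pow]

theorem natDegree_topPoly_le (d : ℕ) (a : ℕ → ℝ) (l : ℝ) : (topPoly d a l).natDegree ≤ d := by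
  refine (Polynomial.natDegree_add_le _ _).trans (max_le ?_ (Polynomial.natDegree_C_mul_X_pow_le _ _))
  refine Polynomial.natDegree_sum_le_of_forall_le _ _ fun j hj => ?_
  exact (Polynomial.natDegree_C_mul_X_pow_le _ _).trans (Finset.mem_range.1 hj).le

theorem topPoly_ne_zero (d : ℕ) (a : ℕ → ℝ) {l : ℝ} (hl : l ≠ 0) : topPoly d a l ≠ 0 := by
  intro h
  have := coeff_topPoly_self d a l
  rw [h, Polynomial.coeff_zero] at this
  exact hl this.symm

theorem rootMultiplicity_topPoly_le (d : ℕ) (a : ℕ → ℝ) (l u : ℝ) :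
    (topPoly d a l).rootMultiplicity u ≤ d := by
  classical
  rw [← Polynomial.count_roots]
  exact ((Multiset.count_le_card _ _).trans (Polynomial.card_roots' _)).trans
    (natDegree_topPoly_le d a l)

theorem coeff_of_rootMultiplicity_topPoly {d : ℕ} {a : ℕ → ℝ} {l : ℝ} (hl : l ≠ 0) {u : ℝ}
    (h : (topPoly d a l).rootMultiplicity u = d) {j : ℕ} (hj : j < d) :
    a j = l * ((-u) ^ (d - j) * d.choose j) := by
  have hdvd : (Polynomial.X - Polynomial.C u) ^ d ∣ topPoly d a l :=
    (Polynomial.le_rootMultiplicity_iff (topPoly_ne_zero d a hl)).1 h.ge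
  have hdeg : (topPoly d a l).natDegree = d :=
    le_antisymm (natDegree_topPoly_le d a l)
      (Polynomial.le_natDegree_of_ne_zero (by rwa [coeff_topPoly_self]))
  have hlead : (topPoly d a l).leadingCoeff = l := by
    rw [Polynomial.leadingCoeff, hdeg, coeff_topPoly_self]
  have heq := Polynomial.eq_leadingCoeff_mul_of_monic_of_dvd_of_natDegree_le
    ((Polynomial.monic_X_sub_C u).pow d) hdvd (by simp [hdeg])
  have h1 := congrArg (fun P => P.coeff j) heq
  rw [sub_eq_add_neg, ← Polynomial.C_neg] at h1
  simp only [coeff_topPoly_of_lt hj, hlead, Polynomial.coeff_C_mul,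
    Polynomial.coeff_X_add_C_pow] at h1
  exact h1

/-- If one of the polynomials has no subleading term and one of them is not a pure power, then the
total multiplicity at any point is less than the total degree. -/
theorem sum_rootMultiplicity_lt {ι : Type*} [Fintype ι] {d : ι → ℕ} {a : ι → ℕ → ℝ}
    {l : ι → ℝ} (hl : ∀ i, l i ≠ 0) {i₁ : ι} {m : ℕ} (hm : d i₁ = m + 1) (ha : a i₁ m = 0)
    (hne : ∃ i, ∃ j < d i, a i j ≠ 0) (u : ℝ) :
    ∑ i, (topPoly (d i) (a i) (l i)).rootMultiplicity u < ∑ i, d i := by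
  refine lt_of_le_of_ne (Finset.sum_le_sum fun i _ =>
    rootMultiplicity_topPoly_le _ _ _ u) fun heq => ?_
  have h1 := (Finset.sum_eq_sum_iff_of_le fun i _ =>
    rootMultiplicity_topPoly_le (d i) (a i) (l i) u).1 heq
  have hu : u = 0 := by
    have h2 := coeff_of_rootMultiplicity_topPoly (hl i₁) (h1 i₁ (Finset.mem_univ _))
      (j := m) (by omega)
    rw [ha, hm, Nat.add_sub_cancel_left, pow_one] at h2
    have h3 : ((m + 1).choose m : ℝ) ≠ 0 := by
      exact_mod_cast (Nat.choose_pos (Nat.le_succ m)).ne'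
    have h4 := (mul_eq_zero.1 h2.symm).resolve_left (hl i₁)
    simpa using (mul_eq_zero.1 h4).resolve_right h3
  obtain ⟨i, j, hj, hne⟩ := hne
  have h2 := coeff_of_rootMultiplicity_topPoly (hl i) (h1 i (Finset.mem_univ _)) hj
  rw [hu, neg_zero, zero_pow (by omega), zero_mul, mul_zero] at h2
  exact hne h2

theorem RegularOrder.of_eval {F : ℝ × ℝ → ℝ} (hF : AnalyticAt ℝ F 0) {P : Polynomial ℝ}
    (hP : P ≠ 0) {u₀ : ℝ} (h : ∀ᶠ u in 𝓝 (0 : ℝ), F (0, u) = P.eval (u₀ + u)) :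
    RegularOrder F (P.rootMultiplicity u₀) := by
  obtain ⟨R, hR, hR0⟩ := Polynomial.exists_eq_pow_rootMultiplicity_mul_and_not_dvd P hP u₀
  refine ⟨hF, fun u => R.eval (u₀ + u), ?_, ?_, ?_⟩
  · exact (R.continuous.comp (continuous_const.add continuous_id)).continuousAt
  · rw [Polynomial.dvd_iff_isRoot] at hR0
    simpa using hR0
  · filter_upwards [h] with u hu
    rw [hu]
    conv_lhs => rw [hR]
    simp

/-- The weight `χ_E s ^ α ∏ |F i| ^ γ i`. -/
def locWeight {ι : Type*} [Fintype ι] (F : ι → ℝ × ℝ → ℝ) (γ : ι → ℝ) (α : ℝ)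
    (E : Set (ℝ × ℝ)) : ℝ × ℝ → ENNReal :=
  E.indicator fun p => ENNReal.ofReal (p.1 ^ α * ∏ i, |F i p| ^ γ i)

/-- Near the origin in the right half plane, connected sets on which no `F i` vanishes do not meet
both `E` and its complement. -/
def Separated {ι : Type*} (F : ι → ℝ × ℝ → ℝ) (E : Set (ℝ × ℝ)) : Prop :=
  ∃ ε > (0 : ℝ), ∀ S ⊆ Ioo 0 ε ×ˢ Ioo (-ε) ε, IsPreconnected S → (∀ p ∈ S, ∀ i, F i p ≠ 0) →
    S ⊆ E ∨ Disjoint S E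

theorem Separated.comap {ι ι' : Type*} {F : ι → ℝ × ℝ → ℝ} {F' : ι' → ℝ × ℝ → ℝ}
    {E : Set (ℝ × ℝ)}
    (h : Separated F E) {Φ : ℝ × ℝ → ℝ × ℝ} (hΦ : ∀ᶠ p in 𝓝 (0 : ℝ × ℝ), ContinuousAt Φ p)
    (hΦ0 : Φ 0 = 0) (hΦpos : ∀ᶠ p in 𝓝 (0 : ℝ × ℝ), 0 < p.1 → 0 < (Φ p).1)
    (hF : ∀ᶠ p in 𝓝 (0 : ℝ × ℝ), 0 < p.1 → (∀ i, F' i p ≠ 0) → ∀ i, F i (Φ p) ≠ 0) :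
    Separated F' (Φ ⁻¹' E) := by
  obtain ⟨ε, hε, hS⟩ := h
  have hsmall : ∀ᶠ p in 𝓝 (0 : ℝ × ℝ), Φ p ∈ Ioo (-ε) ε ×ˢ Ioo (-ε) ε := by
    have : Ioo (-ε) ε ×ˢ Ioo (-ε) ε ∈ 𝓝 (Φ 0) := by
      rw [hΦ0]
      exact prod_mem_nhds (Ioo_mem_nhds (by simpa) hε) (Ioo_mem_nhds (by simpa) hε)
    exact hΦ.self_of_nhds this
  obtain ⟨η, hη, hball⟩ := Metric.eventually_nhds_iff_ball.1
    ((hΦ.and hΦpos).and (hF.and hsmall))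
  have hbox : ∀ p ∈ Ioo 0 η ×ˢ Ioo (-η) η, p ∈ Metric.ball (0 : ℝ × ℝ) η := by
    intro p hp
    have h3 := hp.1
    have h4 := hp.2
    rw [mem_Ioo] at h3 h4
    rw [mem_ball_zero_iff, Prod.norm_def, max_lt_iff, Real.norm_eq_abs, Real.norm_eq_abs]
    exact ⟨abs_lt.2 ⟨by linarith, by linarith⟩, abs_lt.2 h4⟩
  refine ⟨η, hη, fun S hSη hSc hSF => ?_⟩
  have hk := fun p (hp : p ∈ S) => hball p (hbox p (hSη hp))
  have hpos := fun p (hp : p ∈ S) => (hSη hp).1.1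
  have himg := hS (Φ '' S) (by
      rintro _ ⟨p, hp, rfl⟩
      exact ⟨⟨(hk p hp).1.2 (hpos p hp), (hk p hp).2.2.1.2⟩, (hk p hp).2.2.2⟩)
    (hSc.image Φ fun p hp => (hk p hp).1.1.continuousWithinAt)
    (by
      rintro _ ⟨p, hp, rfl⟩
      exact (hk p hp).2.1 (hpos p hp) (hSF p hp))
  rcases himg with h | h
  · exact .inl (image_subset_iff.1 h)
  · exact .inr (disjoint_image_left.1 h)

theorem isPreconnected_wedge {k : ℝ → ℝ} {ε c r : ℝ} (hε : ε = 1 ∨ ε = -1)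
    (hk : ContinuousOn k (Ioo 0 r)) (hkc : ∀ s ∈ Ioo 0 r, k s < c) :
    IsPreconnected (wedge k ε c r) := by
  have himg : wedge k ε c r = (fun z : ℝ × ℝ => (z.1, ε * ((1 - z.2) * k z.1 + z.2 * c))) ''
      (Ioo 0 r ×ˢ Ioo 0 1) := by
    have hε2 : ∀ x : ℝ, ε * (ε * x) = x := by
      rcases hε with rfl | rfl <;> intro x <;> ring
    ext p
    constructor
    · rintro ⟨h1, h2, h3⟩
      have h4 : 0 < c - k p.1 := sub_pos.2 (hkc _ h1)
      refine ⟨(p.1, (ε * p.2 - k p.1) / (c - k p.1)), ⟨h1, ?_, ?_⟩, Prod.ext rfl ?_⟩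
      · exact div_pos (by linarith) h4
      · exact (div_lt_one h4).2 (by linarith)
      · have : (1 - (ε * p.2 - k p.1) / (c - k p.1)) * k p.1 +
            (ε * p.2 - k p.1) / (c - k p.1) * c = ε * p.2 := by
          field_simp
          ring
        simp only [this, hε2]
    · rintro ⟨z, ⟨h1, h2, h3⟩, rfl⟩
      refine ⟨h1, ?_⟩
      have h4 : 0 < c - k z.1 := sub_pos.2 (hkc _ h1)
      simp only [hε2]
      constructor
      · nlinarith
      · nlinarith
  rw [himg]
  refine (isPreconnected_Ioo.prod isPreconnected_Ioo).image _ ?_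
  have hk' : ContinuousOn (fun z : ℝ × ℝ => k z.1) (Ioo 0 r ×ˢ Ioo 0 1) :=
    hk.comp continuousOn_fst fun z hz => hz.1
  exact continuousOn_fst.prodMk (continuousOn_const.mul
    (((continuousOn_const.sub continuousOn_snd).mul hk').add
      (continuousOn_snd.mul continuousOn_const)))

theorem rpow_le_max_mul_rpow {a b t x : ℝ} (ha : 0 < a) (ht : 0 < t) (h1 : a * t ≤ x)
    (h2 : x ≤ b * t) (γ : ℝ) : x ^ γ ≤ max (a ^ γ) (b ^ γ) * t ^ γ := by
  have hx : 0 < x := (mul_pos ha ht).trans_le h1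
  have hb : 0 < b := pos_of_mul_pos_left (hx.trans_le h2) ht.le
  have htγ := Real.rpow_pos_of_pos ht γ
  rcases le_total 0 γ with hγ | hγ
  · calc x ^ γ ≤ (b * t) ^ γ := Real.rpow_le_rpow hx.le h2 hγ
      _ = b ^ γ * t ^ γ := Real.mul_rpow hb.le ht.le
      _ ≤ _ := by gcongr; exact le_max_right _ _
  · calc x ^ γ ≤ (a * t) ^ γ := Real.rpow_le_rpow_of_nonpos (mul_pos ha ht) h1 hγ
      _ = a ^ γ * t ^ γ := Real.mul_rpow ha.le ht.le
      _ ≤ _ := by gcongr; exact le_max_left _ _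

theorem exists_prod_rpow_le {ι : Type*} [Fintype ι] (γ : ι → ℝ) (d : ι → ℕ) {a b : ℝ}
    (ha : 0 < a) :
    ∃ C : ℝ, 0 < C ∧ ∀ (t : ℝ) (x : ι → ℝ), 0 < t →
      (∀ i, a * t ^ d i ≤ x i ∧ x i ≤ b * t ^ d i) →
      ∏ i, x i ^ γ i ≤ C * t ^ (∑ i, d i * γ i) ∧ t ^ (∑ i, d i * γ i) ≤ C * ∏ i, x i ^ γ i := by
  refine ⟨max (∏ i, max (a ^ γ i) (b ^ γ i)) (∏ i, max (b⁻¹ ^ γ i) (a⁻¹ ^ γ i)), ?_, ?_⟩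
  · refine lt_max_of_lt_left (Finset.prod_pos fun i _ => lt_max_of_lt_left ?_)
    exact Real.rpow_pos_of_pos ha _
  intro t x ht hx
  have hprod : t ^ (∑ i, d i * γ i) = ∏ i, (t ^ d i) ^ γ i := by
    rw [Real.rpow_sum_of_pos ht]
    refine Finset.prod_congr rfl fun i _ => ?_
    rw [← Real.rpow_natCast, ← Real.rpow_mul ht.le]
  have hx0 : ∀ i, 0 < x i := fun i => (mul_pos ha (pow_pos ht _)).trans_le (hx i).1
  rw [hprod]
  constructor
  · calc ∏ i, x i ^ γ i ≤ ∏ i, (max (a ^ γ i) (b ^ γ i) * (t ^ d i) ^ γ i) :=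
          Finset.prod_le_prod (fun i _ => Real.rpow_nonneg (hx0 i).le _) fun i _ =>
            rpow_le_max_mul_rpow ha (pow_pos ht _) (hx i).1 (hx i).2 _
      _ = (∏ i, max (a ^ γ i) (b ^ γ i)) * ∏ i, (t ^ d i) ^ γ i := Finset.prod_mul_distrib
      _ ≤ _ := by
          refine mul_le_mul_of_nonneg_right (le_max_left _ _) ?_
          exact Finset.prod_nonneg fun i _ => Real.rpow_nonneg (pow_pos ht _).le _
  · calc ∏ i, (t ^ d i) ^ γ i ≤ ∏ i, (max (b⁻¹ ^ γ i) (a⁻¹ ^ γ i) * x i ^ γ i) :=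
          Finset.prod_le_prod (fun i _ => Real.rpow_nonneg (pow_pos ht _).le _) fun i _ => by
            have hb : 0 < b := pos_of_mul_pos_left ((hx0 i).trans_le (hx i).2) (pow_pos ht _).le
            refine rpow_le_max_mul_rpow (inv_pos.2 hb) (hx0 i) ?_ ?_ _
            · rw [inv_mul_le_iff₀ hb]; exact (hx i).2
            · rw [le_inv_mul_iff₀ ha]; exact (hx i).1
      _ = (∏ i, max (b⁻¹ ^ γ i) (a⁻¹ ^ γ i)) * ∏ i, x i ^ γ i := Finset.prod_mul_distrib
      _ ≤ _ := by
          refine mul_le_mul_of_nonneg_right (le_max_right _ _) ?_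
          exact Finset.prod_nonneg fun i _ => Real.rpow_nonneg (hx0 i).le _

/-- On a wedge where every `F i` is of the size of `|y| ^ d i`, the weight has a gauge. -/
theorem exists_gauge_wedge {ι : Type*} [Fintype ι] {F : ι → ℝ × ℝ → ℝ} (γ : ι → ℝ) (α : ℝ)
    {E : Set (ℝ × ℝ)} (hsep : Separated F E) {k : ℝ → ℝ} (hk : Continuous k)
    (hk0 : k 0 = 0) (hkn : ∀ s, 0 < s → 0 ≤ k s) {ε : ℝ} (hε : ε = 1 ∨ ε = -1) {d : ι → ℕ}
    {a b ε₀ : ℝ} (ha : 0 < a) (hε₀ : 0 < ε₀)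
    (hF : ∀ p ∈ wedge k ε ε₀ ε₀, ∀ i, a * |p.2| ^ d i ≤ |F i p| ∧ |F i p| ≤ b * |p.2| ^ d i)
    (hmono : ∃ φ, IsGauge φ ∧ ∀ c, 0 < c → Comparable (fun r => ∫⁻ p in wedge k ε c r,
      ENNReal.ofReal (p.1 ^ α * |p.2| ^ (∑ i, d i * γ i))) φ) :
    ∃ φ, IsGauge φ ∧ ∃ c₀ > (0 : ℝ), ∀ c, 0 < c → c < c₀ →
      Comparable (fun r => ∫⁻ p in wedge k ε c r, locWeight F γ α E p) φ := by
  obtain ⟨ε₁, hε₁, hS⟩ := hsep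
  set c₀ := min ε₀ ε₁ with hc₀
  have hc₀0 : 0 < c₀ := lt_min hε₀ hε₁
  obtain ⟨r₁, hr₁, hkr⟩ : ∃ r₁ > (0 : ℝ), ∀ s ∈ Ioo 0 r₁, k s < c₀ := by
    have : ∀ᶠ s in 𝓝 (0 : ℝ), k s < c₀ := by
      have h1 := hk.tendsto 0
      rw [hk0] at h1
      exact h1.eventually_lt_const hc₀0
    obtain ⟨η, hη, hball⟩ := Metric.eventually_nhds_iff_ball.1 this
    refine ⟨η, hη, fun s hs => hball s ?_⟩
    rw [mem_ball_zero_iff, Real.norm_eq_abs, abs_of_pos hs.1]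
    exact hs.2
  set r₀ := min r₁ c₀ with hr₀
  have hr₀0 : 0 < r₀ := lt_min hr₁ hc₀0
  have hεabs : |ε| = 1 := by rcases hε with rfl | rfl <;> simp
  have hsub : ∀ c r, c ≤ c₀ → r ≤ r₀ → wedge k ε c r ⊆ wedge k ε c₀ r₀ :=
    fun c r hc hr p hp => ⟨⟨hp.1.1, hp.1.2.trans_le hr⟩, hp.2.1, hp.2.2.trans_le hc⟩
  have hsub' : wedge k ε c₀ r₀ ⊆ wedge k ε ε₀ ε₀ :=
    fun p hp => ⟨⟨hp.1.1, hp.1.2.trans_le ((min_le_right _ _).trans (min_le_left _ _))⟩,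
      hp.2.1, hp.2.2.trans_le (min_le_left _ _)⟩
  have hy : ∀ c r, ∀ p ∈ wedge k ε c r, 0 < |p.2| ∧ |p.2| < c := by
    intro c r p hp
    have h1 : 0 < ε * p.2 := (hkn _ hp.1.1).trans_lt hp.2.1
    have h2 : |p.2| = ε * p.2 := by
      rw [← abs_of_pos h1, abs_mul, hεabs, one_mul]
    rw [h2]
    exact ⟨h1, hp.2.2⟩
  have hdich := hS (wedge k ε c₀ r₀)
    (fun p hp => ⟨⟨hp.1.1, hp.1.2.trans_le ((min_le_right _ _).trans (min_le_right _ _))⟩,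
      abs_lt.1 ((hy _ _ p hp).2.trans_le (min_le_right _ _))⟩)
    (isPreconnected_wedge hε hk.continuousOn
      fun s hs => hkr s ⟨hs.1, hs.2.trans_le (min_le_left _ _)⟩)
    (fun p hp i => by
      have h1 := (hF p (hsub' hp) i).1
      have h2 := mul_pos ha (pow_pos (hy _ _ p hp).1 (d i))
      exact abs_pos.1 (h2.trans_le h1))
  have hmeas := fun c r => measurableSet_wedge hk.measurable ε c r
  rcases hdich with hE | hE
  · obtain ⟨φ, hφ, hφc⟩ := hmono
    obtain ⟨C, hC, hCb⟩ := exists_prod_rpow_le γ d (b := b) ha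
    refine ⟨φ, hφ, c₀, hc₀0, fun c hc hcc => Comparable.trans ?_ (hφc c hc)⟩
    have hval : ∀ r ≤ r₀, ∀ p ∈ wedge k ε c r,
        locWeight F γ α E p = ENNReal.ofReal (p.1 ^ α * ∏ i, |F i p| ^ γ i) ∧
        ∏ i, |F i p| ^ γ i ≤ C * |p.2| ^ (∑ i, d i * γ i) ∧
        |p.2| ^ (∑ i, d i * γ i) ≤ C * ∏ i, |F i p| ^ γ i := by
      intro r hr p hp
      have h1 := hsub c r hcc.le hr hp
      exact ⟨indicator_of_mem (hE h1) _, hCb _ _ (hy _ _ p hp).1 (hF p (hsub' h1))⟩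
    have hcoe : ((C.toNNReal : NNReal) : ENNReal) = ENNReal.ofReal C := rfl
    constructor
    · refine ⟨C.toNNReal, ?_⟩
      filter_upwards [eventually_lt_nhdsGT_zero hr₀0] with r hr
      rw [← lintegral_const_mul' _ _ ENNReal.coe_ne_top]
      refine setLIntegral_mono' (hmeas c r) fun p hp => ?_
      obtain ⟨h1, h2, -⟩ := hval r hr.le p hp
      have h3 := Real.rpow_nonneg hp.1.1.le α
      rw [h1, hcoe, ← ENNReal.ofReal_mul hC.le]
      refine ENNReal.ofReal_le_ofReal ?_
      calc _ ≤ p.1 ^ α * (C * |p.2| ^ (∑ i, d i * γ i)) := by gcongr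
        _ = _ := by ring
    · refine ⟨C.toNNReal, ?_⟩
      filter_upwards [eventually_lt_nhdsGT_zero hr₀0] with r hr
      rw [← lintegral_const_mul' _ _ ENNReal.coe_ne_top]
      refine setLIntegral_mono' (hmeas c r) fun p hp => ?_
      obtain ⟨h1, -, h2⟩ := hval r hr.le p hp
      have h3 := Real.rpow_nonneg hp.1.1.le α
      rw [h1, hcoe, ← ENNReal.ofReal_mul hC.le]
      refine ENNReal.ofReal_le_ofReal ?_
      calc _ ≤ p.1 ^ α * (C * ∏ i, |F i p| ^ γ i) := by gcongr
        _ = _ := by ring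
  · refine ⟨0, .inl rfl, c₀, hc₀0, fun c hc hcc => .of_eventuallyEq ?_⟩
    filter_upwards [eventually_lt_nhdsGT_zero hr₀0] with r hr
    have h0 : ∫⁻ p in wedge k ε c r, locWeight F γ α E p = ∫⁻ _ in wedge k ε c r, 0 :=
      setLIntegral_congr_fun (hmeas c r) fun p hp =>
        indicator_of_notMem (disjoint_left.1 hE (hsub c r hcc.le hr.le hp)) _
    rw [h0]
    simp

theorem exists_pos_forall_le {ι : Type*} [Finite ι] {x : ι → ℝ} (hx : ∀ i, 0 < x i) :
    ∃ a > (0 : ℝ), ∀ i, a ≤ x i := by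
  obtain ⟨a, h1, h2⟩ := ((Filter.eventually_all.2 fun i =>
    eventually_lt_nhdsGT_zero (hx i)).and self_mem_nhdsWithin).exists
  exact ⟨a, h2, fun i => (h1 i).le⟩

theorem exists_forall_le_real {ι : Type*} [Fintype ι] {x : ι → ℝ} (hx : ∀ i, 0 ≤ x i) :
    ∃ b : ℝ, ∀ i, x i ≤ b :=
  ⟨∑ i, x i, fun i => Finset.single_le_sum (fun i _ => hx i) (Finset.mem_univ i)⟩

/-- A wedge on which every `F i` is close to a constant multiple of a power of `y`. -/
theorem exists_gauge_wedge_of_close {ι : Type*} [Fintype ι] {F : ι → ℝ × ℝ → ℝ} (γ : ι → ℝ)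
    (α : ℝ) {E : Set (ℝ × ℝ)} (hsep : Separated F E) {k : ℝ → ℝ} (hk : Continuous k)
    (hk0 : k 0 = 0) (hkn : ∀ s, 0 < s → 0 ≤ k s) {ε : ℝ} (hε : ε = 1 ∨ ε = -1) {d : ι → ℕ}
    {l : ι → ℝ} (hl : ∀ i, l i ≠ 0) {ε₀ : ℝ} (hε₀ : 0 < ε₀)
    (hF : ∀ q : ℝ × ℝ, q.1 ∈ Ioo 0 ε₀ → |q.2| < ε₀ → k q.1 < |q.2| →
      ∀ i, |F i q - q.2 ^ d i * l i| ≤ |l i| / 2 * |q.2| ^ d i)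
    (hmono : ∃ φ, IsGauge φ ∧ ∀ c, 0 < c → Comparable (fun r => ∫⁻ p in wedge k ε c r,
      ENNReal.ofReal (p.1 ^ α * |p.2| ^ (∑ i, d i * γ i))) φ) :
    ∃ φ, IsGauge φ ∧ ∃ c₀ > (0 : ℝ), ∀ c, 0 < c → c < c₀ →
      Comparable (fun r => ∫⁻ p in wedge k ε c r, locWeight F γ α E p) φ := by
  obtain ⟨a, ha, hal⟩ := exists_pos_forall_le (x := fun i => |l i| / 2)
    fun i => by have := abs_pos.2 (hl i); positivity
  obtain ⟨b, hb⟩ := exists_forall_le_real (x := fun i => 3 / 2 * |l i|) fun i => by positivity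
  refine exists_gauge_wedge γ α hsep hk hk0 hkn hε (a := a) (b := b) ha hε₀ ?_ hmono
  intro q hq i
  have hεabs : |ε| = 1 := by rcases hε with rfl | rfl <;> simp
  have h1 : 0 < ε * q.2 := (hkn _ hq.1.1).trans_lt hq.2.1
  have h2 : |q.2| = ε * q.2 := by
    rw [← abs_of_pos h1, abs_mul, hεabs, one_mul]
  have h3 := hF q hq.1 (by rw [h2]; exact hq.2.2) (by rw [h2]; exact hq.2.1) i
  have h4 : |q.2 ^ d i * l i| = |l i| * |q.2| ^ d i := by rw [abs_mul, abs_pow, mul_comm]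
  have h5 : 0 ≤ |q.2| ^ d i := by positivity
  have h6 := abs_sub_abs_le_abs_sub (F i q) (q.2 ^ d i * l i)
  have h7 := abs_sub_abs_le_abs_sub (q.2 ^ d i * l i) (F i q)
  rw [abs_sub_comm] at h7
  constructor
  · calc a * |q.2| ^ d i ≤ |l i| / 2 * |q.2| ^ d i := by gcongr; exact hal i
      _ ≤ |F i q| := by linarith
  · calc |F i q| ≤ 3 / 2 * |l i| * |q.2| ^ d i := by linarith
      _ ≤ b * |q.2| ^ d i := by gcongr; exact hb i

theorem mem_ball_zero_prod {p : ℝ × ℝ} {η : ℝ} (h1 : |p.1| < η) (h2 : |p.2| < η) :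
    p ∈ Metric.ball (0 : ℝ × ℝ) η := by
  rw [mem_ball_zero_iff, Prod.norm_def, max_lt_iff]
  exact ⟨h1, h2⟩

theorem volume_snd_eq_zero : volume {p : ℝ × ℝ | p.2 = 0} = 0 := by
  have : {p : ℝ × ℝ | p.2 = 0} = univ ×ˢ {0} := by ext; simp
  rw [this, Measure.volume_eq_prod, Measure.prod_prod]
  simp

/-- The normal crossings case. -/
theorem hasGauge_of_normal_crossings {ι : Type*} [Fintype ι] {F U : ι → ℝ × ℝ → ℝ} {d : ι → ℕ}
    (γ : ι → ℝ) (α : ℝ) {E : Set (ℝ × ℝ)} (hsep : Separated F E)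
    (hU : ∀ i, ContinuousAt (U i) 0) (hU0 : ∀ i, U i 0 ≠ 0)
    (hF : ∀ i, ∀ᶠ p in 𝓝 (0 : ℝ × ℝ), F i p = p.2 ^ d i * U i p) :
    HasGauge (locWeight F γ α E) := by
  have hclose : ∀ᶠ p in 𝓝 (0 : ℝ × ℝ), ∀ i,
      |F i p - p.2 ^ d i * U i 0| ≤ |U i 0| / 2 * |p.2| ^ d i := by
    refine Filter.eventually_all.2 fun i => ?_
    have h1 : ∀ᶠ p in 𝓝 (0 : ℝ × ℝ), |U i p - U i 0| < |U i 0| / 2 := by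
      have := ((hU i).tendsto.sub_const (U i 0)).abs
      rw [sub_self, abs_zero] at this
      exact this.eventually_lt_const (by have := abs_pos.2 (hU0 i); positivity)
    filter_upwards [h1, hF i] with p h2 h3
    rw [h3, ← mul_sub, abs_mul, abs_pow, mul_comm]
    gcongr
  obtain ⟨ε₀, hε₀, hball⟩ := Metric.eventually_nhds_iff_ball.1 hclose
  have hw : ∀ ε : ℝ, (ε = 1 ∨ ε = -1) → ∃ φ, IsGauge φ ∧ ∃ c₀ > (0 : ℝ), ∀ c, 0 < c → c < c₀ →
      Comparable (fun r => ∫⁻ p in wedge (fun _ => 0) ε c r, locWeight F γ α E p) φ :=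
    fun ε hε => exists_gauge_wedge_of_close γ α hsep continuous_const rfl (fun _ _ => le_rfl) hε
      hU0 hε₀ (fun q h1 h2 _ => hball q (mem_ball_zero_prod
        (by rw [abs_of_pos h1.1]; exact h1.2) h2)) (exists_gauge_wedge_zero α _ hε)
  let sgn : Bool → ℝ := fun b => if b then 1 else -1
  have hsgn : ∀ b, sgn b = 1 ∨ sgn b = -1 := by intro b; cases b <;> simp [sgn]
  choose φ hφ c₀ hc₀ hφc using fun b => hw (sgn b) (hsgn b)
  obtain ⟨χ, hχ, hχc⟩ := exists_gauge_sum Finset.univ fun b _ => hφ b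
  refine ⟨χ, hχ, min (c₀ true) (c₀ false), lt_min (hc₀ _) (hc₀ _), fun c h0 h1 => ?_⟩
  have hcc : ∀ b, c < c₀ b := by
    intro b
    cases b
    · exact h1.trans_le (min_le_right _ _)
    · exact h1.trans_le (min_le_left _ _)
  refine Comparable.trans ?_ ((Comparable.sum_congr fun b _ => hφc b c h0 (hcc b)).trans hχc)
  refine comparable_sum_setLIntegral ?_ ?_
  · intro b _
    refine Filter.Eventually.of_forall fun r p hp => ⟨hp.1, ?_⟩
    have h2 := hp.2
    rw [mem_Ioo] at h2 ⊢
    cases b <;> simp only [sgn] at h2 <;> constructor <;> norm_num at h2 <;> linarith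
  · refine Filter.Eventually.of_forall fun r => measure_mono_null ?_ volume_snd_eq_zero
    rintro p ⟨⟨hp1, hp2⟩, hp⟩
    by_contra hne
    rw [mem_Ioo] at hp2
    refine hp ?_
    simp only [Finset.mem_univ, iUnion_true, mem_iUnion]
    rcases lt_or_gt_of_ne hne with h | h
    · exact ⟨false, hp1, by simp only [sgn, mem_Ioo]; norm_num; constructor <;> linarith⟩
    · exact ⟨true, hp1, by simp only [sgn, mem_Ioo]; norm_num; constructor <;> linarith⟩

/-- Above the Newton slope the Taylor remainders dominate. -/
theorem exists_close_above_slope {ι : Type*} [Fintype ι] {F U : ι → ℝ × ℝ → ℝ} {d : ι → ℕ}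
    {c b : ι → ℕ → ℝ → ℝ} (hT : ∀ i, TaylorForm (F i) (d i) (c i) (U i))
    (hU0 : ∀ i, U i 0 ≠ 0) {p Q : ℕ} (hQ : 0 < Q)
    (hb : ∀ i j, AnalyticAt ℝ (b i j) 0)
    (hcb : ∀ i, ∀ j < d i, ∀ᶠ σ in 𝓝 (0 : ℝ),
      c i j (σ ^ Q) = σ ^ (p * (d i - j)) * b i j σ) :
    ∃ M > (0 : ℝ), ∃ ε₀ > (0 : ℝ), ∀ q : ℝ × ℝ, q.1 ∈ Ioo 0 ε₀ → |q.2| < ε₀ →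
      M * q.1 ^ ((p : ℝ) / Q) < |q.2| →
      ∀ i, |F i q - q.2 ^ d i * U i 0| ≤ |U i 0| / 2 * |q.2| ^ d i := by
  have hQ' : (0 : ℝ) < Q := by exact_mod_cast hQ
  set B : ℝ := 1 + ∑ i, ∑ j ∈ Finset.range (d i), |b i j 0| with hB
  have hB0 : 0 < B := by positivity
  have hbB : ∀ᶠ σ in 𝓝 (0 : ℝ), ∀ i, ∀ j ∈ Finset.range (d i), |b i j σ| ≤ B := by
    refine Filter.eventually_all.2 fun i => (Filter.eventually_all_finset _).2 fun j hj => ?_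
    have h1 : |b i j 0| < B := by
      have h2 : |b i j 0| ≤ ∑ j ∈ Finset.range (d i), |b i j 0| :=
        Finset.single_le_sum (f := fun j => |b i j 0|) (fun _ _ => abs_nonneg _) hj
      have h3 : ∑ j ∈ Finset.range (d i), |b i j 0| ≤
          ∑ i, ∑ j ∈ Finset.range (d i), |b i j 0| :=
        Finset.single_le_sum (f := fun i => ∑ j ∈ Finset.range (d i), |b i j 0|)
          (fun _ _ => Finset.sum_nonneg fun _ _ => abs_nonneg _) (Finset.mem_univ i)
      linarith
    exact ((hb i j).continuousAt.abs.eventually_lt continuousAt_const h1).mono fun _ h => h.le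
  have hcb' : ∀ᶠ σ in 𝓝 (0 : ℝ), ∀ i, ∀ j ∈ Finset.range (d i),
      c i j (σ ^ Q) = σ ^ (p * (d i - j)) * b i j σ :=
    Filter.eventually_all.2 fun i => (Filter.eventually_all_finset _).2 fun j hj =>
      hcb i j (Finset.mem_range.1 hj)
  have hroot : ∀ᶠ s in 𝓝[>] (0 : ℝ), ∀ i, ∀ j ∈ Finset.range (d i),
      |c i j s| ≤ B * (s ^ ((p : ℝ) / Q)) ^ (d i - j) := by
    have ht := tendsto_rpow_nhdsGT_zero_real (κ := 1 / (Q : ℝ)) (by positivity)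
    filter_upwards [self_mem_nhdsWithin, ht.eventually hbB, ht.eventually hcb'] with s hs h1 h2
    intro i j hj
    have hs : 0 < s := hs
    have h3 : (s ^ (1 / (Q : ℝ))) ^ Q = s := by
      rw [← Real.rpow_natCast, ← Real.rpow_mul hs.le, one_div_mul_cancel hQ'.ne', Real.rpow_one]
    have h4 : (s ^ (1 / (Q : ℝ))) ^ p = s ^ ((p : ℝ) / Q) := by
      rw [← Real.rpow_natCast, ← Real.rpow_mul hs.le, one_div_mul_eq_div]
    have h5 := h2 i j hj
    rw [h3, pow_mul, h4] at h5
    have h6 := Real.rpow_pos_of_pos hs ((p : ℝ) / Q)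
    rw [h5, abs_mul, abs_of_pos (pow_pos h6 _), mul_comm]
    gcongr
    exact h1 i j hj
  set M : ℝ := 1 + ∑ i, 4 * d i * B / |U i 0| with hM
  have hM1 : 1 ≤ M := by
    rw [hM]
    have : 0 ≤ ∑ i, 4 * d i * B / |U i 0| := Finset.sum_nonneg fun i _ => by positivity
    linarith
  have hMi : ∀ i, d i * B / M ≤ |U i 0| / 4 := by
    intro i
    have h1 : 4 * d i * B / |U i 0| ≤ M := by
      have : 4 * d i * B / |U i 0| ≤ ∑ i, 4 * d i * B / |U i 0| :=
        Finset.single_le_sum (f := fun i => 4 * d i * B / |U i 0|)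
          (fun i _ => by positivity) (Finset.mem_univ i)
      linarith
    have h2 := abs_pos.2 (hU0 i)
    rw [div_le_iff₀ h2] at h1
    rw [div_le_iff₀ (by linarith)]
    linarith
  have hT' : ∀ᶠ q in 𝓝 (0 : ℝ × ℝ), ∀ i, |U i q - U i 0| < |U i 0| / 4 ∧
      F i q = ∑ j ∈ Finset.range (d i), c i j q.1 * q.2 ^ j + q.2 ^ d i * U i q := by
    refine Filter.eventually_all.2 fun i => Filter.Eventually.and ?_ (hT i).eq
    have := ((hT i).rem.continuousAt.tendsto.sub_const (U i 0)).abs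
    rw [sub_self, abs_zero] at this
    exact this.eventually_lt_const (by have := abs_pos.2 (hU0 i); positivity)
  obtain ⟨η₁, hη₁, hball⟩ := Metric.eventually_nhds_iff_ball.1 hT'
  obtain ⟨η₂, hη₂, hIoo⟩ := mem_nhdsGT_iff_exists_Ioo_subset.1 hroot
  have hη₂ : 0 < η₂ := hη₂
  refine ⟨M, by linarith, min η₁ η₂, lt_min hη₁ hη₂, fun q h1 h2 h3 i => ?_⟩
  have hs : 0 < q.1 := h1.1
  obtain ⟨hU1, hF1⟩ := hball q (mem_ball_zero_prod
    (by rw [abs_of_pos hs]; exact h1.2.trans_le (min_le_left _ _))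
    (h2.trans_le (min_le_left _ _))) i
  have hc1 := hIoo ⟨hs, h1.2.trans_le (min_le_right _ _)⟩ i
  set t := q.1 ^ ((p : ℝ) / Q) with ht
  have ht0 : 0 < t := Real.rpow_pos_of_pos hs _
  have hty : t ≤ |q.2| / M := by
    rw [le_div_iff₀ (by linarith)]
    linarith
  have hterm : ∀ j ∈ Finset.range (d i), |c i j q.1 * q.2 ^ j| ≤ B / M * |q.2| ^ d i := by
    intro j hj
    have hjd := Finset.mem_range.1 hj
    obtain ⟨m, hm⟩ : ∃ m, d i - j = m + 1 := ⟨d i - j - 1, by omega⟩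
    have hd : d i = m + 1 + j := by omega
    have h4 : t ^ (d i - j) ≤ |q.2| ^ (d i - j) / M := by
      calc t ^ (d i - j) ≤ (|q.2| / M) ^ (d i - j) := by gcongr
        _ = |q.2| ^ (d i - j) / M ^ (d i - j) := div_pow _ _ _
        _ ≤ |q.2| ^ (d i - j) / M := by
          gcongr
          rw [hm]
          exact le_self_pow₀ hM1 (by omega)
    rw [abs_mul, abs_pow]
    calc |c i j q.1| * |q.2| ^ j ≤ B * (|q.2| ^ (d i - j) / M) * |q.2| ^ j := by
          gcongr
          exact (hc1 j hj).trans (by gcongr)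
      _ = B / M * (|q.2| ^ (d i - j) * |q.2| ^ j) := by ring
      _ = B / M * |q.2| ^ d i := by rw [← pow_add, Nat.sub_add_cancel hjd.le]
  have hsum : |∑ j ∈ Finset.range (d i), c i j q.1 * q.2 ^ j| ≤ |U i 0| / 4 * |q.2| ^ d i := by
    calc _ ≤ ∑ j ∈ Finset.range (d i), |c i j q.1 * q.2 ^ j| := Finset.abs_sum_le_sum_abs _ _
      _ ≤ ∑ j ∈ Finset.range (d i), B / M * |q.2| ^ d i := Finset.sum_le_sum hterm
      _ = d i * B / M * |q.2| ^ d i := by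
          rw [Finset.sum_const, Finset.card_range, nsmul_eq_mul]; ring
      _ ≤ _ := mul_le_mul_of_nonneg_right (hMi i) (by positivity)
  have heq : F i q - q.2 ^ d i * U i 0 =
      ∑ j ∈ Finset.range (d i), c i j q.1 * q.2 ^ j + q.2 ^ d i * (U i q - U i 0) := by
    rw [hF1]; ring
  rw [heq]
  refine (abs_add_le _ _).trans ?_
  have h5 : |q.2 ^ d i * (U i q - U i 0)| ≤ |U i 0| / 4 * |q.2| ^ d i := by
    rw [abs_mul, abs_pow, mul_comm]
    gcongr
  linarith

theorem HasGauge.const_mul {w : ℝ × ℝ → ENNReal} (h : HasGauge w) {C : ℝ} (hC : 0 < C) :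
    HasGauge fun p => ENNReal.ofReal C * w p := by
  obtain ⟨φ, hφ, c₀, hc₀, hc⟩ := h
  refine ⟨φ, hφ, c₀, hc₀, fun c h0 h1 => Comparable.trans ?_ (hc c h0 h1)⟩
  have heq : boxIntegral (fun p => ENNReal.ofReal C * w p) c =
      fun r => ENNReal.ofReal C * boxIntegral w c r := by
    funext r
    exact lintegral_const_mul' _ _ ENNReal.ofReal_ne_top
  rw [heq]
  refine ⟨⟨C.toNNReal, Filter.Eventually.of_forall fun _ => le_rfl⟩,
    C⁻¹.toNNReal, Filter.Eventually.of_forall fun r => ?_⟩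
  have hcoe : ((C⁻¹.toNNReal : NNReal) : ENNReal) = ENNReal.ofReal C⁻¹ := rfl
  rw [hcoe, ← mul_assoc, ← ENNReal.ofReal_mul (by positivity), inv_mul_cancel₀ hC.ne',
    ENNReal.ofReal_one, one_mul]

/-- The strict transform of a Taylor form under `(σ, u) ↦ (σ ^ Q, σ ^ p (u₀ + u))`. -/
def strictTransform (d : ℕ) (b : ℕ → ℝ → ℝ) (U : ℝ × ℝ → ℝ) (Q p : ℕ) (u₀ : ℝ) (z : ℝ × ℝ) : ℝ :=
  ∑ j ∈ Finset.range d, b j z.1 * (u₀ + z.2) ^ j +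
    (u₀ + z.2) ^ d * U (z.1 ^ Q, z.1 ^ p * (u₀ + z.2))

theorem analyticAt_blow (Q p : ℕ) (u₀ : ℝ) (z : ℝ × ℝ) :
    AnalyticAt ℝ (fun z : ℝ × ℝ => (z.1 ^ Q, z.1 ^ p * (u₀ + z.2))) z :=
  (analyticAt_fst.fun_pow Q).prod
    ((analyticAt_fst.fun_pow p).fun_mul (analyticAt_const.fun_add analyticAt_snd))

theorem blow_zero {Q p : ℕ} (hQ : 0 < Q) (hp : 0 < p) (u₀ : ℝ) :
    (((0 : ℝ × ℝ).1 ^ Q, (0 : ℝ × ℝ).1 ^ p * (u₀ + (0 : ℝ × ℝ).2)) : ℝ × ℝ) = 0 := by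
  simp [hQ.ne', hp.ne']

theorem analyticAt_strictTransform {d : ℕ} {b : ℕ → ℝ → ℝ} {U : ℝ × ℝ → ℝ}
    (hb : ∀ j, AnalyticAt ℝ (b j) 0) (hU : AnalyticAt ℝ U 0) {Q p : ℕ} (hQ : 0 < Q)
    (hp : 0 < p) (u₀ : ℝ) : AnalyticAt ℝ (strictTransform d b U Q p u₀) 0 := by
  have h0 : AnalyticAt ℝ (fun z : ℝ × ℝ => u₀ + z.2) 0 := analyticAt_const.fun_add analyticAt_snd
  have h1 : AnalyticAt ℝ (fun z : ℝ × ℝ =>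
      ∑ j ∈ Finset.range d, b j z.1 * (u₀ + z.2) ^ j) 0 :=
    Finset.analyticAt_fun_sum _ fun j _ => (AnalyticAt.fun_comp (f := Prod.fst) (g := b j)
      (hb j) analyticAt_fst).fun_mul (h0.fun_pow j)
  have h2 : AnalyticAt ℝ (fun z : ℝ × ℝ => U (z.1 ^ Q, z.1 ^ p * (u₀ + z.2))) 0 :=
    AnalyticAt.fun_comp (f := fun z : ℝ × ℝ => (z.1 ^ Q, z.1 ^ p * (u₀ + z.2))) (g := U)
      (by rw [blow_zero hQ hp]; exact hU) (analyticAt_blow Q p u₀ 0)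
  exact h1.fun_add ((h0.fun_pow d).fun_mul h2)

theorem TaylorForm.comp_blow {F U : ℝ × ℝ → ℝ} {d : ℕ} {c b : ℕ → ℝ → ℝ}
    (hT : TaylorForm F d c U) {p Q : ℕ} (hQ : 0 < Q) (hp : 0 < p)
    (hcb : ∀ j < d, ∀ᶠ σ in 𝓝 (0 : ℝ), c j (σ ^ Q) = σ ^ (p * (d - j)) * b j σ) (u₀ : ℝ) :
    ∀ᶠ z in 𝓝 (0 : ℝ × ℝ), F (z.1 ^ Q, z.1 ^ p * (u₀ + z.2)) =
      z.1 ^ (p * d) * strictTransform d b U Q p u₀ z := by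
  have ht : Filter.Tendsto (fun z : ℝ × ℝ => (z.1 ^ Q, z.1 ^ p * (u₀ + z.2))) (𝓝 0) (𝓝 0) := by
    have := (analyticAt_blow Q p u₀ 0).continuousAt.tendsto
    rwa [blow_zero hQ hp] at this
  have hfst : Filter.Tendsto (fun z : ℝ × ℝ => z.1) (𝓝 0) (𝓝 0) :=
    continuous_fst.tendsto' _ _ rfl
  have hcb' : ∀ᶠ σ in 𝓝 (0 : ℝ), ∀ j ∈ Finset.range d,
      c j (σ ^ Q) = σ ^ (p * (d - j)) * b j σ :=
    (Filter.eventually_all_finset _).2 fun j hj => hcb j (Finset.mem_range.1 hj)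
  filter_upwards [ht.eventually hT.eq, hfst.eventually hcb'] with z h1 h2
  rw [h1, strictTransform, mul_add (z.1 ^ (p * d)), Finset.mul_sum]
  congr 1
  · refine Finset.sum_congr rfl fun j hj => ?_
    have hjd := (Finset.mem_range.1 hj).le
    rw [h2 j hj, mul_pow]
    have : z.1 ^ (p * d) = z.1 ^ (p * (d - j)) * (z.1 ^ p) ^ j := by
      rw [← pow_mul, ← pow_add, ← mul_add, Nat.sub_add_cancel hjd]
    rw [this]
    ring
  · rw [mul_pow, ← pow_mul]
    ring

theorem blowWeight_locWeight {ι : Type*} [Fintype ι] {F G : ι → ℝ × ℝ → ℝ} (γ : ι → ℝ) (α : ℝ)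
    (E : Set (ℝ × ℝ)) {Q p : ℕ} {u₀ : ℝ} {k : ι → ℕ} {z : ℝ × ℝ} (hz : 0 < z.1)
    (h : ∀ i, F i (z.1 ^ Q, z.1 ^ p * (u₀ + z.2)) = z.1 ^ k i * G i z) :
    ENNReal.ofReal Q * locWeight G γ ((Q - 1 : ℕ) + p + Q * α + ∑ i, k i * γ i)
        ((fun z : ℝ × ℝ => (z.1 ^ Q, z.1 ^ p * (u₀ + z.2))) ⁻¹' E) z =
      blowWeight (locWeight F γ α E) Q p u₀ z := by
  rw [blowWeight, locWeight, locWeight]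
  by_cases hE : (z.1 ^ Q, z.1 ^ p * (u₀ + z.2)) ∈ E
  · rw [indicator_of_mem hE, indicator_of_mem (by exact hE), ← ENNReal.ofReal_mul (by positivity),
      ← ENNReal.ofReal_mul (by positivity)]
    congr 1
    have h1 : ∏ i, |F i (z.1 ^ Q, z.1 ^ p * (u₀ + z.2))| ^ γ i =
        z.1 ^ (∑ i, k i * γ i) * ∏ i, |G i z| ^ γ i := by
      rw [Real.rpow_sum_of_pos hz, ← Finset.prod_mul_distrib]
      refine Finset.prod_congr rfl fun i _ => ?_
      rw [h i, abs_mul, abs_of_pos (pow_pos hz _), Real.mul_rpow (pow_pos hz _).le (abs_nonneg _),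
        ← Real.rpow_natCast, ← Real.rpow_mul hz.le]
    rw [h1, Real.rpow_add hz, Real.rpow_add hz, Real.rpow_add hz, Real.rpow_natCast,
      Real.rpow_natCast, Real.rpow_mul hz.le, Real.rpow_natCast]
    ring
  · rw [indicator_of_notMem hE, indicator_of_notMem (by exact hE)]
    simp

/-- Patching the blow-up charts with the two wedges above the slope. -/
theorem HasGauge.of_blow_of_wedge {w : ℝ × ℝ → ENNReal} {Q p : ℕ} (hQ : 0 < Q) (hp : 0 < p)
    {M : ℝ} (hblow : ∀ u₀, HasGauge (blowWeight w Q p u₀))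
    (hwedge : ∀ ε : ℝ, (ε = 1 ∨ ε = -1) → ∃ φ, IsGauge φ ∧ ∃ c₀ > (0 : ℝ), ∀ c, 0 < c → c < c₀ →
      Comparable (fun r => ∫⁻ q in wedge (fun s => M * s ^ ((p : ℝ) / Q)) ε c r, w q) φ) :
    HasGauge w := by
  set θ : ℝ := (p : ℝ) / Q with hθ
  have hθ0 : 0 < θ := by positivity
  choose φ hφ c₁ hc₁ hφc using fun u₀ => comparable_blowRegion hQ (hblow u₀)
  let sgn : Bool → ℝ := fun b => if b then 1 else -1
  have hsgn : ∀ b, sgn b = 1 ∨ sgn b = -1 := by intro b; cases b <;> simp [sgn]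
  choose ψ hψ c₀ hc₀ hψc using fun b => hwedge (sgn b) (hsgn b)
  obtain ⟨t, -, ht⟩ := (isCompact_Icc (a := -M) (b := M)).elim_nhds_subcover
    (fun u => Metric.ball u (c₁ u / 2)) fun u _ => Metric.ball_mem_nhds u (half_pos (hc₁ u))
  let K : Finset (ℝ ⊕ Bool) := t.disjSum Finset.univ
  let Φ : ℝ ⊕ Bool → ℝ → ENNReal := Sum.elim φ ψ
  obtain ⟨χ, hχ, hχc⟩ := exists_gauge_sum K (φ := Φ) (by
    rintro (u | b) -
    · exact hφ u
    · exact hψ b)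
  refine ⟨χ, hχ, min (c₀ true) (c₀ false), lt_min (hc₀ _) (hc₀ _), fun c h0 h1 => ?_⟩
  have hcc : ∀ b, c < c₀ b := by
    intro b
    cases b
    · exact h1.trans_le (min_le_right _ _)
    · exact h1.trans_le (min_le_left _ _)
  let A : ℝ ⊕ Bool → ℝ → Set (ℝ × ℝ) := Sum.elim
    (fun u r => blowRegion θ u (c₁ u / 2) r) (fun b r => wedge (fun s => M * s ^ θ) (sgn b) c r)
  have hA : ∀ k ∈ K, Comparable (fun r => ∫⁻ q in A k r, w q) (Φ k) := by
    rintro (u | b) -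
    · exact hφc u _ (half_pos (hc₁ u)) (half_lt_self (hc₁ u))
    · exact hψc b c h0 (hcc b)
  refine Comparable.trans ?_ ((Comparable.sum_congr hA).trans hχc)
  have hsmall : ∀ u, ∀ᶠ r in 𝓝[>] (0 : ℝ), ∀ s ∈ Ioo 0 r, (|u| + c₁ u / 2) * s ^ θ < c := by
    intro u
    have h2 := ((tendsto_rpow_nhdsGT_zero_real hθ0).const_mul
      (|u| + c₁ u / 2)).eventually_lt_const (u := c) (by simpa using h0)
    obtain ⟨η, hη, hlt⟩ := mem_nhdsGT_iff_exists_Ioo_subset.1 h2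
    filter_upwards [eventually_lt_nhdsGT_zero hη] with r hr s hs
    exact hlt ⟨hs.1, hs.2.trans hr⟩
  refine comparable_sum_setLIntegral ?_ ?_
  · rintro (u | b) -
    · filter_upwards [hsmall u] with r hr q hq
      refine ⟨hq.1, abs_lt.1 ?_⟩
      have h2 := hr q.1 hq.1
      have h3 := hq.2
      have h4 := Real.rpow_pos_of_pos hq.1.1 θ
      have h5 : |q.2| ≤ |q.2 - u * q.1 ^ θ| + |u * q.1 ^ θ| := by
        have := abs_add_le (q.2 - u * q.1 ^ θ) (u * q.1 ^ θ)
        rwa [sub_add_cancel] at this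
      rw [abs_mul, abs_of_pos h4] at h5
      linarith
    · have h2 : ∀ᶠ r in 𝓝[>] (0 : ℝ), ∀ s ∈ Ioo 0 r, |M| * s ^ θ < c := by
        have h2 := ((tendsto_rpow_nhdsGT_zero_real hθ0).const_mul |M|).eventually_lt_const
          (u := c) (by simpa using h0)
        obtain ⟨η, hη, hlt⟩ := mem_nhdsGT_iff_exists_Ioo_subset.1 h2
        filter_upwards [eventually_lt_nhdsGT_zero hη] with r hr s hs
        exact hlt ⟨hs.1, hs.2.trans hr⟩
      filter_upwards [h2] with r hr q hq
      refine ⟨hq.1, ?_⟩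
      have h3 := hr q.1 hq.1
      have h4 := Real.rpow_pos_of_pos hq.1.1 θ
      have h5 := neg_abs_le M
      have h6 : -c < M * q.1 ^ θ := by nlinarith
      have h7 := hq.2
      simp only [mem_Ioo] at h7 ⊢
      cases b <;> simp only [sgn] at h7 <;> norm_num at h7 <;> constructor <;> linarith
  · refine Filter.Eventually.of_forall fun r => ?_
    rw [sdiff_eq_empty.2, measure_empty]
    rintro q ⟨hq1, hq2⟩
    have h4 := Real.rpow_pos_of_pos hq1.1 θ
    simp only [mem_iUnion]
    rw [mem_Ioo] at hq2
    rcases lt_or_ge (M * q.1 ^ θ) q.2 with h5 | h5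
    · refine ⟨.inr true, by simp [K], hq1, ?_⟩
      simp only [sgn, mem_Ioo]
      norm_num
      exact ⟨h5, hq2.2⟩
    rcases lt_or_ge (M * q.1 ^ θ) (-q.2) with h6 | h6
    · refine ⟨.inr false, by simp [K], hq1, ?_⟩
      simp only [sgn, mem_Ioo]
      norm_num
      exact ⟨h6, by linarith⟩
    have h7 : q.2 / q.1 ^ θ ∈ Icc (-M) M := by
      constructor
      · rw [le_div_iff₀ h4]; linarith
      · rw [div_le_iff₀ h4]; exact h5
    have h8 := ht h7
    simp only [mem_iUnion] at h8
    obtain ⟨u, hu, h9⟩ := h8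
    refine ⟨.inl u, by simp [K, hu], hq1, ?_⟩
    rw [Metric.mem_ball, Real.dist_eq] at h9
    have h10 : q.2 - u * q.1 ^ θ = (q.2 / q.1 ^ θ - u) * q.1 ^ θ := by field_simp
    rw [h10, abs_mul, abs_of_pos h4]
    exact mul_lt_mul_of_pos_right h9 h4

theorem Separated.comp_shear {ι : Type*} {F : ι → ℝ × ℝ → ℝ} {E : Set (ℝ × ℝ)}
    (h : Separated F E) {φ : ℝ → ℝ} (hφ : AnalyticAt ℝ φ 0) (hφ0 : φ 0 = 0) :
    Separated (fun i (p : ℝ × ℝ) => F i (p.1, p.2 + φ p.1))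
      ((fun p : ℝ × ℝ => (p.1, p.2 + φ p.1)) ⁻¹' E) := by
  refine h.comap ?_ (by simp [hφ0]) (Filter.Eventually.of_forall fun p hp => hp)
    (Filter.Eventually.of_forall fun p _ hp => hp)
  have := (analyticAt_shear (y := 0) hφ).eventually_analyticAt
  exact this.mono fun p hp => hp.continuousAt

/-- The local theorem: the integrals of `χ_E s ^ α ∏ |F i| ^ γ i` over the boxes
`(0, r) × (-c, c)` are of the order of a gauge. -/
theorem hasGauge_locWeight {ι : Type*} [Fintype ι] (γ : ι → ℝ) (D : ℕ) :
    ∀ {F : ι → ℝ × ℝ → ℝ} {α : ℝ} {E : Set (ℝ × ℝ)} {d : ι → ℕ},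
      (∀ i, RegularOrder (F i) (d i)) → Separated F E → ∑ i, d i = D →
      HasGauge (locWeight F γ α E) := by
  induction D using Nat.strong_induction_on with
  | _ D ih =>
  intro F α E d hF hsep hD
  by_cases hd : ∀ i, d i = 0
  · refine hasGauge_of_normal_crossings (U := F) (d := d) γ α hsep
      (fun i => (hF i).analytic.continuousAt) (fun i => ?_) (fun i => by simp [hd i])
    obtain ⟨q, -, hq0, hq⟩ := (hF i).order
    have := hq.self_of_nhds
    rw [hd i, pow_zero, one_mul] at this
    rw [← Prod.zero_eq_mk] at this
    rwa [this]
  push Not at hd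
  obtain ⟨i₁, hi₁⟩ := hd
  obtain ⟨m, hm⟩ := Nat.exists_eq_succ_of_ne_zero hi₁
  have hm : d i₁ = m + 1 := hm
  obtain ⟨φ, hφ, hφ0, hkill⟩ := RegularOrder.exists_shear (hm ▸ hF i₁)
  refine HasGauge.of_shear hφ hφ0 ?_
  let F' : ι → ℝ × ℝ → ℝ := fun i p => F i (p.1, p.2 + φ p.1)
  let E' : Set (ℝ × ℝ) := (fun p : ℝ × ℝ => (p.1, p.2 + φ p.1)) ⁻¹' E
  change HasGauge (locWeight F' γ α E')
  have hF' : ∀ i, RegularOrder (F' i) (d i) := fun i => (hF i).comp_shear hφ hφ0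
  have hsep' : Separated F' E' := hsep.comp_shear hφ hφ0
  choose c U hT using fun i => (hF' i).analytic.exists_taylorForm (d i)
  have hreg := fun i => (hT i).regular (hF' i)
  by_cases hall : ∀ i, ∀ j < d i, ∀ᶠ s in 𝓝 (0 : ℝ), c i j s = 0
  · refine hasGauge_of_normal_crossings (U := U) (d := d) γ α hsep'
      (fun i => (hT i).rem.continuousAt) (fun i => (hreg i).2) (fun i => ?_)
    have hfst : Filter.Tendsto (fun z : ℝ × ℝ => z.1) (𝓝 0) (𝓝 0) :=
      continuous_fst.tendsto' _ _ rfl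
    have h1 : ∀ᶠ s in 𝓝 (0 : ℝ), ∀ j ∈ Finset.range (d i), c i j s = 0 :=
      (Filter.eventually_all_finset _).2 fun j hj => hall i j (Finset.mem_range.1 hj)
    filter_upwards [(hT i).eq, hfst.eventually h1] with q h2 h3
    rw [h2, Finset.sum_eq_zero fun j hj => by rw [h3 j hj, zero_mul], zero_add]
  simp only [not_forall, exists_prop] at hall
  obtain ⟨p, Q, b, hp, hQ, hb, hcb, hb0, hne⟩ :=
    exists_newton_slope (fun i => (hT i).coeff) (fun i => (hreg i).1) hall
  have hbm : b i₁ m 0 = 0 := hb0 i₁ m (hkill (c i₁) (U i₁) (hm ▸ hT i₁))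
  obtain ⟨M, hM, ε₀, hε₀, hclose⟩ :=
    exists_close_above_slope hT (fun i => (hreg i).2) hQ hb hcb
  have hθ : 0 < (p : ℝ) / Q := by positivity
  refine HasGauge.of_blow_of_wedge (M := M) hQ hp (fun u₀ => ?_) (fun ε hε => ?_)
  · have hlt := sum_rootMultiplicity_lt (a := fun i j => b i j 0) (fun i => (hreg i).2) hm hbm
      hne u₀
    have hblow : ∀ᶠ z in 𝓝 (0 : ℝ × ℝ), ∀ i, F' i (z.1 ^ Q, z.1 ^ p * (u₀ + z.2)) =
        z.1 ^ (p * d i) * strictTransform (d i) (b i) (U i) Q p u₀ z :=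
      Filter.eventually_all.2 fun i => (hT i).comp_blow hQ hp (hcb i) u₀
    have hreg' : ∀ i, RegularOrder (strictTransform (d i) (b i) (U i) Q p u₀)
        ((topPoly (d i) (fun j => b i j 0) (U i 0)).rootMultiplicity u₀) := by
      intro i
      refine RegularOrder.of_eval (analyticAt_strictTransform (hb i) (hT i).rem hQ hp u₀)
        (topPoly_ne_zero _ _ (hreg i).2) (Filter.Eventually.of_forall fun u => ?_)
      rw [eval_topPoly, strictTransform]
      simp only [zero_pow hQ.ne', zero_pow hp.ne', zero_mul, ← Prod.zero_eq_mk]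
      ring
    have hsep'' : Separated (fun i => strictTransform (d i) (b i) (U i) Q p u₀)
        ((fun z : ℝ × ℝ => (z.1 ^ Q, z.1 ^ p * (u₀ + z.2))) ⁻¹' E') := by
      refine hsep'.comap (Filter.Eventually.of_forall fun z =>
        (analyticAt_blow Q p u₀ z).continuousAt) (blow_zero hQ hp u₀)
        (Filter.Eventually.of_forall fun z hz => pow_pos hz Q) ?_
      filter_upwards [hblow] with z hz hz0 hne i
      rw [hz i]
      exact mul_ne_zero (pow_pos hz0 _).ne' (hne i)
    refine HasGauge.congr ((ih _ (hD ▸ hlt) (α := (Q - 1 : ℕ) + p + Q * α +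
      ∑ i, (p * d i : ℕ) * γ i) hreg' hsep'' rfl).const_mul (C := Q) (by exact_mod_cast hQ)) ?_
    filter_upwards [hblow] with z hz hz0
    exact blowWeight_locWeight γ α E' hz0 hz
  · exact exists_gauge_wedge_of_close γ α hsep'
      (continuous_const.mul (Real.continuous_rpow_const hθ.le))
      (by simp [Real.zero_rpow hθ.ne']) (fun s hs => (mul_pos hM (Real.rpow_pos_of_pos hs _)).le)
      hε (fun i => (hreg i).2) hε₀
      hclose (exists_gauge_wedge_rpow hM hθ α _ hε)

/-- An analytic arc that leaves the axis `x = 0` to the right is the graph of an analytic function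
of a root of `x`. -/
theorem exists_graph_of_analytic_arc {X Y : ℝ → ℝ} (hX : AnalyticAt ℝ X 0)
    (hY : AnalyticAt ℝ Y 0) (hX0 : X 0 = 0) (hY0 : Y 0 = 0) :
    ∃ (k : ℕ) (H : ℝ → ℝ), 0 < k ∧ AnalyticAt ℝ H 0 ∧ H 0 = 0 ∧
      ∀ᶠ τ in 𝓝 (0 : ℝ), 0 ≤ τ → ∀ s, 0 < s → X τ = s ^ k → Y τ = H s := by
  by_cases hz : ∀ᶠ τ in 𝓝 (0 : ℝ), X τ = 0
  · refine ⟨1, 0, one_pos, analyticAt_const, rfl, ?_⟩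
    filter_upwards [hz] with τ h1 _ s hs h2
    rw [h1] at h2
    exact absurd h2 (pow_pos hs 1).ne
  obtain ⟨k, e, he, he0, hXe⟩ := hX.exists_eventuallyEq_pow_smul_nonzero_iff.2 hz
  simp only [sub_zero, smul_eq_mul] at hXe
  have hk : 0 < k := by
    by_contra hk
    have := hXe.self_of_nhds
    rw [hX0, Nat.eq_zero_of_not_pos hk, pow_zero, one_mul] at this
    exact he0 this.symm
  have hk' : (k : ℝ) ≠ 0 := by exact_mod_cast hk.ne'
  rcases lt_or_gt_of_ne he0 with hneg | hpos
  · refine ⟨k, 0, hk, analyticAt_const, rfl, ?_⟩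
    filter_upwards [hXe, he.continuousAt.eventually_lt continuousAt_const hneg]
      with τ h1 h2 h3 s hs h4
    rw [h1] at h4
    have h5 := pow_pos hs k
    have h6 : τ ^ k * e τ ≤ 0 := mul_nonpos_of_nonneg_of_nonpos (pow_nonneg h3 k) h2.le
    linarith
  · let ρ : ℝ → ℝ := fun τ => Real.exp (Real.log (e τ) / k)
    have hρ : AnalyticAt ℝ ρ 0 := ((he.log hpos).fun_div analyticAt_const hk').rexp'
    let R : ℝ → ℝ := fun τ => τ * ρ τ
    have hR : AnalyticAt ℝ R 0 := analyticAt_id.fun_mul hρ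
    have hR0 : R 0 = 0 := by simp [R]
    have hR' : deriv R 0 ≠ 0 := by
      have h1 : HasDerivAt R (1 * ρ 0 + 0 * deriv ρ 0) 0 :=
        (hasDerivAt_id (0 : ℝ)).mul hρ.differentiableAt.hasDerivAt
      rw [h1.deriv, one_mul, zero_mul, add_zero]
      exact (Real.exp_pos _).ne'
    let ψ := hR.hasStrictDerivAt.localInverse _ _ _ hR'
    have hψ : AnalyticAt ℝ ψ (R 0) := hR.analyticAt_localInverse hR'
    have hleft : ∀ᶠ τ in 𝓝 (0 : ℝ), ψ (R τ) = τ :=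
      hR.hasStrictDerivAt.eventually_left_inverse hR'
    have hψ0 : ψ 0 = 0 := by
      have := hleft.self_of_nhds
      rwa [hR0] at this
    refine ⟨k, fun s => Y (ψ s), hk, ?_, by simp [hψ0, hY0], ?_⟩
    · rw [hR0] at hψ
      exact AnalyticAt.fun_comp (f := ψ) (g := Y) (by rwa [hψ0]) hψ
    · filter_upwards [hXe, continuousAt_const.eventually_lt he.continuousAt hpos, hleft]
        with τ h1 h2 h3 h4 s hs h5
      have h6 : R τ ^ k = s ^ k := by
        rw [← h5, h1]
        simp only [R, ρ, mul_pow]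
        rw [← Real.exp_nat_mul, mul_div_cancel₀ _ hk', Real.exp_log h2]
      have h7 : R τ = s :=
        (pow_left_inj₀ (mul_nonneg h4 (Real.exp_pos _).le) hs.le hk.ne').1 h6
      rw [← h7, h3]

/-- The point with coordinates `κ x` and `y` in the orthonormal frame `v`, `perp2 v`. -/
def framePt (v : ℝ × ℝ) (κ : ℝ) (q : ℝ × ℝ) : ℝ × ℝ :=
  (κ * q.1 * v.1 + q.2 * v.2, κ * q.1 * v.2 - q.2 * v.1)

theorem dot2_framePt {v : ℝ × ℝ} (hv : v.1 ^ 2 + v.2 ^ 2 = 1) (κ : ℝ) (q : ℝ × ℝ) :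
    dot2 (framePt v κ q) v = κ * q.1 := by
  simp only [dot2, framePt]
  linear_combination κ * q.1 * hv

theorem dot2_framePt_perp {v : ℝ × ℝ} (hv : v.1 ^ 2 + v.2 ^ 2 = 1) (κ : ℝ) (q : ℝ × ℝ) :
    dot2 (framePt v κ q) (perp2 v) = q.2 := by
  simp only [dot2, framePt, perp2]
  linear_combination q.2 * hv

theorem framePt_dot2 {v : ℝ × ℝ} (hv : v.1 ^ 2 + v.2 ^ 2 = 1) {κ : ℝ} (hκ : κ = 1 ∨ κ = -1)
    (p : ℝ × ℝ) : framePt v κ (κ * dot2 p v, dot2 p (perp2 v)) = p := by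
  have hκ2 : κ * κ = 1 := by rcases hκ with rfl | rfl <;> norm_num
  simp only [dot2, framePt, perp2]
  apply Prod.ext
  · simp only
    linear_combination p.1 * hv + (p.1 * v.1 + p.2 * v.2) * v.1 * hκ2
  · simp only
    linear_combination p.2 * hv + (p.1 * v.1 + p.2 * v.2) * v.2 * hκ2

theorem continuous_framePt (v : ℝ × ℝ) (κ : ℝ) : Continuous (framePt v κ) := by
  unfold framePt
  fun_prop

theorem framePt_zero (v : ℝ × ℝ) (κ : ℝ) : framePt v κ 0 = 0 := by
  simp [framePt]

theorem analyticAt_framePt (v : ℝ × ℝ) (κ : ℝ) (q : ℝ × ℝ) : AnalyticAt ℝ (framePt v κ) q :=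
  (((analyticAt_const.fun_mul analyticAt_fst).fun_mul analyticAt_const).fun_add
    (analyticAt_snd.fun_mul analyticAt_const)).prod
  (((analyticAt_const.fun_mul analyticAt_fst).fun_mul analyticAt_const).fun_sub
    (analyticAt_snd.fun_mul analyticAt_const))

/-- A boundary curve is an analytic arc issuing from the origin. -/
theorem IsBoundaryCurve.exists_arc {r₀ : ℝ} {C : Set (ℝ × ℝ)} (hC : IsBoundaryCurve r₀ C) :
    ∃ (N : ℕ) (Γ₁ Γ₂ : ℝ → ℝ), 0 < N ∧ AnalyticAt ℝ Γ₁ 0 ∧ AnalyticAt ℝ Γ₂ 0 ∧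
      Γ₁ 0 = 0 ∧ Γ₂ 0 = 0 ∧ ∀ p ∈ C, ∃ τ, 0 ≤ τ ∧ p = (Γ₁ τ, Γ₂ τ) ∧ τ ^ N ≤ ‖p‖ := by
  obtain ⟨N, h, σ, T, hN, hσ, hT, hh, hh0, -, -, hCeq⟩ := hC
  have hN' : (N : ℝ) ≠ 0 := by exact_mod_cast hN.ne'
  have hσabs : |σ| = 1 := by rcases hσ with rfl | rfl <;> simp
  have h0 : AnalyticAt ℝ h 0 := hh 0 ⟨le_rfl, Real.rpow_nonneg hT.le _⟩
  have h1 : AnalyticAt ℝ (fun τ : ℝ => σ * τ ^ N) 0 :=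
    analyticAt_const.fun_mul (analyticAt_id.fun_pow N)
  have hpow : ∀ t : ℝ, 0 ≤ t → (t ^ (1 / (N : ℝ))) ^ N = t := by
    intro t ht
    rw [← Real.rpow_natCast, ← Real.rpow_mul ht, one_div_mul_cancel hN', Real.rpow_one]
  have hnorm : ∀ t : ℝ, 0 ≤ t → t = ‖σ * t‖ := by
    intro t ht
    rw [Real.norm_eq_abs, abs_mul, hσabs, one_mul, abs_of_nonneg ht]
  rcases hCeq with rfl | rfl
  · refine ⟨N, fun τ => σ * τ ^ N, h, hN, h1, h0, by simp [hN.ne'], hh0, ?_⟩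
    rintro _ ⟨t, ht, rfl⟩
    refine ⟨t ^ (1 / (N : ℝ)), Real.rpow_nonneg ht.1 _, ?_, ?_⟩
    · simp only [hpow t ht.1]
    · rw [hpow t ht.1]
      exact (hnorm t ht.1).le.trans (norm_fst_le (σ * t, h (t ^ (1 / (N : ℝ)))))
  · refine ⟨N, h, fun τ => σ * τ ^ N, hN, h0, h1, hh0, by simp [hN.ne'], ?_⟩
    rintro _ ⟨t, ht, rfl⟩
    refine ⟨t ^ (1 / (N : ℝ)), Real.rpow_nonneg ht.1 _, ?_, ?_⟩
    · simp only [hpow t ht.1]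
    · rw [hpow t ht.1]
      exact (hnorm t ht.1).le.trans (norm_snd_le (h (t ^ (1 / (N : ℝ))), σ * t))

theorem IsBoundaryCurve.zero_mem {r₀ : ℝ} {C : Set (ℝ × ℝ)} (hC : IsBoundaryCurve r₀ C) :
    (0 : ℝ × ℝ) ∈ C := by
  obtain ⟨N, h, σ, T, hN, -, hT, -, hh0, -, -, hCeq⟩ := hC
  have hN' : 1 / (N : ℝ) ≠ 0 := by positivity
  rcases hCeq with rfl | rfl
  · exact ⟨0, ⟨le_rfl, hT.le⟩, by simp only [Real.zero_rpow hN', hh0, mul_zero]; rfl⟩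
  · exact ⟨0, ⟨le_rfl, hT.le⟩, by simp only [Real.zero_rpow hN', hh0, mul_zero]; rfl⟩

/-- In the right half plane of a frame, a boundary curve is the graph of an analytic function of a
root of the first coordinate. -/
theorem IsBoundaryCurve.exists_graph {r₀ : ℝ} {C : Set (ℝ × ℝ)} (hC : IsBoundaryCurve r₀ C)
    {v : ℝ × ℝ} (hv : v.1 ^ 2 + v.2 ^ 2 = 1) {κ : ℝ} (hκ : κ = 1 ∨ κ = -1) :
    ∃ (k : ℕ) (H : ℝ → ℝ), 0 < k ∧ AnalyticAt ℝ H 0 ∧ H 0 = 0 ∧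
      ∀ᶠ q in 𝓝 (0 : ℝ × ℝ), ∀ s, 0 < s → q.1 = s ^ k → framePt v κ q ∈ C → q.2 = H s := by
  obtain ⟨N, Γ₁, Γ₂, hN, h1, h2, h10, h20, hΓ⟩ := hC.exists_arc
  have hκ2 : κ * κ = 1 := by rcases hκ with rfl | rfl <;> norm_num
  obtain ⟨k, H, hk, hH, hH0, hgraph⟩ := exists_graph_of_analytic_arc
    (X := fun τ => κ * (Γ₁ τ * v.1 + Γ₂ τ * v.2)) (Y := fun τ => Γ₁ τ * v.2 + Γ₂ τ * -v.1)
    (analyticAt_const.fun_mul ((h1.fun_mul analyticAt_const).fun_add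
      (h2.fun_mul analyticAt_const)))
    ((h1.fun_mul analyticAt_const).fun_add (h2.fun_mul analyticAt_const))
    (by simp [h10, h20]) (by simp [h10, h20])
  refine ⟨k, H, hk, hH, hH0, ?_⟩
  obtain ⟨η, hη, hball⟩ := Metric.eventually_nhds_iff_ball.1 hgraph
  have hsmall : ∀ᶠ q in 𝓝 (0 : ℝ × ℝ), ‖framePt v κ q‖ < η ^ N := by
    have := (continuous_framePt v κ).norm.tendsto 0
    rw [framePt_zero, norm_zero] at this
    exact this.eventually_lt_const (pow_pos hη N)
  filter_upwards [hsmall] with q hq s hs hqs hqC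
  obtain ⟨τ, hτ, hτq, hτN⟩ := hΓ _ hqC
  have hτη : τ < η := lt_of_pow_lt_pow_left₀ N hη.le (hτN.trans_lt hq)
  have h3 := hball τ (by
    rw [mem_ball_zero_iff, Real.norm_eq_abs, abs_of_nonneg hτ]
    exact hτη) hτ s hs
  have h4 := dot2_framePt hv κ q
  have h5 := dot2_framePt_perp hv κ q
  rw [hτq] at h4 h5
  simp only [dot2, perp2] at h4 h5
  rw [← h3 (by rw [h4, ← mul_assoc, hκ2, one_mul, hqs]), ← h5]

theorem zero_mem_disk2 {r : ℝ} (hr : 0 < r) : (0 : ℝ × ℝ) ∈ disk2 r := by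
  change (0 : ℝ) ^ 2 + (0 : ℝ) ^ 2 < r ^ 2
  have := pow_pos hr 2
  simpa using this

/-- A connected set that misses the frontier of an open set lies inside or outside of it. -/
theorem IsPreconnected.subset_or_disjoint_of_frontier {X : Type*} [TopologicalSpace X]
    {S u : Set X} (hS : IsPreconnected S) (hu : IsOpen u) (h : Disjoint S (frontier u)) :
    S ⊆ u ∨ Disjoint S u := by
  by_contra hcon
  rw [not_or, not_disjoint_iff] at hcon
  obtain ⟨hnot, x, hxS, hxu⟩ := hcon
  obtain ⟨y, hyS, hyu⟩ := not_subset.1 hnot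
  have hmem : ∀ z ∈ S, z ∉ u → z ∉ closure u := by
    intro z hz hzu hzc
    refine disjoint_left.1 h hz ?_
    rw [hu.frontier_eq]
    exact ⟨hzc, hzu⟩
  obtain ⟨z, -, hz1, hz2⟩ := hS u (closure u)ᶜ hu isClosed_closure.isOpen_compl
    (fun z hz => (em (z ∈ u)).imp id (hmem z hz)) ⟨x, hxS, hxu⟩ ⟨y, hyS, hmem y hyS hyu⟩
  exact hz2 (subset_closure hz1)

/-- What is used of an admissible domain. -/
theorem IsStdDomain.exists_curves {E : Set (ℝ × ℝ)} (hE : IsStdDomain E) :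
    IsOpen E ∧ (0 : ℝ × ℝ) ∈ closure E ∧ ∃ r₀ > (0 : ℝ), ∃ (m : ℕ) (Cs : Fin m × Fin 2 → Set (ℝ × ℝ)),
      (∀ l, IsBoundaryCurve r₀ (Cs l)) ∧ ∀ S ⊆ disk2 r₀, IsPreconnected S →
        (∀ l, Disjoint S (Cs l)) → S ⊆ E ∨ Disjoint S E := by
  obtain ⟨r₀, hr₀, rfl | ⟨m, Es, Cs, hm, rfl, -, hCs, hEs, -⟩⟩ := hE
  · refine ⟨?_, subset_closure ?_, r₀, hr₀, 0, fun l => l.1.elim0, fun l => l.1.elim0,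
      fun S hS _ _ => .inl hS⟩
    · exact isOpen_lt (by fun_prop) continuous_const
    · exact zero_mem_disk2 hr₀
  · refine ⟨isOpen_iUnion fun i => (hEs i).1, ?_, r₀, hr₀, m, fun l => Cs l.1 l.2,
      fun l => hCs l.1 l.2, fun S hS hSc hSC => ?_⟩
    · obtain ⟨-, -, -, A, -, -, hfr⟩ := hEs ⟨0, hm⟩
      have h1 : (0 : ℝ × ℝ) ∈ frontier (Es ⟨0, hm⟩) := by
        rw [hfr]
        exact .inl (.inl (hCs _ _).zero_mem)
      exact closure_mono (subset_iUnion Es ⟨0, hm⟩) (frontier_subset_closure h1)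
    · have hdich : ∀ i, S ⊆ Es i ∨ Disjoint S (Es i) := by
        intro i
        refine hSc.subset_or_disjoint_of_frontier (hEs i).1 (disjoint_left.2 fun z hzS hz => ?_)
        obtain ⟨-, -, -, A, hA, -, hfr⟩ := hEs i
        rw [hfr] at hz
        rcases hz with (hz | hz) | hz
        · exact disjoint_left.1 (hSC (i, 0)) hzS hz
        · exact disjoint_left.1 (hSC (i, 1)) hzS hz
        · have h1 : z.1 ^ 2 + z.2 ^ 2 < r₀ ^ 2 := hS hzS
          have h2 : z.1 ^ 2 + z.2 ^ 2 = r₀ ^ 2 := hA hz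
          exact h1.ne h2
      by_cases h : ∃ i, S ⊆ Es i
      · obtain ⟨i, hi⟩ := h
        exact .inl (hi.trans (subset_iUnion Es i))
      · refine .inr (disjoint_iUnion_right.2 fun i => (hdich i).resolve_left fun hi => h ⟨i, hi⟩)

theorem locWeight_sumElim {ι L : Type*} [Fintype ι] [Fintype L] (F : ι → ℝ × ℝ → ℝ)
    (G : L → ℝ × ℝ → ℝ) (γ : ι → ℝ) (α : ℝ) (E : Set (ℝ × ℝ)) :
    locWeight (Sum.elim F G) (Sum.elim γ 0) α E = locWeight F γ α E := by
  simp [locWeight, Fintype.prod_sum_type]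

/-- The local theorem on one side of the line orthogonal to `v`. -/
theorem StandardForm.hasGauge {n : ℕ} {f : Fin n → ℝ × ℝ → ℝ} {γ : Fin n → ℝ}
    {E : Set (ℝ × ℝ)} (hsf : StandardForm n f γ E) {v : ℝ × ℝ} (hv : v.1 ^ 2 + v.2 ^ 2 = 1)
    {κ : ℝ} (hκ : κ = 1 ∨ κ = -1) :
    HasGauge fun q => ENNReal.ofReal (stdFun n f γ E (framePt v κ q)) := by
  obtain ⟨U₀, hU₀, hfU⟩ := hsf.analytic
  have hfa : ∀ i, AnalyticAt ℝ (fun q => f i (framePt v κ q)) 0 := fun i =>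
    AnalyticAt.fun_comp (f := framePt v κ) (g := f i)
      (by rw [framePt_zero]; exact hfU i 0 (mem_of_mem_nhds hU₀)) (analyticAt_framePt v κ 0)
  have hfne : ∀ i, ¬ ∀ᶠ q in 𝓝 (0 : ℝ × ℝ), f i (framePt v κ q) = 0 := by
    intro i h
    refine hsf.nontriv i ?_
    have ht : Filter.Tendsto (fun p : ℝ × ℝ => (κ * dot2 p v, dot2 p (perp2 v))) (𝓝 0) (𝓝 0) := by
      have hc : Continuous fun p : ℝ × ℝ => (κ * dot2 p v, dot2 p (perp2 v)) := by
        unfold dot2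
        fun_prop
      exact hc.tendsto' _ _ (by simp [dot2])
    filter_upwards [ht.eventually h] with p hp
    rwa [framePt_dot2 hv hκ] at hp
  choose a d G hG hfG using fun i => (hfa i).exists_eq_fst_pow_mul (hfne i)
  obtain ⟨-, -, r₀, hr₀, m, Cs, hCs, hdich⟩ := hsf.domain.exists_curves
  choose k H hk hH hH0 hgraph using fun l => (hCs l).exists_graph hv hκ
  set K : ℕ := ∏ l, k l with hKdef
  have hK : 0 < K := Finset.prod_pos fun l _ => hk l
  have hdvd : ∀ l, ∃ e, 0 < e ∧ e * k l = K := by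
    intro l
    obtain ⟨e, he⟩ := Finset.dvd_prod_of_mem k (Finset.mem_univ l)
    refine ⟨e, Nat.pos_of_ne_zero fun h0 => ?_, by rw [hKdef, he, mul_comm]⟩
    rw [h0, mul_zero] at he
    exact hK.ne' he
  choose e he heK using hdvd
  refine HasGauge.of_pow hK ?_
  let Φ : ℝ × ℝ → ℝ × ℝ := fun z => (z.1 ^ K, z.1 ^ 0 * (0 + z.2))
  have hΦa : ∀ z, AnalyticAt ℝ Φ z := fun z => analyticAt_blow K 0 0 z
  have hΦ0 : Φ 0 = 0 := by simp [Φ, hK.ne']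
  have hΦt : Filter.Tendsto Φ (𝓝 0) (𝓝 0) := by
    have := (hΦa 0).continuousAt.tendsto
    rwa [hΦ0] at this
  let F : Fin n ⊕ (Fin m × Fin 2) → ℝ × ℝ → ℝ :=
    Sum.elim (fun i z => G i (Φ z)) fun l z => z.2 - H l (z.1 ^ e l)
  have hreg : ∀ x, RegularOrder (F x) (Sum.elim d (fun _ => 1) x) := by
    rintro (i | l)
    · obtain ⟨q, hq, hq0, hGq⟩ := (hG i).order
      refine ⟨AnalyticAt.fun_comp (f := Φ) (g := G i) (by rw [hΦ0]; exact (hG i).analytic)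
        (hΦa 0), q, hq, hq0, ?_⟩
      simpa [F, Φ, hK.ne'] using hGq
    · refine ⟨analyticAt_snd.fun_sub (AnalyticAt.fun_comp (f := fun z : ℝ × ℝ => z.1 ^ e l)
        (g := H l) (by simpa [(he l).ne'] using hH l) (analyticAt_fst.fun_pow _)),
        fun _ => 1, continuousAt_const, one_ne_zero, ?_⟩
      simp [F, (he l).ne', hH0]
  have hsep : Separated F (Φ ⁻¹' (framePt v κ ⁻¹' E)) := by
    have hcurve : ∀ᶠ z in 𝓝 (0 : ℝ × ℝ), ∀ l, 0 < z.1 → framePt v κ (Φ z) ∈ Cs l →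
        F (.inr l) z = 0 := by
      refine Filter.eventually_all.2 fun l => ?_
      filter_upwards [hΦt.eventually (hgraph l)] with z hz hz0 hzC
      have := hz (z.1 ^ e l) (pow_pos hz0 _) (by simp only [Φ]; rw [← pow_mul, heK]) hzC
      simp only [Φ, pow_zero, one_mul, zero_add] at this
      simp only [F, Sum.elim_inr, ← this, sub_self]
    have hdisk : ∀ᶠ z in 𝓝 (0 : ℝ × ℝ), framePt v κ (Φ z) ∈ disk2 r₀ := by
      have hopen : IsOpen (disk2 r₀) := isOpen_lt (by fun_prop) continuous_const
      have ht := ((continuous_framePt v κ).tendsto' 0 0 (framePt_zero v κ)).comp hΦt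
      exact ht.eventually (hopen.mem_nhds (zero_mem_disk2 hr₀))
    obtain ⟨η, hη, hball⟩ := Metric.eventually_nhds_iff_ball.1 (hcurve.and hdisk)
    refine ⟨η, hη, fun S hS hSc hSF => ?_⟩
    have hk := fun z (hz : z ∈ S) => hball z (mem_ball_zero_prod
      (by rw [abs_of_pos (hS hz).1.1]; exact (hS hz).1.2) (abs_lt.2 (hS hz).2))
    have himg := hdich ((fun z => framePt v κ (Φ z)) '' S)
      (by rintro _ ⟨z, hz, rfl⟩; exact (hk z hz).2)
      (hSc.image _ ((continuous_framePt v κ).comp (continuous_iff_continuousAt.2 fun z =>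
        (hΦa z).continuousAt)).continuousOn)
      (fun l => disjoint_left.2 (by
        rintro _ ⟨z, hz, rfl⟩ hzC
        exact hSF z hz (.inr l) ((hk z hz).1 l (hS hz).1.1 hzC)))
    rcases himg with h | h
    · exact .inl fun z hz => h ⟨z, hz, rfl⟩
    · exact .inr (disjoint_left.2 fun z hz hzE => disjoint_left.1 h ⟨z, hz, rfl⟩ hzE)
  have hmain := hasGauge_locWeight (Sum.elim γ (0 : Fin m × Fin 2 → ℝ)) _
    (α := ((K - 1 : ℕ) : ℝ) + (0 : ℕ) + K * (0 : ℝ) + ∑ i, ((K * a i : ℕ) : ℝ) * γ i)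
    hreg hsep rfl
  rw [locWeight_sumElim] at hmain
  refine (hmain.const_mul (C := K) (by exact_mod_cast hK)).congr ?_
  filter_upwards [Filter.eventually_all.2 fun i => hΦt.eventually (hfG i)] with z hz hz0
  have hw : (fun q => ENNReal.ofReal (stdFun n f γ E (framePt v κ q))) =
      locWeight (fun i q => f i (framePt v κ q)) γ 0 (framePt v κ ⁻¹' E) := by
    funext q
    rw [stdFun, locWeight]
    by_cases hq : framePt v κ q ∈ E
    · rw [indicator_of_mem hq, indicator_of_mem (by exact hq), Real.rpow_zero, one_mul]
    · rw [indicator_of_notMem hq, indicator_of_notMem (by exact hq), ENNReal.ofReal_zero]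
  rw [hw]
  refine blowWeight_locWeight γ 0 _ hz0 fun i => ?_
  rw [pow_mul]
  exact hz i

theorem setLIntegral_image_framePt {v : ℝ × ℝ} (hv : v.1 ^ 2 + v.2 ^ 2 = 1) {κ : ℝ}
    (hκ : κ = 1 ∨ κ = -1) (w : ℝ × ℝ → ENNReal) (c r : ℝ) :
    ∫⁻ p in framePt v κ '' (Ioo 0 r ×ˢ Ioo (-c) c), w p =
      boxIntegral (fun q => w (framePt v κ q)) c r := by
  let A : ℝ × ℝ →L[ℝ] ℝ × ℝ :=
    (Matrix.toLin (Module.Basis.finTwoProd ℝ) (Module.Basis.finTwoProd ℝ)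
      !![κ * v.1, v.2; κ * v.2, -v.1]).toContinuousLinearMap
  have hA : ∀ q, A q = framePt v κ q := by
    intro q
    simp only [A, Matrix.toLin_finTwoProd_toContinuousLinearMap, framePt]
    simp
    constructor <;> ring
  have hdet : |A.det| = 1 := by
    have : A.det = -κ := by
      simp only [A, ContinuousLinearMap.det, LinearMap.coe_toContinuousLinearMap,
        LinearMap.det_toLin, Matrix.det_fin_two_of]
      linear_combination -κ * hv
    rw [this, abs_neg]
    rcases hκ with rfl | rfl <;> simp
  have hder : ∀ q ∈ Ioo 0 r ×ˢ Ioo (-c) c,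
      HasFDerivWithinAt (framePt v κ) A (Ioo 0 r ×ˢ Ioo (-c) c) q := by
    intro q _
    have h1 : framePt v κ = A := by funext q; exact (hA q).symm
    rw [h1]
    exact A.hasFDerivAt.hasFDerivWithinAt
  have hinj : InjOn (framePt v κ) (Ioo 0 r ×ˢ Ioo (-c) c) := by
    intro p _ q _ hpq
    have hκ0 : κ ≠ 0 := by rcases hκ with rfl | rfl <;> norm_num
    have h1 := dot2_framePt hv κ p
    have h2 := dot2_framePt_perp hv κ p
    rw [hpq, dot2_framePt hv] at h1
    rw [hpq, dot2_framePt_perp hv] at h2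
    exact Prod.ext (mul_left_cancel₀ hκ0 h1.symm) h2.symm
  rw [lintegral_image_eq_lintegral_abs_det_fderiv_mul volume
    (measurableSet_Ioo.prod measurableSet_Ioo) hder hinj]
  simp [hdet, boxIntegral]

theorem volume_dot2_eq_zero {v : ℝ × ℝ} (hv : v.1 ^ 2 + v.2 ^ 2 = 1) :
    volume {p : ℝ × ℝ | dot2 p v = 0} = 0 := by
  let ℓ : ℝ × ℝ →ₗ[ℝ] ℝ := v.1 • LinearMap.fst ℝ ℝ ℝ + v.2 • LinearMap.snd ℝ ℝ ℝ
  have h1 : {p : ℝ × ℝ | dot2 p v = 0} = (LinearMap.ker ℓ : Set (ℝ × ℝ)) := by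
    ext p
    change dot2 p v = 0 ↔ ℓ p = 0
    simp [ℓ, dot2, mul_comm]
  rw [h1]
  refine Measure.addHaar_submodule volume _ fun htop => ?_
  have h2 : v ∈ LinearMap.ker ℓ := htop ▸ Submodule.mem_top
  rw [LinearMap.mem_ker] at h2
  simp [ℓ] at h2
  nlinarith

theorem exists_gauge_strip {n : ℕ} {f : Fin n → ℝ × ℝ → ℝ} {γ : Fin n → ℝ}
    {E : Set (ℝ × ℝ)} (hsf : StandardForm n f γ E) {v : ℝ × ℝ} (hv : v.1 ^ 2 + v.2 ^ 2 = 1) :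
    ∃ χ, IsGauge χ ∧ ∃ c₀ > (0 : ℝ), ∀ c, 0 < c → c < c₀ →
      Comparable (fun r => ∫⁻ p in strip2 v r c, ENNReal.ofReal (stdFun n f γ E p)) χ := by
  let sgn : Bool → ℝ := fun b => if b then 1 else -1
  have hsgn : ∀ b, sgn b = 1 ∨ sgn b = -1 := by intro b; cases b <;> simp [sgn]
  choose φ hφ c₀ hc₀ hφc using fun b => hsf.hasGauge hv (hsgn b)
  obtain ⟨χ, hχ, hχc⟩ := exists_gauge_sum Finset.univ fun b _ => hφ b
  refine ⟨χ, hχ, min (c₀ true) (c₀ false), lt_min (hc₀ _) (hc₀ _), fun c h0 h1 => ?_⟩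
  have hcc : ∀ b, c < c₀ b := by
    intro b
    cases b
    · exact h1.trans_le (min_le_right _ _)
    · exact h1.trans_le (min_le_left _ _)
  refine Comparable.trans ?_ ((Comparable.sum_congr fun b _ => hφc b c h0 (hcc b)).trans hχc)
  have himg : ∀ b, boxIntegral
      (fun q => ENNReal.ofReal (stdFun n f γ E (framePt v (sgn b) q))) c = fun r =>
        ∫⁻ p in framePt v (sgn b) '' (Ioo 0 r ×ˢ Ioo (-c) c), ENNReal.ofReal (stdFun n f γ E p) :=
    fun b => funext fun r => (setLIntegral_image_framePt hv (hsgn b)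
      (fun p => ENNReal.ofReal (stdFun n f γ E p)) c r).symm
  simp only [himg]
  refine comparable_sum_setLIntegral ?_ ?_
  · intro b _
    refine Filter.Eventually.of_forall fun r => ?_
    rintro _ ⟨q, ⟨hq1, hq2⟩, rfl⟩
    have habs : |sgn b| = 1 := by rcases hsgn b with h | h <;> simp [h]
    refine ⟨?_, ?_⟩
    · rw [dot2_framePt hv, abs_mul, habs, one_mul, abs_of_pos hq1.1]
      exact hq1.2
    · rw [dot2_framePt_perp hv]
      exact abs_lt.2 hq2
  · refine Filter.Eventually.of_forall fun r =>
      measure_mono_null ?_ (volume_dot2_eq_zero hv)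
    rintro p ⟨⟨hp1, hp2⟩, hp⟩
    by_contra hne
    have hne : dot2 p v ≠ 0 := hne
    refine hp ?_
    simp only [Finset.mem_univ, iUnion_true, mem_iUnion]
    rw [abs_lt] at hp1
    rcases lt_or_gt_of_ne hne with h | h
    · refine ⟨false, _, ⟨⟨?_, ?_⟩, abs_lt.1 hp2⟩, framePt_dot2 hv (hsgn false) p⟩
      · simp only [sgn]; norm_num; exact h
      · simp only [sgn]; norm_num; linarith
    · refine ⟨true, _, ⟨⟨?_, ?_⟩, abs_lt.1 hp2⟩, framePt_dot2 hv (hsgn true) p⟩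
      · simp only [sgn]; norm_num; exact h
      · simp only [sgn]; norm_num; linarith

theorem isOpen_strip2 (v : ℝ × ℝ) (r c : ℝ) : IsOpen (strip2 v r c) := by
  have h1 : IsOpen {p : ℝ × ℝ | |dot2 p v| < r} :=
    isOpen_lt (by unfold dot2; fun_prop) continuous_const
  have h2 : IsOpen {p : ℝ × ℝ | |dot2 p (perp2 v)| < c} :=
    isOpen_lt (by unfold dot2; fun_prop) continuous_const
  exact h1.inter h2

theorem strip2_mono {v : ℝ × ℝ} {r r' : ℝ} (h : r ≤ r') (c : ℝ) :
    strip2 v r c ⊆ strip2 v r' c := fun _ hp => ⟨hp.1.trans_le h, hp.2⟩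

theorem strip2_subset_ball {v : ℝ × ℝ} (hv : v.1 ^ 2 + v.2 ^ 2 = 1) (c : ℝ) :
    strip2 v c c ⊆ Metric.ball 0 (2 * c) := by
  rintro p ⟨h1, h2⟩
  have hp := framePt_dot2 hv (.inl rfl) p
  have hv1 : |v.1| ≤ 1 := abs_le_one_iff_mul_self_le_one.2 (by nlinarith [sq_nonneg v.2])
  have hv2 : |v.2| ≤ 1 := abs_le_one_iff_mul_self_le_one.2 (by nlinarith [sq_nonneg v.1])
  have key : ∀ a b : ℝ, |a| ≤ 1 → |b| ≤ 1 →
      |dot2 p v| * |a| + |dot2 p (perp2 v)| * |b| < 2 * c := by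
    intro a b ha hb
    have h3 := mul_le_of_le_one_right (abs_nonneg (dot2 p v)) ha
    have h4 := mul_le_of_le_one_right (abs_nonneg (dot2 p (perp2 v))) hb
    linarith
  refine mem_ball_zero_prod ?_ ?_
  · rw [← hp]
    simp only [framePt, one_mul]
    refine (abs_add_le _ _).trans_lt ?_
    rw [abs_mul, abs_mul]
    exact key _ _ hv1 hv2
  · rw [← hp]
    simp only [framePt, one_mul]
    refine (abs_sub _ _).trans_lt ?_
    rw [abs_mul, abs_mul]
    exact key _ _ hv2 hv1

theorem stdFun_nonneg {n : ℕ} (f : Fin n → ℝ × ℝ → ℝ) (γ : Fin n → ℝ) (E : Set (ℝ × ℝ))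
    (p : ℝ × ℝ) : 0 ≤ stdFun n f γ E p :=
  indicator_nonneg (fun _ _ => Finset.prod_nonneg fun _ _ =>
    Real.rpow_nonneg (abs_nonneg _) _) p

/-- Every neighborhood of the origin contains a nonempty open set on which the function is
positive. -/
theorem StandardForm.exists_open_pos {n : ℕ} {f : Fin n → ℝ × ℝ → ℝ} {γ : Fin n → ℝ}
    {E : Set (ℝ × ℝ)} (hsf : StandardForm n f γ E) {W : Set (ℝ × ℝ)} (hW : W ∈ 𝓝 (0 : ℝ × ℝ)) :
    ∃ V ⊆ W, IsOpen V ∧ V.Nonempty ∧ ∀ p ∈ V, 0 < stdFun n f γ E p := by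
  classical
  obtain ⟨U, hU, hfU⟩ := hsf.analytic
  obtain ⟨hEo, hE0, -⟩ := hsf.domain.exists_curves
  obtain ⟨ε, hε, hball⟩ := Metric.mem_nhds_iff.1 (Filter.inter_mem hU hW)
  have hind : ∀ s : Finset (Fin n), ∃ V ⊆ Metric.ball (0 : ℝ × ℝ) ε ∩ E, IsOpen V ∧ V.Nonempty ∧
      ∀ p ∈ V, ∀ i ∈ s, f i p ≠ 0 := by
    intro s
    induction s using Finset.induction_on with
    | empty =>
      refine ⟨Metric.ball 0 ε ∩ E, subset_rfl, Metric.isOpen_ball.inter hEo, ?_, by simp⟩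
      exact mem_closure_iff.1 hE0 _ Metric.isOpen_ball (Metric.mem_ball_self hε)
    | insert i s _ ih =>
      obtain ⟨V, hVsub, hVo, hVne, hV⟩ := ih
      have han : AnalyticOnNhd ℝ (f i) (Metric.ball 0 ε) := fun p hp => hfU i p (hball hp).1
      have hVball : V ⊆ Metric.ball 0 ε := fun p hp => (hVsub hp).1
      refine ⟨V ∩ f i ⁻¹' {0}ᶜ, inter_subset_left.trans hVsub,
        (han.continuousOn.mono hVball).isOpen_inter_preimage hVo isOpen_compl_singleton, ?_, ?_⟩
      · by_contra hempty
        rw [not_nonempty_iff_eq_empty] at hempty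
        have hz : ∀ p ∈ V, f i p = 0 := by
          intro p hp
          by_contra hne
          have : p ∈ V ∩ f i ⁻¹' {0}ᶜ := ⟨hp, hne⟩
          rw [hempty] at this
          exact this
        obtain ⟨p, hp⟩ := hVne
        have hEq := han.eqOn_zero_of_preconnected_of_eventuallyEq_zero
          (convex_ball (0 : ℝ × ℝ) ε).isPreconnected (hVball hp)
          (Filter.eventually_of_mem (hVo.mem_nhds hp) hz)
        exact hsf.nontriv i (Filter.eventually_of_mem (Metric.ball_mem_nhds 0 hε) hEq)
      · rintro p ⟨hp, hpi⟩ j hj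
        rcases Finset.mem_insert.1 hj with rfl | hj
        · exact hpi
        · exact hV p hp j hj
  obtain ⟨V, hVsub, hVo, hVne, hV⟩ := hind Finset.univ
  refine ⟨V, fun p hp => (hball (hVsub hp).1).2, hVo, hVne, fun p hp => ?_⟩
  rw [stdFun, indicator_of_mem (hVsub hp).2]
  exact Finset.prod_pos fun i _ =>
    Real.rpow_pos_of_pos (abs_pos.2 (hV p hp i (Finset.mem_univ i))) _

theorem StandardForm.setLIntegral_strip_pos {n : ℕ} {f : Fin n → ℝ × ℝ → ℝ} {γ : Fin n → ℝ}
    {E : Set (ℝ × ℝ)} (hsf : StandardForm n f γ E) (v : ℝ × ℝ) {r c : ℝ} (hr : 0 < r)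
    (hc : 0 < c) (hinteg : IntegrableOn (stdFun n f γ E) (strip2 v r c)) :
    0 < ∫⁻ p in strip2 v r c, ENNReal.ofReal (stdFun n f γ E p) := by
  have h0 : (0 : ℝ × ℝ) ∈ strip2 v r c := by
    constructor <;> simpa [dot2]
  obtain ⟨V, hVs, hVo, hVne, hVpos⟩ :=
    hsf.exists_open_pos ((isOpen_strip2 v r c).mem_nhds h0)
  rw [pos_iff_ne_zero]
  intro hzero
  rw [lintegral_eq_zero_iff' hinteg.aestronglyMeasurable.aemeasurable.ennreal_ofReal,
    Filter.EventuallyEq, ae_restrict_iff' (isOpen_strip2 v r c).measurableSet] at hzero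
  refine (hVo.measure_pos volume hVne).ne' (measure_mono_null (fun p hp => ?_) hzero)
  intro hcon
  have h1 := hcon (hVs hp)
  simp only [Pi.zero_apply, ENNReal.ofReal_eq_zero] at h1
  exact absurd (hVpos p hp) (not_lt.2 h1)

end

theorem strip_integral_bound {n : ℕ} (f : Fin n → ℝ × ℝ → ℝ) (γ : Fin n → ℝ)
    (E : Set (ℝ × ℝ)) (hsf : StandardForm n f γ E)
    (v : ℝ × ℝ) (hv : v.1 ^ 2 + v.2 ^ 2 = 1) :
    ∃ (δv cv : ℝ) (ev : ℕ), 0 < δv ∧ 0 < cv ∧ (ev = 0 ∨ ev = 1) ∧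
      ∀ c : ℝ, 0 < c → c < cv →
        ∃ a b : ℝ, 0 < a ∧ 0 < b ∧ ∀ r : ℝ, 0 < r → r < c →
          a * r ^ δv * |Real.log r| ^ ev ≤ (∫ p in strip2 v r c, stdFun n f γ E p) ∧
          (∫ p in strip2 v r c, stdFun n f γ E p) ≤ b * r ^ δv * |Real.log r| ^ ev := by
  obtain ⟨χ, hχ, c₀, hc₀, hχc⟩ := exists_gauge_strip hsf hv
  obtain ⟨U, hU, hinteg⟩ := hsf.integ
  obtain ⟨ε, hε, hball⟩ := Metric.mem_nhds_iff.1 hU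
  set cv : ℝ := min (min c₀ (ε / 2)) 1 with hcv
  have hcv0 : 0 < cv := lt_min (lt_min hc₀ (by positivity)) one_pos
  have hcvc₀ : cv ≤ c₀ := (min_le_left _ _).trans (min_le_left _ _)
  have hcvε : cv ≤ ε / 2 := (min_le_left _ _).trans (min_le_right _ _)
  let J : ℝ → ℝ → ENNReal := fun c r => ∫⁻ p in strip2 v r c, ENNReal.ofReal (stdFun n f γ E p)
  have hintc : ∀ c r, c < cv → r ≤ c → IntegrableOn (stdFun n f γ E) (strip2 v r c) := by
    intro c r hc hr
    refine hinteg.mono_set (((strip2_mono hr c).trans (strip2_subset_ball hv c)).trans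
      ((Metric.ball_subset_ball ?_).trans hball))
    linarith
  have hJtop : ∀ c r, c < cv → r ≤ c → J c r ≠ ⊤ := fun c r hc hr =>
    (hintc c r hc hr).lintegral_lt_top.ne
  have hJpos : ∀ c r, c < cv → r ≤ c → 0 < r → 0 < J c r := fun c r hc hr hr0 =>
    hsf.setLIntegral_strip_pos v hr0 (hr0.trans_le hr) (hintc c r hc hr)
  have hJint : ∀ c r, c < cv → r ≤ c → ∫ p in strip2 v r c, stdFun n f γ E p = (J c r).toReal :=
    fun c r hc hr => integral_eq_lintegral_of_nonneg_ae
      (Filter.Eventually.of_forall fun p => stdFun_nonneg f γ E p)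
      (hintc c r hc hr).aestronglyMeasurable
  have hJmono : ∀ c r r', r ≤ r' → J c r ≤ J c r' := fun c r r' h =>
    lintegral_mono_set (strip2_mono h c)
  have hcmp : ∀ c, 0 < c → c < cv → Comparable (J c) χ := fun c h0 h1 =>
    hχc c h0 (h1.trans_le hcvc₀)
  have hhalf : cv / 2 < cv := half_lt_self hcv0
  have hev : ∀ᶠ r in 𝓝[>] (0 : ℝ), 0 < r ∧ r < cv / 2 := by
    filter_upwards [self_mem_nhdsWithin, eventually_lt_nhdsGT_zero (half_pos hcv0)] with r h1 h2
    exact ⟨h1, h2⟩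
  obtain ⟨δ, e, hδ, he, rfl⟩ : ∃ (δ : ℝ) (e : ℕ), 0 < δ ∧ (e = 0 ∨ e = 1) ∧
      χ = fun r => ENNReal.ofReal (r ^ δ * |Real.log r| ^ e) := by
    obtain ⟨⟨C, hC⟩, ⟨D, hD⟩⟩ := hcmp (cv / 2) (half_pos hcv0) hhalf
    rcases hχ with rfl | rfl | h
    · obtain ⟨r, h1, h2, h3⟩ := (hC.and hev).exists
      rw [Pi.zero_apply, mul_zero, nonpos_iff_eq_zero] at h1
      exact absurd h1 (hJpos _ r hhalf h3.le h2).ne'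
    · obtain ⟨r, h1, h2, h3⟩ := (hD.and hev).exists
      rw [Pi.top_apply, top_le_iff] at h1
      exact absurd h1 (ENNReal.mul_ne_top ENNReal.coe_ne_top (hJtop _ r hhalf h3.le))
    · exact h
  refine ⟨δ, cv, e, hδ, hcv0, he, fun c hc0 hc => ?_⟩
  have hc1 : c < 1 := hc.trans_le (min_le_right _ _)
  obtain ⟨⟨C, hC⟩, ⟨D, hD⟩⟩ := hcmp c hc0 hc
  obtain ⟨r₁, hr₁, hr₁'⟩ := mem_nhdsGT_iff_exists_Ioo_subset.1 (hC.and hD)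
  have hr₁ : 0 < r₁ := hr₁
  set r₂ : ℝ := min r₁ c / 2 with hr₂
  have hr₂0 : 0 < r₂ := half_pos (lt_min hr₁ hc0)
  have hr₂r₁ : r₂ < r₁ := (half_lt_self (lt_min hr₁ hc0)).trans_le (min_le_left _ _)
  have hr₂c : r₂ < c := (half_lt_self (lt_min hr₁ hc0)).trans_le (min_le_right _ _)
  have hlog : ∀ x y : ℝ, 0 < x → x ≤ y → y < 1 → |Real.log y| ≤ |Real.log x| := by
    intro x y hx hxy hy
    rw [abs_of_neg (Real.log_neg hx (hxy.trans_lt hy)),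
      abs_of_neg (Real.log_neg (hx.trans_le hxy) hy)]
    exact neg_le_neg (Real.log_le_log hx hxy)
  have hlogpos : ∀ x : ℝ, 0 < x → x < 1 → 0 < |Real.log x| := fun x hx hx1 =>
    abs_pos.2 (Real.log_neg hx hx1).ne
  have hI : ∀ r, 0 < r → r ≤ c → 0 < (J c r).toReal := fun r h0 h1 =>
    ENNReal.toReal_pos (hJpos c r hc h1 h0).ne' (hJtop c r hc h1)
  have hlc := hlogpos c hc0 hc1
  have hlr := hlogpos r₂ hr₂0 (hr₂c.trans hc1)
  have hcδ := Real.rpow_pos_of_pos hc0 δ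
  have hrδ := Real.rpow_pos_of_pos hr₂0 δ
  have hI2 := hI r₂ hr₂0 hr₂c.le
  have hIc := hI c hc0 le_rfl
  refine ⟨min ((D : ℝ) + 1)⁻¹ ((J c r₂).toReal / (c ^ δ * |Real.log r₂| ^ e)),
    max (C : ℝ) ((J c c).toReal / (r₂ ^ δ * |Real.log c| ^ e)),
    lt_min (by positivity) (by positivity), lt_max_of_lt_right (by positivity),
    fun r hr0 hrc => ?_⟩
  rw [hJint c r hc hrc.le, mul_assoc, mul_assoc]
  have hrδ' := Real.rpow_pos_of_pos hr0 δ
  have hlr' := hlogpos r hr0 (hrc.trans hc1)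
  have hm0 : 0 < r ^ δ * |Real.log r| ^ e := by positivity
  rcases lt_or_ge r r₁ with h | h
  · obtain ⟨h1, h2⟩ := hr₁' ⟨hr0, h⟩
    have h1' : (J c r).toReal ≤ C * (r ^ δ * |Real.log r| ^ e) := by
      have := ENNReal.toReal_mono (ENNReal.mul_ne_top ENNReal.coe_ne_top ENNReal.ofReal_ne_top) h1
      rwa [ENNReal.toReal_mul, ENNReal.coe_toReal, ENNReal.toReal_ofReal hm0.le] at this
    have h2' : r ^ δ * |Real.log r| ^ e ≤ D * (J c r).toReal := by
      have := ENNReal.toReal_mono (ENNReal.mul_ne_top ENNReal.coe_ne_top (hJtop c r hc hrc.le)) h2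
      rwa [ENNReal.toReal_mul, ENNReal.coe_toReal, ENNReal.toReal_ofReal hm0.le] at this
    constructor
    · calc _ ≤ ((D : ℝ) + 1)⁻¹ * (r ^ δ * |Real.log r| ^ e) := by
            gcongr
            exact min_le_left _ _
        _ ≤ _ := by
            rw [inv_mul_le_iff₀ (by positivity)]
            linarith [hI r hr0 hrc.le]
    · exact h1'.trans (mul_le_mul_of_nonneg_right (le_max_left _ _) hm0.le)
  · have hr₂r : r₂ ≤ r := (hr₂r₁.trans_le h).le
    have h1 : (J c r₂).toReal ≤ (J c r).toReal :=
      ENNReal.toReal_mono (hJtop c r hc hrc.le) (hJmono c _ _ hr₂r)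
    have h2 : (J c r).toReal ≤ (J c c).toReal :=
      ENNReal.toReal_mono (hJtop c c hc le_rfl) (hJmono c _ _ hrc.le)
    have h3 : r ^ δ * |Real.log r| ^ e ≤ c ^ δ * |Real.log r₂| ^ e := by
      have := hlog r₂ r hr₂0 hr₂r (hrc.trans hc1)
      gcongr
    have h4 : r₂ ^ δ * |Real.log c| ^ e ≤ r ^ δ * |Real.log r| ^ e := by
      have := hlog r c hr0 hrc.le hc1
      gcongr
    constructor
    · calc _ ≤ (J c r₂).toReal / (c ^ δ * |Real.log r₂| ^ e) * (c ^ δ * |Real.log r₂| ^ e) :=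
            mul_le_mul (min_le_right _ _) h3 hm0.le (by positivity)
        _ = (J c r₂).toReal := div_mul_cancel₀ _ (by positivity)
        _ ≤ _ := h1
    · calc (J c r).toReal ≤ (J c c).toReal := h2
        _ = (J c c).toReal / (r₂ ^ δ * |Real.log c| ^ e) * (r₂ ^ δ * |Real.log c| ^ e) :=
            (div_mul_cancel₀ _ (by positivity)).symm
        _ ≤ _ := mul_le_mul (le_max_right _ _) h4 (by positivity)
            (le_max_of_le_left C.coe_nonneg)
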